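/- arXiv:1704.08789 — 3 statements merged into one kernel-verified Lean document; each statement's English description precedes it below -/
import Mathlib

section
/- Let M be a compact metric space with a finite good covering 𝒰 = {U_1,…,U_N}, and fix L > 6. Then there exists a Lipschitz strong deformation retraction Φ : M(p) × [0,1] → M(p) of M(p) onto D(𝒰) × {0} = {(θ, [x,0]) : (θ,x) ∈ D(𝒰)}. -/
open Metric Set

/-- The cone distance on `M × [0,L]` (representatives of the cone
`K(M) = M × [0,L] / (M × {L})`). Two representatives are identified in the cone iff their
cone distance is `0`. -/
noncomputable def coneDist {M : Type*} [PseudoMetricSpace M] (L : ℝ) (c c' : M × ℝ) : ℝ :=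
  Real.sqrt ((L - c.2) ^ 2 + (L - c'.2) ^ 2 -
    2 * (L - c.2) * (L - c'.2) * Real.cos (min Real.pi (dist c.1 c'.1)))

/-- The distance of the mapping cylinder `M(p) ⊆ |𝒩_𝒰| × K(M)`:
`d((θ,c),(θ',c'))² = d(θ,θ')² + d_K(c,c')²`, on representatives `(θ, x, t)`. -/
noncomputable def cylDist {M : Type*} [PseudoMetricSpace M] {N : ℕ} (L : ℝ)
    (z w : (Fin N → ℝ) × M × ℝ) : ℝ :=
  Real.sqrt (dist z.1 w.1 ^ 2 + coneDist L z.2 w.2 ^ 2)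

/-- A subset `V` of a metric space admits a *Lipschitz strong deformation retraction to a
point*. -/
def IsLipSDRToPoint {X : Type*} [MetricSpace X] (V : Set X) : Prop :=
  ∃ (p : V) (F : V × unitInterval → V) (K : NNReal),
    LipschitzWith K F ∧ (∀ x, F (x, 0) = x) ∧ (∀ x, F (x, 1) = p) ∧ (∀ t, F (p, t) = p)

/-- A locally finite open covering is *good*. -/
def IsGoodCovering {X : Type*} [MetricSpace X] {J : Type*} (U : J → Set X) : Prop :=
  (∀ j, IsOpen (U j)) ∧ (⋃ j, U j) = univ ∧ LocallyFinite U ∧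
    (∀ j, IsCompact (closure (U j))) ∧
    ∀ s : Finset J, s.Nonempty → (⋂ j ∈ s, U j).Nonempty → IsLipSDRToPoint (⋂ j ∈ s, U j)

/-- The geometric realization of the nerve of a finite covering, with the sup metric. -/
def NerveSet {M : Type*} [MetricSpace M] {N : ℕ} (U : Fin N → Set M) : Set (Fin N → ℝ) :=
  {θ | (∀ j, θ j ∈ Icc (0:ℝ) 1) ∧ ∑ j, θ j = 1 ∧ (⋂ j ∈ {j | θ j ≠ 0}, U j).Nonempty}

/-- `(θ, x, t)` represents a point of the mapping cylinder
`M(p) = ⋃_σ σ × K(U_σ) ⊆ |𝒩_𝒰| × K(M)`: `θ` lies in the nerve, `t ∈ [0,L]`, and there is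
a simplex `s` of the nerve containing the support of `θ` such that either `t = L` (the
vertex of the cone) or `x ∈ U_s`. -/
def InCyl {M : Type*} [MetricSpace M] {N : ℕ} (U : Fin N → Set M) (L : ℝ)
    (z : (Fin N → ℝ) × M × ℝ) : Prop :=
  z.1 ∈ NerveSet U ∧ z.2.2 ∈ Icc 0 L ∧
    ∃ s : Finset (Fin N), (∀ j, z.1 j ≠ 0 → j ∈ s) ∧ (⋂ j ∈ s, U j).Nonempty ∧
      (z.2.2 = L ∨ z.2.1 ∈ ⋂ j ∈ s, U j)


/-- `(θ, x, t)` represents a point of `D(𝒰) × {0} ⊆ M(p)`: `θ` is in the nerve, `t = 0`,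
and `x ∈ ⋂_{j ∈ supp θ} U_j`. -/
def InDZero {M : Type*} [MetricSpace M] {N : ℕ} (U : Fin N → Set M)
    (z : (Fin N → ℝ) × M × ℝ) : Prop :=
  z.1 ∈ NerveSet U ∧ z.2.2 = 0 ∧ z.2.1 ∈ ⋂ j ∈ {j | z.1 j ≠ 0}, U j


namespace CylAux

variable {M : Type*} [MetricSpace M] {N : ℕ}

/-- A quasi-metric equivalent to `cylDist`. -/
noncomputable def rho (L : ℝ) (z w : (Fin N → ℝ) × M × ℝ) : ℝ :=
  dist z.1 w.1 + |z.2.2 - w.2.2| + min (L - z.2.2) (L - w.2.2) * dist z.2.1 w.2.1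

lemma rho_symm (L : ℝ) (z w : (Fin N → ℝ) × M × ℝ) : rho L z w = rho L w z := by
  unfold rho
  rw [dist_comm z.1, abs_sub_comm, min_comm, dist_comm z.2.1]

lemma rho_self (L : ℝ) (z : (Fin N → ℝ) × M × ℝ) : rho L z z = 0 := by
  simp [rho]

lemma rho_parts {L : ℝ} {z w : (Fin N → ℝ) × M × ℝ} (hz : z.2.2 ≤ L) (hw : w.2.2 ≤ L) :
    0 ≤ rho L z w ∧ dist z.1 w.1 ≤ rho L z w ∧ |z.2.2 - w.2.2| ≤ rho L z w ∧
      min (L - z.2.2) (L - w.2.2) * dist z.2.1 w.2.1 ≤ rho L z w := by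
  have h1 : 0 ≤ dist z.1 w.1 := dist_nonneg
  have h2 := abs_nonneg (z.2.2 - w.2.2)
  have h3 : 0 ≤ min (L - z.2.2) (L - w.2.2) * dist z.2.1 w.2.1 :=
    mul_nonneg (le_min (by linarith) (by linarith)) dist_nonneg
  unfold rho
  refine ⟨?_, ?_, ?_, ?_⟩ <;> linarith

lemma rho_triangle {L D : ℝ} (hD0 : 0 ≤ D) (hD : ∀ x y : M, dist x y ≤ D)
    {a b c : (Fin N → ℝ) × M × ℝ} (ha : a.2.2 ≤ L) (hb : b.2.2 ≤ L) (hc : c.2.2 ≤ L) :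
    rho L a c ≤ (1 + D) * (rho L a b + rho L b c) := by
  obtain ⟨θ, x, t⟩ := a
  obtain ⟨θ', x', t'⟩ := b
  obtain ⟨θ'', x'', t''⟩ := c
  simp only at ha hb hc
  have h1 := dist_triangle θ θ' θ''
  have h2 := abs_sub_le t t' t''
  have h3 := dist_triangle x x' x''
  have p1 : 0 ≤ dist θ θ' := dist_nonneg
  have p2 : 0 ≤ dist θ' θ'' := dist_nonneg
  have p3 : 0 ≤ dist x x' := dist_nonneg
  have p4 : 0 ≤ dist x' x'' := dist_nonneg
  have q1 := abs_nonneg (t - t')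
  have q2 := abs_nonneg (t' - t'')
  have m0 : 0 ≤ min (L - t) (L - t'') := le_min (by linarith) (by linarith)
  have m1 : 0 ≤ min (L - t) (L - t') := le_min (by linarith) (by linarith)
  have m2 : 0 ≤ min (L - t') (L - t'') := le_min (by linarith) (by linarith)
  have k1 : min (L - t) (L - t'') ≤ min (L - t) (L - t') + |t' - t''| := by
    have := neg_abs_le (t' - t'')
    rcases le_total (L - t) (L - t') with h | h
    · rw [min_eq_left h]; linarith [min_le_left (L - t) (L - t'')]
    · rw [min_eq_right h]; linarith [min_le_right (L - t) (L - t''), le_abs_self (t' - t'')]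
  have k2 : min (L - t) (L - t'') ≤ min (L - t') (L - t'') + |t - t'| := by
    have := neg_abs_le (t - t')
    rcases le_total (L - t') (L - t'') with h | h
    · rw [min_eq_left h]; linarith [min_le_left (L - t) (L - t'')]
    · rw [min_eq_right h]; linarith [min_le_right (L - t) (L - t''), le_abs_self (t - t')]
  have key : min (L - t) (L - t'') * dist x x'' ≤
      min (L - t) (L - t') * dist x x' + min (L - t') (L - t'') * dist x' x''
        + D * (|t - t'| + |t' - t''|) := by
    calc _ ≤ min (L - t) (L - t'') * dist x x' + min (L - t) (L - t'') * dist x' x'' := by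
          rw [← mul_add]; exact mul_le_mul_of_nonneg_left h3 m0
      _ ≤ (min (L - t) (L - t') + |t' - t''|) * dist x x'
          + (min (L - t') (L - t'') + |t - t'|) * dist x' x'' := by gcongr
      _ ≤ _ := by
          have := mul_le_mul_of_nonneg_left (hD x x') q2
          have := mul_le_mul_of_nonneg_left (hD x' x'') q1
          nlinarith
  simp only [rho]
  have r1 := mul_nonneg m1 p3
  have r2 := mul_nonneg m2 p4
  have := mul_nonneg hD0 (add_nonneg (add_nonneg p1 p2) (add_nonneg r1 r2))
  nlinarith

lemma cylDist_le {L : ℝ} {z w : (Fin N → ℝ) × M × ℝ} (hz : z.2.2 ≤ L) (hw : w.2.2 ≤ L) :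
    cylDist L z w ≤ 2 * rho L z w := by
  obtain ⟨θ, x, t⟩ := z
  obtain ⟨θ', x', t'⟩ := w
  simp only at hz hw
  have hρ := (rho_parts (z := (θ, x, t)) (w := (θ', x', t')) hz hw).1
  unfold cylDist coneDist
  apply Real.sqrt_le_iff.mpr
  refine ⟨by linarith, ?_⟩
  simp only [rho] at hρ ⊢
  set r := L - t with hr
  set r' := L - t' with hr'
  have hr0 : 0 ≤ r := by linarith
  have hr0' : 0 ≤ r' := by linarith
  set d := dist x x'
  have hd : 0 ≤ d := dist_nonneg
  set α := min Real.pi d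
  have hα0 : 0 ≤ α := le_min Real.pi_pos.le hd
  have hαπ : α ≤ 4 := (min_le_left _ _).trans Real.pi_le_four
  have hαd : α ≤ d := min_le_right _ _
  have hc := Real.one_sub_sq_div_two_le_cos (x := α)
  have e : |t - t'| = |r - r'| := by rw [hr, hr', abs_sub_comm]; congr 1; ring
  rw [e]
  set Δ := |r - r'| with hΔ
  have hΔ0 : 0 ≤ Δ := abs_nonneg _
  have hΔ2 : (r - r') ^ 2 = Δ ^ 2 := (sq_abs _).symm
  set m := min r r' with hm
  have hm0 : 0 ≤ m := le_min hr0 hr0'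
  have hprod : r * r' = m ^ 2 + m * Δ := by
    rcases le_total r r' with h | h
    · rw [hm, hΔ, min_eq_left h, abs_of_nonpos (by linarith)]; ring
    · rw [hm, hΔ, min_eq_right h, abs_of_nonneg (by linarith)]; ring
  have hcone : r ^ 2 + r' ^ 2 - 2 * r * r' * Real.cos α ≤ 4 * (Δ + m * d) ^ 2 := by
    have h1 : 2 * (r * r') * (1 - Real.cos α) ≤ 2 * (r * r') * (α ^ 2 / 2) := by
      apply mul_le_mul_of_nonneg_left (by linarith)
      positivity
    have h2 : r * r' * α ^ 2 ≤ m ^ 2 * d ^ 2 + m * Δ * (4 * d) := by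
      rw [hprod, add_mul]
      have : α ^ 2 ≤ d ^ 2 := by gcongr
      have : α ^ 2 ≤ 4 * d := by nlinarith
      gcongr
    have : 0 ≤ m * Δ * d := by positivity
    nlinarith [sq_nonneg (m * d), sq_nonneg Δ]
  have hdθ : 0 ≤ dist θ θ' := dist_nonneg
  have hmd : 0 ≤ m * d := by positivity
  have hs : (Real.sqrt (r ^ 2 + r' ^ 2 - 2 * r * r' * Real.cos α)) ^ 2 ≤ 4 * (Δ + m * d) ^ 2 := by
    rcases le_total 0 (r ^ 2 + r' ^ 2 - 2 * r * r' * Real.cos α) with h | h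
    · rw [Real.sq_sqrt h]; exact hcone
    · rw [Real.sqrt_eq_zero_of_nonpos h, zero_pow two_ne_zero]
      exact mul_nonneg (by norm_num) (sq_nonneg _)
  have : 0 ≤ dist θ θ' * (Δ + m * d) := by positivity
  nlinarith [sq_nonneg (dist θ θ')]

set_option maxHeartbeats 1600000 in
lemma rho_le {L D : ℝ} (hD0 : 0 ≤ D) (hD : ∀ x y : M, dist x y ≤ D)
    {z w : (Fin N → ℝ) × M × ℝ} (hz : z.2.2 ≤ L) (hw : w.2.2 ≤ L) :
    rho L z w ≤ (6 + D) * cylDist L z w := by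
  obtain ⟨θ, x, t⟩ := z
  obtain ⟨θ', x', t'⟩ := w
  simp only at hz hw
  set c := cylDist L (θ, x, t) (θ', x', t') with hc
  have hc0 : 0 ≤ c := Real.sqrt_nonneg _
  have hcsq : c ^ 2 = dist θ θ' ^ 2 + coneDist L (x, t) (x', t') ^ 2 := by
    exact Real.sq_sqrt (add_nonneg (sq_nonneg _) (sq_nonneg _))
  set k := coneDist L (x, t) (x', t') with hk
  have hk0 : 0 ≤ k := Real.sqrt_nonneg _
  have h1 : dist θ θ' ≤ c := abs_le_of_sq_le_sq' (by nlinarith [sq_nonneg k]) hc0 |>.2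
  have h2 : k ≤ c := abs_le_of_sq_le_sq' (by nlinarith [sq_nonneg (dist θ θ')]) hc0 |>.2
  simp only [rho]
  have hk' : k = Real.sqrt ((L - t) ^ 2 + (L - t') ^ 2 -
    2 * (L - t) * (L - t') * Real.cos (min Real.pi (dist x x'))) := rfl
  have e : |t - t'| = |(L - t) - (L - t')| := by rw [abs_sub_comm]; congr 1; ring
  rw [e]
  set r := L - t with hr
  set r' := L - t' with hr'
  have hr0 : 0 ≤ r := by linarith
  have hr0' : 0 ≤ r' := by linarith
  set d := dist x x' with hd'
  have hd : 0 ≤ d := dist_nonneg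
  set α := min Real.pi d with hα
  have hα0 : 0 ≤ α := le_min Real.pi_pos.le hd
  have hαπ : α ≤ Real.pi := min_le_left _ _
  have hq := Real.cos_le_one_sub_mul_cos_sq (x := α) (by rw [abs_of_nonneg hα0]; exact hαπ)
  set m := min r r' with hm
  have hm0 : 0 ≤ m := le_min hr0 hr0'
  have hprod : m ^ 2 ≤ r * r' := by
    rw [sq]; exact mul_le_mul (min_le_left _ _) (min_le_right _ _) hm0 hr0
  have hπ := Real.pi_pos
  have hπ4 := Real.pi_le_four
  have hβ : 1 / 8 * α ^ 2 ≤ 2 / Real.pi ^ 2 * α ^ 2 := by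
    apply mul_le_mul_of_nonneg_right _ (sq_nonneg _)
    rw [div_le_div_iff₀ (by norm_num) (by positivity)]
    nlinarith
  have hlow : (r - r') ^ 2 + m ^ 2 * α ^ 2 / 4 ≤ r ^ 2 + r' ^ 2 - 2 * r * r' * Real.cos α := by
    have : 2 * (r * r') * (1 / 8 * α ^ 2) ≤ 2 * (r * r') * (1 - Real.cos α) :=
      mul_le_mul_of_nonneg_left (by linarith) (by positivity)
    have : m ^ 2 * α ^ 2 ≤ r * r' * α ^ 2 := by gcongr
    nlinarith
  have hksq : k ^ 2 = r ^ 2 + r' ^ 2 - 2 * r * r' * Real.cos α := by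
    rw [hk', Real.sq_sqrt]
    exact le_trans (by positivity) hlow
  have h3 : |r - r'| ≤ k := by
    apply abs_le_of_sq_le_sq _ hk0
    have : 0 ≤ m ^ 2 * α ^ 2 / 4 := by positivity
    linarith
  have h4 : m * α / 2 ≤ k := by
    apply (abs_le_of_sq_le_sq' _ hk0).2
    nlinarith [sq_nonneg (r - r')]
  have h5 : m * d ≤ (2 + D) * k := by
    rcases le_total d Real.pi with h | h
    · rw [hα, min_eq_right h] at h4
      have := mul_nonneg hD0 hk0
      linarith
    · rw [hα, min_eq_left h] at h4
      have h3π := Real.pi_gt_three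
      have : m ≤ k := by
        have := mul_le_mul_of_nonneg_left h3π.le hm0
        linarith
      have : m * d ≤ k * D := mul_le_mul this (hD x x') hd hk0
      linarith
  have h6 : (2 + D) * k ≤ (2 + D) * c := by gcongr
  have h7 : |r - r'| ≤ c := h3.trans h2
  linarith

/-- Extension of the contraction of `V` to all of `M` and all real times. -/
lemma ext_contr {V : Set M} (hV : IsLipSDRToPoint V) :
    ∃ (p : M) (F : M → ℝ → M) (K : ℝ), 0 ≤ K ∧ p ∈ V ∧ (∀ x, F x 0 = x) ∧ (∀ x, F x 1 = p) ∧
      (∀ x a, x ∈ V ∨ a ≠ 0 → F x a ∈ V) ∧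
      (∀ x ∈ V, ∀ y ∈ V, ∀ a ∈ Icc (0:ℝ) 1, ∀ b ∈ Icc (0:ℝ) 1,
        dist (F x a) (F y b) ≤ K * (dist x y + |a - b|)) := by
  classical
  obtain ⟨p, F, K, hF, h0, h1, -⟩ := hV
  refine ⟨p, fun x a => if h : x ∈ V then F (⟨x, h⟩, projIcc 0 1 zero_le_one a) else
    if a = 0 then x else p, K, K.2, p.2, ?_, ?_, ?_, ?_⟩
  · intro x
    by_cases h : x ∈ V
    · have : projIcc (0:ℝ) 1 zero_le_one 0 = (0 : unitInterval) := projIcc_left zero_le_one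
      simp only [h, dite_true, this, h0]
    · simp [h]
  · intro x
    by_cases h : x ∈ V
    · have : projIcc (0:ℝ) 1 zero_le_one 1 = (1 : unitInterval) := projIcc_right zero_le_one
      simp only [h, dite_true, this, h1]
    · simp [h]
  · intro x a hxa
    by_cases h : x ∈ V
    · simp [h]
    · have : a ≠ 0 := by tauto
      simp [h, this]
  · intro x hx y hy a ha b hb
    simp only [hx, hy, dite_true]
    have := hF.dist_le_mul (⟨x, hx⟩, projIcc 0 1 zero_le_one a) (⟨y, hy⟩, projIcc 0 1 zero_le_one b)
    rw [projIcc_of_mem _ ha, projIcc_of_mem _ hb] at this ⊢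
    refine this.trans ?_
    apply mul_le_mul_of_nonneg_left _ K.2
    rw [Prod.dist_eq]
    simp only [Subtype.dist_eq, Real.dist_eq]
    exact max_le_add_of_nonneg dist_nonneg (abs_nonneg _)

/-- The basic move attached to a simplex. -/
noncomputable def G (σ : Finset (Fin N)) (F : M → ℝ → M) (L : ℝ)
    (z : (Fin N → ℝ) × M × ℝ) (n : ℝ) : (Fin N → ℝ) × M × ℝ :=
  (fun j => (z.1 j - if j ∈ σ then n else 0) / (1 - σ.card * n),
   F z.2.1 (min 1 (2 * min (2 * (2 * σ.card * L * n)) z.2.2 / L)),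
   min z.2.2 (2 * (z.2.2 - 2 * σ.card * L * n)))

lemma min_lip (a b c d : ℝ) : |min a b - min c d| ≤ |a - c| + |b - d| :=
  (abs_min_sub_min_le_max a b c d).trans (max_le_add_of_nonneg (abs_nonneg _) (abs_nonneg _))

lemma quot_lip {c u u' n n' : ℝ} (hc : 0 ≤ c) (hu' : |u'| ≤ 1) (hn : c * n ≤ 1 / 2)
    (hn' : c * n' ≤ 1 / 2) :
    |u / (1 - c * n) - u' / (1 - c * n')| ≤ 2 * |u - u'| + 4 * c * |n - n'| := by
  have e : u / (1 - c * n) - u' / (1 - c * n') =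
      (u - u') * (1 / (1 - c * n)) +
        u' * (c * (n - n')) * (1 / (1 - c * n) * (1 / (1 - c * n'))) := by
    have : 1 - c * n ≠ 0 := by linarith
    have : 1 - c * n' ≠ 0 := by linarith
    field_simp
    ring
  have b : ∀ y, c * y ≤ 1 / 2 → 0 ≤ 1 / (1 - c * y) ∧ 1 / (1 - c * y) ≤ 2 := by
    intro y hy
    have : 0 < 1 - c * y := by linarith
    refine ⟨by positivity, ?_⟩
    rw [div_le_iff₀ this]; linarith
  obtain ⟨b1, b2⟩ := b n hn
  obtain ⟨b3, b4⟩ := b n' hn'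
  rw [e]
  refine (abs_add_le _ _).trans ?_
  rw [abs_mul, abs_mul, abs_mul, abs_mul, abs_mul, abs_of_nonneg hc, abs_of_nonneg b1,
    abs_of_nonneg b3]
  have h1 : |u - u'| * (1 / (1 - c * n)) ≤ |u - u'| * 2 := by gcongr
  have h2 : |u'| * (c * |n - n'|) * (1 / (1 - c * n) * (1 / (1 - c * n'))) ≤
      1 * (c * |n - n'|) * (2 * 2) := by gcongr
  linarith

set_option maxHeartbeats 1600000 in
lemma G_lip {L D K : ℝ} (hL : 0 < L) (hD0 : 0 ≤ D) (hD : ∀ x y : M, dist x y ≤ D)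
    (σ : Finset (Fin N)) {V : Set M} {F : M → ℝ → M} {p : M} (hK : 0 ≤ K)
    (hF1 : ∀ x, F x 1 = p)
    (hF : ∀ x ∈ V, ∀ y ∈ V, ∀ a ∈ Icc (0:ℝ) 1, ∀ b ∈ Icc (0:ℝ) 1,
        dist (F x a) (F y b) ≤ K * (dist x y + |a - b|)) :
    ∃ C : ℝ, 0 ≤ C ∧ ∀ z w : (Fin N → ℝ) × M × ℝ,
      (∀ j, z.1 j ∈ Icc (0:ℝ) 1) → (∀ j, w.1 j ∈ Icc (0:ℝ) 1) →
      z.2.2 ∈ Icc 0 L → w.2.2 ∈ Icc 0 L → (z.2.2 = L ∨ z.2.1 ∈ V) → (w.2.2 = L ∨ w.2.1 ∈ V) →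
      ∀ n n' : ℝ, 0 ≤ n → 0 ≤ n' → 2 * σ.card * L * n ≤ z.2.2 → 2 * σ.card * L * n' ≤ w.2.2 →
      n ≤ 1 → n' ≤ 1 →
      rho L (G σ F L z n) (G σ F L w n') ≤ C * (rho L z w + |n - n'|) := by
  set c : ℝ := (σ.card : ℝ) with hc
  have hc0 : 0 ≤ c := by positivity
  refine ⟨(4 + 4 * c) + (2 + 4 * c * L) + (2 * D + 2 * K + 2 * L * K * (2 / L * (1 + 4 * c * L))),
    by positivity, ?_⟩
  rintro ⟨θ, x, t⟩ ⟨θ', x', t'⟩ hθ hθ' ht ht' hx hx' n n' hn hn' hnt hnt' hn1 hn1'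
  simp only at hθ hθ' ht ht' hx hx' hnt hnt'
  have hρ := rho_parts (L := L) (z := (θ, x, t)) (w := (θ', x', t')) ht.2 ht'.2
  simp only at hρ
  set ρ := rho L (θ, x, t) (θ', x', t') with hρdef
  obtain ⟨hρ0, hρθ, hρt, hρx⟩ := hρ
  set δ := |n - n'| with hδ
  have hδ0 : 0 ≤ δ := abs_nonneg _
  have hcn : c * n ≤ 1 / 2 := by
    have : L * (c * n) ≤ L * (1 / 2) := by nlinarith [ht.2]
    exact le_of_mul_le_mul_left this hL
  have hcn' : c * n' ≤ 1 / 2 := by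
    have : L * (c * n') ≤ L * (1 / 2) := by nlinarith [ht'.2]
    exact le_of_mul_le_mul_left this hL
  have P1 : dist (G σ F L (θ, x, t) n).1 (G σ F L (θ', x', t') n').1 ≤ (4 + 4 * c) * (ρ + δ) := by
    rw [dist_pi_le_iff (by positivity)]
    intro j
    simp only [G, Real.dist_eq]
    have hj : |θ j - θ' j| ≤ ρ := by
      rw [← Real.dist_eq]; exact (dist_le_pi_dist θ θ' j).trans hρθ
    refine (quot_lip hc0 ?_ hcn hcn').trans ?_
    · have := hθ' j
      rw [abs_le]
      split_ifs <;> constructor <;> linarith [this.1, this.2]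
    · have : |(θ j - if j ∈ σ then n else 0) - (θ' j - if j ∈ σ then n' else 0)| ≤ ρ + δ := by
        split_ifs
        · have e : θ j - n - (θ' j - n') = (θ j - θ' j) - (n - n') := by ring
          rw [e]
          exact (abs_sub _ _).trans (add_le_add hj le_rfl)
        · simp only [sub_zero]; linarith
      have : 0 ≤ c * ρ := by positivity
      nlinarith
  set m := 2 * c * L * n with hm
  set m' := 2 * c * L * n' with hm'
  have hm0 : 0 ≤ m := by positivity
  have hm0' : 0 ≤ m' := by positivity
  have hmm : |m - m'| ≤ 2 * c * L * δ := by
    rw [hm, hm', ← mul_sub, abs_mul, abs_of_nonneg (by positivity)]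
  set s := min t (2 * (t - m)) with hs
  set s' := min t' (2 * (t' - m')) with hs'
  have P2 : |s - s'| ≤ (2 + 4 * c * L) * (ρ + δ) := by
    have : |s - s'| ≤ max |t - t'| |2 * (t - m) - 2 * (t' - m')| :=
      abs_min_sub_min_le_max _ _ _ _
    refine this.trans (max_le ?_ ?_)
    · have : 0 ≤ c * L * (ρ + δ) := by positivity
      nlinarith
    · have e : 2 * (t - m) - 2 * (t' - m') = 2 * (t - t') - 2 * (m - m') := by ring
      rw [e]
      refine (abs_sub _ _).trans ?_
      rw [abs_mul, abs_mul, abs_two]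
      have : 0 ≤ c * L * ρ := by positivity
      nlinarith
  set a := min 1 (2 * min (2 * m) t / L) with ha
  set a' := min 1 (2 * min (2 * m') t' / L) with ha'
  have haI : a ∈ Icc (0:ℝ) 1 := by
    refine ⟨le_min zero_le_one ?_, min_le_left _ _⟩
    have : 0 ≤ min (2 * m) t := le_min (by linarith) ht.1
    positivity
  have haI' : a' ∈ Icc (0:ℝ) 1 := by
    refine ⟨le_min zero_le_one ?_, min_le_left _ _⟩
    have : 0 ≤ min (2 * m') t' := le_min (by linarith) ht'.1
    positivity
  have haa : |a - a'| ≤ 2 / L * (1 + 4 * c * L) * (ρ + δ) := by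
    have h1 := min_lip 1 (2 * min (2 * m) t / L) 1 (2 * min (2 * m') t' / L)
    rw [sub_self, abs_zero, zero_add] at h1
    have h2 := min_lip (2 * m) t (2 * m') t'
    rw [← mul_sub, abs_mul, abs_two] at h2
    have e : 2 * min (2 * m) t / L - 2 * min (2 * m') t' / L =
      2 / L * (min (2 * m) t - min (2 * m') t') := by ring
    rw [e, abs_mul, abs_of_nonneg (show 0 ≤ 2 / L by positivity)] at h1
    refine h1.trans ?_
    rw [mul_assoc]
    apply mul_le_mul_of_nonneg_left _ (by positivity)
    have : 0 ≤ c * L * ρ := by positivity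
    nlinarith
  have hsL : s ≤ L := (min_le_left _ _).trans ht.2
  have hsL' : s' ≤ L := (min_le_left _ _).trans ht'.2
  have hs0 : 0 ≤ s := le_min ht.1 (by linarith)
  have hs0' : 0 ≤ s' := le_min ht'.1 (by linarith)
  set E := min (L - t) (L - t') with hE
  have hE0 : 0 ≤ E := le_min (by linarith [ht.2]) (by linarith [ht'.2])
  have hEL : E ≤ L := (min_le_left _ _).trans (by linarith [ht.1])
  have hT0 := abs_nonneg (t - t')
  have hEt : L - t ≤ E + |t - t'| := by
    have := neg_abs_le (t - t')
    rw [← sub_le_iff_le_add]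
    exact le_min (by linarith) (by linarith)
  have hEt' : L - t' ≤ E + |t - t'| := by
    have := le_abs_self (t - t')
    rw [← sub_le_iff_le_add]
    exact le_min (by linarith) (by linarith)
  have dich : (a = 1 ∧ a' = 1) ∨ min (L - s) (L - s') ≤ 2 * (E + |t - t'|) := by
    have aux : ∀ t₁ m₁ : ℝ, min 1 (2 * min (2 * m₁) t₁ / L) < 1 →
        L - t₁ ≤ E + |t - t'| → L - min t₁ (2 * (t₁ - m₁)) ≤ 2 * (E + |t - t'|) ∨
        L ≤ 2 * (E + |t - t'|) := by
      intro t₁ m₁ h1 h2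
      have h3 : 2 * min (2 * m₁) t₁ / L < 1 := by
        rcases min_lt_iff.mp h1 with h | h
        · exact absurd h (lt_irrefl _)
        · exact h
      rw [div_lt_one hL] at h3
      rcases le_total (L / 2) t₁ with h | h
      · left
        have h4 : 2 * m₁ < L / 2 := by
          rcases min_lt_iff.mp (show min (2 * m₁) t₁ < L / 2 by linarith) with h' | h'
          · exact h'
          · exact absurd h' (not_lt.mpr h)
        rw [min_eq_left (by linarith)]
        linarith
      · right; linarith
    rcases haI.2.lt_or_eq with h | h
    · right
      rcases aux t m h hEt with h' | h'
      · exact (min_le_left _ _).trans h'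
      · exact (min_le_left _ _).trans (by linarith)
    · rcases haI'.2.lt_or_eq with h₂ | h₂
      · right
        rcases aux t' m' h₂ hEt' with h' | h'
        · exact (min_le_right _ _).trans h'
        · exact (min_le_right _ _).trans (by linarith)
      · exact Or.inl ⟨h, h₂⟩
  set A := 2 / L * (1 + 4 * c * L) with hA
  have hA0 : 0 ≤ A := by positivity
  have P3 : min (L - s) (L - s') * dist (F x a) (F x' a') ≤
      (2 * D + 2 * K + 2 * L * K * A) * (ρ + δ) := by
    rcases dich with ⟨h, h'⟩ | h
    · rw [h, h', hF1, hF1, dist_self, mul_zero]; positivity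
    · have h1 : min (L - s) (L - s') * dist (F x a) (F x' a') ≤
          2 * (E + |t - t'|) * dist (F x a) (F x' a') := by gcongr
      have h2 : |t - t'| * dist (F x a) (F x' a') ≤ (ρ + δ) * D := by
        gcongr
        · linarith
        · exact hD _ _
      have h3 : E * dist (F x a) (F x' a') ≤ K * (ρ + L * (A * (ρ + δ))) := by
        rcases hx with hx | hx
        · have : E = 0 := le_antisymm ((min_le_left _ _).trans (by linarith)) hE0
          rw [this, zero_mul]; positivity
        rcases hx' with hx' | hx'
        · have : E = 0 := le_antisymm ((min_le_right _ _).trans (by linarith)) hE0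
          rw [this, zero_mul]; positivity
        have h4 := mul_le_mul_of_nonneg_left (hF x hx x' hx' a haI a' haI') hE0
        have h5 : E * |a - a'| ≤ L * (A * (ρ + δ)) := by gcongr
        have h6 : K * (E * dist x x' + E * |a - a'|) ≤ K * (ρ + L * (A * (ρ + δ))) := by gcongr
        linarith
      have : 0 ≤ K * δ := by positivity
      nlinarith
  have : rho L (G σ F L (θ, x, t) n) (G σ F L (θ', x', t') n') =
    dist (G σ F L (θ, x, t) n).1 (G σ F L (θ', x', t') n').1 + |s - s'|
      + min (L - s) (L - s') * dist (F x a) (F x' a') := rfl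
  rw [this]
  linarith


lemma inCyl_iff (U : Fin N → Set M) (L : ℝ) (z : (Fin N → ℝ) × M × ℝ) :
    InCyl U L z ↔ (∀ j, z.1 j ∈ Icc (0:ℝ) 1) ∧ ∑ j, z.1 j = 1 ∧
      (∃ y, ∀ j, z.1 j ≠ 0 → y ∈ U j) ∧ z.2.2 ∈ Icc 0 L ∧
      (z.2.2 = L ∨ ∀ j, z.1 j ≠ 0 → z.2.1 ∈ U j) := by
  classical
  constructor
  · rintro ⟨⟨h1, h2, ⟨y, hy⟩⟩, h4, s, hs, -, h⟩
    refine ⟨h1, h2, ⟨y, ?_⟩, h4, ?_⟩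
    · simpa using hy
    · rcases h with h | h
      · exact Or.inl h
      · right
        intro j hj
        simp only [mem_iInter] at h
        exact h j (hs j hj)
  · rintro ⟨h1, h2, ⟨y, hy⟩, h4, h⟩
    refine ⟨⟨h1, h2, ⟨y, by simpa using hy⟩⟩, h4, Finset.univ.filter (fun j => z.1 j ≠ 0),
      by simp, ⟨y, by simpa using hy⟩, ?_⟩
    rcases h with h | h
    · exact Or.inl h
    · right; simpa using h

/-- support of a point of the nerve -/
noncomputable def supp (θ : Fin N → ℝ) : Finset (Fin N) :=
  Finset.univ.filter (fun j => θ j ≠ 0)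

lemma mem_supp {θ : Fin N → ℝ} {j : Fin N} : j ∈ supp θ ↔ θ j ≠ 0 := by
  simp [supp]

/-- the intermediate stages -/
def Stage (U : Fin N → Set M) (L : ℝ) (S : Finset (Finset (Fin N))) :
    Set ((Fin N → ℝ) × M × ℝ) :=
  {z | InCyl U L z ∧ (z.2.2 = 0 ∨ supp z.1 ∈ S)}

/-- Lipschitz strong deformation retraction with respect to `rho`. -/
def SDR (L : ℝ) (X Y : Set ((Fin N → ℝ) × M × ℝ)) : Prop :=
  ∃ (Φ : (Fin N → ℝ) × M × ℝ → ℝ → (Fin N → ℝ) × M × ℝ) (K : ℝ), 0 ≤ K ∧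
    (∀ z ∈ X, ∀ s ∈ Icc (0:ℝ) 1, Φ z s ∈ X) ∧
    (∀ z ∈ X, ∀ w ∈ X, ∀ s ∈ Icc (0:ℝ) 1, ∀ t ∈ Icc (0:ℝ) 1,
      rho L (Φ z s) (Φ w t) ≤ K * (rho L z w + |s - t|)) ∧
    (∀ z ∈ X, Φ z 0 = z) ∧ (∀ z ∈ X, Φ z 1 ∈ Y) ∧ (∀ z ∈ Y, ∀ s ∈ Icc (0:ℝ) 1, Φ z s = z)

lemma SDR.refl (L : ℝ) {X : Set ((Fin N → ℝ) × M × ℝ)} : SDR L X X :=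
  ⟨fun z _ => z, 1, zero_le_one, fun z hz _ _ => hz,
    fun z _ w _ s _ t _ => by linarith [abs_nonneg (s - t)],
    fun _ _ => rfl, fun _ hz => hz, fun _ _ _ _ => rfl⟩

lemma SDR.trans {L D : ℝ} (hD0 : 0 ≤ D) (hD : ∀ x y : M, dist x y ≤ D)
    {X Y W : Set ((Fin N → ℝ) × M × ℝ)} (hX : ∀ z ∈ X, z.2.2 ≤ L) (hYX : Y ⊆ X) (hWY : W ⊆ Y)
    (h1 : SDR L X Y) (h2 : SDR L Y W) : SDR L X W := by
  obtain ⟨Φ, K, hK, a1, a2, a3, a4, a5⟩ := h1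
  obtain ⟨Ψ, K', hK', b1, b2, b3, b4, b5⟩ := h2
  have i1 : (1:ℝ) ∈ Icc (0:ℝ) 1 := ⟨zero_le_one, le_rfl⟩
  have i0 : (0:ℝ) ∈ Icc (0:ℝ) 1 := ⟨le_rfl, zero_le_one⟩
  have fst : ∀ s ∈ Icc (0:ℝ) 1, s ≤ 1 / 2 → 2 * s ∈ Icc (0:ℝ) 1 := by
    intro s hs h; exact ⟨by linarith [hs.1], by linarith⟩
  have snd : ∀ s ∈ Icc (0:ℝ) 1, ¬ s ≤ 1 / 2 → 2 * s - 1 ∈ Icc (0:ℝ) 1 := by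
    intro s hs h; push Not at h; exact ⟨by linarith, by linarith [hs.2]⟩
  have mem : ∀ z ∈ X, ∀ s ∈ Icc (0:ℝ) 1,
      (if s ≤ 1 / 2 then Φ z (2 * s) else Ψ (Φ z 1) (2 * s - 1)) ∈ X := by
    intro z hz s hs
    split_ifs with h
    · exact a1 z hz _ (fst s hs h)
    · exact hYX (b1 _ (a4 z hz) _ (snd s hs h))
  refine ⟨fun z s => if s ≤ 1 / 2 then Φ z (2 * s) else Ψ (Φ z 1) (2 * s - 1),
    (1 + D) * (2 * K + 2 * K' + K * K'), by positivity, mem, ?_, ?_, ?_, ?_⟩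
  · intro z hz w hw s hs t ht
    wlog hst : s ≤ t generalizing z w s t
    · have := this w hw z hz t ht s hs (by linarith)
      rw [rho_symm, rho_symm L z w, abs_sub_comm]
      exact this
    have hρ := (rho_parts (hX z hz) (hX w hw)).1
    set ρ := rho L z w
    have hδ := abs_nonneg (s - t)
    have big : ∀ y : ℝ, 0 ≤ y → y ≤ (2 * K + 2 * K' + K * K') * (ρ + |s - t|) →
        y ≤ (1 + D) * (2 * K + 2 * K' + K * K') * (ρ + |s - t|) := by
      intro y hy h
      have : 0 ≤ D * ((2 * K + 2 * K' + K * K') * (ρ + |s - t|)) := by positivity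
      nlinarith
    have n1 : 0 ≤ K * ρ := by positivity
    have n2 : 0 ≤ K' * ρ := by positivity
    have n3 : 0 ≤ K * K' * ρ := by positivity
    have n4 : 0 ≤ K * |s - t| := by positivity
    have n5 : 0 ≤ K' * |s - t| := by positivity
    have n6 : 0 ≤ K * K' * |s - t| := by positivity
    have e1 : |2 * s - 2 * t| = 2 * |s - t| := by rw [← mul_sub, abs_mul, abs_two]
    have e2 : |2 * s - 1 - (2 * t - 1)| = 2 * |s - t| := by
      rw [← e1]; congr 1; ring
    by_cases h : s ≤ 1 / 2
    · by_cases h' : t ≤ 1 / 2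
      · simp only [h, h', if_true]
        have := a2 z hz w hw _ (fst s hs h) _ (fst t ht h')
        rw [e1] at this
        refine big _ (rho_parts (hX _ (a1 z hz _ (fst s hs h)))
          (hX _ (a1 w hw _ (fst t ht h')))).1 ?_
        nlinarith
      · simp only [h, h', if_true, if_false]
        have hwY := a4 w hw
        have c1 := a2 z hz w hw _ (fst s hs h) 1 i1
        have c2 := b2 _ hwY _ hwY 0 i0 _ (snd t ht h')
        rw [b3 _ hwY, rho_self] at c2
        have c3 := rho_triangle hD0 hD (hX _ (a1 z hz _ (fst s hs h))) (hX _ (hYX hwY))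
          (hX _ (hYX (b1 _ hwY _ (snd t ht h'))))
        refine c3.trans ?_
        rw [mul_assoc]
        apply mul_le_mul_of_nonneg_left _ (by linarith)
        push Not at h'
        have d1 : |2 * s - 1| ≤ 2 * |s - t| := by
          rw [abs_of_nonpos (by linarith), abs_of_nonpos (by linarith)]; linarith
        have d2 : |0 - (2 * t - 1)| ≤ 2 * |s - t| := by
          rw [abs_of_nonpos (by linarith), abs_of_nonpos (by linarith)]; linarith
        have d3 := mul_le_mul_of_nonneg_left d1 hK
        have d4 := mul_le_mul_of_nonneg_left d2 hK'
        nlinarith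
    · have h' : ¬ t ≤ 1 / 2 := fun h'' => h (hst.trans h'')
      simp only [h, h', if_false]
      have c1 := a2 z hz w hw 1 i1 1 i1
      have c2 := b2 _ (a4 z hz) _ (a4 w hw) _ (snd s hs h) _ (snd t ht h')
      rw [e2] at c2
      rw [sub_self, abs_zero, add_zero] at c1
      refine big _ (rho_parts (hX _ (hYX (b1 _ (a4 z hz) _ (snd s hs h))))
        (hX _ (hYX (b1 _ (a4 w hw) _ (snd t ht h'))))).1 ?_
      have := mul_le_mul_of_nonneg_left c1 hK'
      nlinarith
  · intro z hz
    have : (0:ℝ) ≤ 1 / 2 := by norm_num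
    simp only [this, if_true, mul_zero]
    exact a3 z hz
  · intro z hz
    have : ¬ (1:ℝ) ≤ 1 / 2 := by norm_num
    simp only [this, if_false]
    have e : (2 * 1 - 1 : ℝ) = 1 := by norm_num
    rw [e]
    exact b4 _ (a4 z hz)
  · intro z hz s hs
    simp only
    split_ifs with h
    · exact a5 z (hWY hz) _ (fst s hs h)
    · rw [a5 z (hWY hz) 1 i1]
      exact b5 z hz _ (snd s hs h)

lemma inf_lip {σ : Finset (Fin N)} (hσ : σ.Nonempty) (θ θ' : Fin N → ℝ) :
    σ.inf' hσ θ ≤ σ.inf' hσ θ' + dist θ θ' := by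
  obtain ⟨j, hj, e⟩ := Finset.exists_mem_eq_inf' hσ θ'
  rw [e]
  have h1 := Finset.inf'_le θ hj
  have h2 := dist_le_pi_dist θ θ' j
  rw [Real.dist_eq] at h2
  linarith [le_abs_self (θ j - θ' j)]

set_option linter.unusedSectionVars false in
lemma G_zero {σ : Finset (Fin N)} {F : M → ℝ → M} {L : ℝ} (hF0 : ∀ x, F x 0 = x)
    {z : (Fin N → ℝ) × M × ℝ} (hz : 0 ≤ z.2.2) : G σ F L z 0 = z := by
  obtain ⟨θ, x, t⟩ := z
  simp only at hz
  have h2 : min t (2 * t) = t := min_eq_left (by linarith)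
  simp [G, hz, hF0, h2]

lemma G_mem {U : Fin N → Set M} {L : ℝ} (hL : 0 < L) {σ : Finset (Fin N)}
    (hne : σ.Nonempty) {F : M → ℝ → M}
    (hFV : ∀ x a, x ∈ (⋂ j ∈ σ, U j) ∨ a ≠ 0 → F x a ∈ (⋂ j ∈ σ, U j))
    {z : (Fin N → ℝ) × M × ℝ} (hz : InCyl U L z) (hs : supp z.1 = σ) {n : ℝ} (hn : 0 < n)
    (hnl : ∀ j ∈ σ, n ≤ z.1 j) (hnt : 2 * σ.card * L * n ≤ z.2.2) :
    InCyl U L (G σ F L z n) ∧ ∀ j, (G σ F L z n).1 j ≠ 0 → j ∈ σ := by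
  obtain ⟨θ, x, t⟩ := z
  rw [inCyl_iff] at hz
  obtain ⟨h1, h2, ⟨y, hy⟩, h4, h5⟩ := hz
  simp only at h1 h2 hy h4 h5 hs hnl hnt
  have hc : (0:ℝ) < σ.card := by exact_mod_cast hne.card_pos
  have hm : 0 < 2 * σ.card * L * n := by positivity
  have hcn : σ.card * n ≤ 1 / 2 := by
    have : L * (σ.card * n) ≤ L * (1 / 2) := by nlinarith [h4.2]
    exact le_of_mul_le_mul_left this hL
  have hpos : 0 < 1 - σ.card * n := by linarith
  have hsub : ∀ j, (G σ F L (θ, x, t) n).1 j ≠ 0 → j ∈ σ := by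
    intro j hj
    by_contra hjσ
    apply hj
    have : θ j = 0 := by
      by_contra h
      exact hjσ (hs ▸ mem_supp.mpr h)
    simp [G, hjσ, this]
  have hV : F x (min 1 (2 * min (2 * (2 * σ.card * L * n)) t / L)) ∈ ⋂ j ∈ σ, U j := by
    apply hFV
    right
    have : 0 < min (2 * (2 * σ.card * L * n)) t := lt_min (by linarith) (by linarith)
    exact (lt_min one_pos (by positivity)).ne'
  have hV' : ∀ j ∈ σ, F x (min 1 (2 * min (2 * (2 * σ.card * L * n)) t / L)) ∈ U j := by
    simpa only [mem_iInter] using hV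
  have hnn : ∀ j, 0 ≤ (G σ F L (θ, x, t) n).1 j := by
    intro j
    simp only [G]
    apply div_nonneg _ hpos.le
    split_ifs with h
    · linarith [hnl j h]
    · linarith [(h1 j).1]
  have hsum : ∑ j, (G σ F L (θ, x, t) n).1 j = 1 := by
    simp only [G]
    rw [← Finset.sum_div, Finset.sum_sub_distrib, h2, Finset.sum_ite_mem]
    simp only [Finset.univ_inter, Finset.sum_const, nsmul_eq_mul]
    exact div_self hpos.ne'
  refine ⟨?_, hsub⟩
  rw [inCyl_iff]
  refine ⟨fun j => ⟨hnn j, ?_⟩, hsum, ⟨_, fun j hj => hV' j (hsub j hj)⟩, ?_,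
    Or.inr fun j hj => hV' j (hsub j hj)⟩
  · rw [← hsum]
    exact Finset.single_le_sum (fun i _ => hnn i) (Finset.mem_univ j)
  · exact ⟨le_min h4.1 (by simp only; linarith), (min_le_left _ _).trans h4.2⟩

lemma step {U : Fin N → Set M} (hU : IsGoodCovering U) {L D : ℝ} (hL : 0 < L) (hD0 : 0 ≤ D)
    (hD : ∀ x y : M, dist x y ≤ D) (S : Finset (Finset (Fin N))) (σ : Finset (Fin N))
    (hdown : ∀ a ∈ S, ∀ b ⊆ a, b ∈ S) (hmax : ∀ a ∈ S, σ ⊆ a → a = σ) (hσS : σ ∈ S) :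
    SDR L (Stage U L S) (Stage U L (S.erase σ)) := by
  classical
  by_cases hgood : σ.Nonempty ∧ (⋂ j ∈ σ, U j).Nonempty
  swap
  · have : Stage U L (S.erase σ) = Stage U L S := by
      ext z
      constructor
      · rintro ⟨h, h'⟩
        exact ⟨h, h'.imp_right Finset.mem_of_mem_erase⟩
      · rintro ⟨h, h'⟩
        refine ⟨h, h'.imp_right fun h'' => Finset.mem_erase.mpr ⟨?_, h''⟩⟩
        intro hs
        rw [inCyl_iff] at h
        obtain ⟨-, h2, ⟨y, hy⟩, -⟩ := h
        apply hgood
        constructor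
        · rw [Finset.nonempty_iff_ne_empty]
          intro he
          rw [Finset.sum_eq_zero] at h2
          · exact zero_ne_one h2
          · intro j _
            by_contra hj
            have := mem_supp.mpr hj
            rw [hs, he] at this
            simp at this
        · refine ⟨y, ?_⟩
          simp only [mem_iInter]
          intro j hj
          exact hy j (mem_supp.mp (hs ▸ hj))
    rw [this]
    exact SDR.refl L
  obtain ⟨hne, hV⟩ := hgood
  obtain ⟨p, F, K, hK, hp, hF0, hF1, hFV, hF⟩ := ext_contr (hU.2.2.2.2 σ hne hV)
  obtain ⟨C, hC, hG⟩ := G_lip (N := N) hL hD0 hD σ hK hF1 hF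
  have hc : (0:ℝ) < σ.card := by exact_mod_cast hne.card_pos
  have hc1 : (1:ℝ) ≤ σ.card := by exact_mod_cast hne.card_pos
  set k : ℝ := 2 * σ.card * L with hk
  have hk0 : 0 < k := by positivity
  set lam : (Fin N → ℝ) → ℝ := fun θ => σ.inf' hne θ with hlam
  set q : (Fin N → ℝ) × M × ℝ → ℝ := fun z => min (lam z.1) (z.2.2 / k) with hq
  let A : (Fin N → ℝ) × M × ℝ → Prop := fun z => z.2.2 = L ∨ z.2.1 ∈ ⋂ j ∈ σ, U j
  have lam_nn : ∀ z, InCyl U L z → 0 ≤ lam z.1 := by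
    intro z hz
    exact Finset.le_inf' _ _ fun j _ => (((inCyl_iff U L z).mp hz).1 j).1
  have ht : ∀ z, InCyl U L z → z.2.2 ∈ Icc 0 L := fun z hz => hz.2.1
  have q_nn : ∀ z, InCyl U L z → 0 ≤ q z := fun z hz =>
    le_min (lam_nn z hz) (div_nonneg (ht z hz).1 hk0.le)
  have q_t : ∀ z, k * q z ≤ z.2.2 := by
    intro z
    have : q z ≤ z.2.2 / k := min_le_right _ _
    rw [le_div_iff₀ hk0] at this
    linarith
  have q_1 : ∀ z, InCyl U L z → q z ≤ 1 := by
    intro z hz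
    obtain ⟨j, hj⟩ := hne
    exact (min_le_left _ _).trans ((Finset.inf'_le _ hj).trans (((inCyl_iff U L z).mp hz).1 j).2)
  have lam_lip : ∀ θ θ', |lam θ - lam θ'| ≤ dist θ θ' := by
    intro θ θ'
    have h1 := inf_lip hne θ θ'
    have h2 := inf_lip hne θ' θ
    rw [dist_comm] at h2
    rw [abs_le]
    constructor <;> simp only [hlam] <;> linarith
  have q_lip : ∀ z w, InCyl U L z → InCyl U L w → |q z - q w| ≤ (1 + 1 / k) * rho L z w := by
    intro z w hz hw
    obtain ⟨r0, r1, r2, -⟩ := rho_parts (ht z hz).2 (ht w hw).2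
    refine (min_lip _ _ _ _).trans ?_
    rw [← sub_div, abs_div, abs_of_pos hk0, add_mul, one_mul, div_mul_eq_mul_div, one_mul]
    exact add_le_add ((lam_lip _ _).trans r1) (div_le_div_of_nonneg_right r2 hk0.le)
  have lamA : ∀ z, InCyl U L z → ¬ A z → lam z.1 = 0 := by
    intro z hz hA
    refine le_antisymm ?_ (lam_nn z hz)
    have h5 := ((inCyl_iff U L z).mp hz).2.2.2.2
    by_contra hl
    push Not at hl
    apply hA
    rcases h5 with h | h
    · exact Or.inl h
    · right
      simp only [mem_iInter]
      intro j hj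
      exact h j (hl.trans_le (Finset.inf'_le _ hj)).ne'
  have active : ∀ z ∈ Stage U L S, 0 < q z → supp z.1 = σ := by
    rintro z ⟨hz, hz'⟩ hqz
    have h1 : 0 < lam z.1 := hqz.trans_le (min_le_left _ _)
    have h2 : 0 < z.2.2 := by nlinarith [q_t z]
    rcases hz' with h | h
    · exact absurd h h2.ne'
    · apply hmax _ h
      intro j hj
      exact mem_supp.mpr (h1.trans_le (Finset.inf'_le _ hj)).ne'
  have sq : ∀ z, InCyl U L z → ∀ s ∈ Icc (0:ℝ) 1, 0 ≤ s * q z ∧ s * q z ≤ q z := by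
    intro z hz s hs
    exact ⟨mul_nonneg hs.1 (q_nn z hz), mul_le_of_le_one_left (q_nn z hz) hs.2⟩
  have GM : ∀ z ∈ Stage U L S, ∀ s ∈ Icc (0:ℝ) 1, 0 < s * q z →
      InCyl U L (G σ F L z (s * q z)) ∧ ∀ j, (G σ F L z (s * q z)).1 j ≠ 0 → j ∈ σ := by
    intro z hz s hs hn
    have hsq := (sq z hz.1 s hs).2
    refine G_mem hL hne hFV hz.1 (active z hz (by linarith)) hn ?_ ?_
    · intro j hj
      exact hsq.trans ((min_le_left _ _).trans (Finset.inf'_le _ hj))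
    · exact (mul_le_mul_of_nonneg_left hsq hk0.le).trans (q_t z)
  have mem : ∀ z ∈ Stage U L S, ∀ s ∈ Icc (0:ℝ) 1,
      (if A z then G σ F L z (s * q z) else z) ∈ Stage U L S := by
    intro z hz s hs
    split_ifs with hA
    · rcases (sq z hz.1 s hs).1.eq_or_lt with h | h
      · rw [← h, G_zero hF0 (ht z hz.1).1]; exact hz
      · obtain ⟨g1, g2⟩ := GM z hz s hs h
        exact ⟨g1, Or.inr (hdown σ hσS _ fun j hj => g2 j (mem_supp.mp hj))⟩
    · exact hz
  have mixed : ∀ z ∈ Stage U L S, ∀ w ∈ Stage U L S, A z → ¬ A w → ∀ s ∈ Icc (0:ℝ) 1,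
      rho L (G σ F L z (s * q z)) w ≤ (1 + D) * (C + 1) * rho L z w := by
    intro z hz w hw hAz hAw s hs
    obtain ⟨r0, r1, -, -⟩ := rho_parts (ht z hz.1).2 (ht w hw.1).2
    have hi := (inCyl_iff U L z).mp hz.1
    obtain ⟨s0, s1⟩ := sq z hz.1 s hs
    have h1 := hG z z hi.1 hi.1 hi.2.2.2.1 hi.2.2.2.1 hAz hAz (s * q z) 0 s0 le_rfl
      ((mul_le_mul_of_nonneg_left s1 hk0.le).trans (q_t z))
      (by rw [mul_zero]; exact hi.2.2.2.1.1) (s1.trans (q_1 z hz.1)) zero_le_one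
    rw [G_zero hF0 hi.2.2.2.1.1, rho_self, zero_add, sub_zero, abs_of_nonneg s0] at h1
    have h2 : s * q z ≤ rho L z w := by
      have h3 := lam_lip z.1 w.1
      rw [lamA w hw.1 hAw, sub_zero] at h3
      have h4 : q z ≤ lam z.1 := min_le_left _ _
      linarith [le_abs_self (lam z.1)]
    have hgt : (G σ F L z (s * q z)).2.2 ≤ L := (min_le_left _ _).trans (ht z hz.1).2
    refine (rho_triangle hD0 hD hgt (ht z hz.1).2 (ht w hw.1).2).trans ?_
    rw [mul_assoc]
    apply mul_le_mul_of_nonneg_left _ (by linarith)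
    have := mul_le_mul_of_nonneg_left h2 hC
    linarith
  set B := 1 + C * (2 + 1 / k) + (1 + D) * (C + 1) with hB
  have hB1 : 0 ≤ C * (2 + 1 / k) := by positivity
  have hB2 : 0 ≤ (1 + D) * (C + 1) := by positivity
  have hB0 : 0 ≤ B := by linarith
  refine ⟨fun z s => if A z then G σ F L z (s * q z) else z, B, hB0, mem, ?_, ?_, ?_, ?_⟩
  · intro z hz w hw s hs t ht'
    obtain ⟨r0, -⟩ := rho_parts (ht z hz.1).2 (ht w hw.1).2
    have hst := abs_nonneg (s - t)
    have fin1 : (1 + D) * (C + 1) * rho L z w ≤ B * (rho L z w + |s - t|) := by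
      apply mul_le_mul _ _ r0 hB0 <;> linarith
    by_cases hA : A z
    · by_cases hA' : A w
      · simp only [hA, hA', if_true]
        have hi := (inCyl_iff U L z).mp hz.1
        have hi' := (inCyl_iff U L w).mp hw.1
        obtain ⟨s0, s1⟩ := sq z hz.1 s hs
        obtain ⟨s0', s1'⟩ := sq w hw.1 t ht'
        have h1 := hG z w hi.1 hi'.1 hi.2.2.2.1 hi'.2.2.2.1 hA hA' (s * q z) (t * q w) s0 s0'
          ((mul_le_mul_of_nonneg_left s1 hk0.le).trans (q_t z))
          ((mul_le_mul_of_nonneg_left s1' hk0.le).trans (q_t w))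
          (s1.trans (q_1 z hz.1)) (s1'.trans (q_1 w hw.1))
        have h2 : |s * q z - t * q w| ≤ |s - t| + (1 + 1 / k) * rho L z w := by
          have e : s * q z - t * q w = (s - t) * q z + t * (q z - q w) := by ring
          rw [e]
          refine (abs_add_le _ _).trans ?_
          rw [abs_mul, abs_mul, abs_of_nonneg (q_nn z hz.1), abs_of_nonneg ht'.1]
          exact add_le_add (mul_le_of_le_one_right hst (q_1 z hz.1))
            ((mul_le_of_le_one_left (abs_nonneg _) ht'.2).trans (q_lip z w hz.1 hw.1))
        have h3 : rho L z w + |s * q z - t * q w| ≤ (2 + 1 / k) * (rho L z w + |s - t|) := by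
          have : 0 ≤ 1 / k * |s - t| := by positivity
          nlinarith
        refine h1.trans ((mul_le_mul_of_nonneg_left h3 hC).trans ?_)
        rw [← mul_assoc]
        apply mul_le_mul_of_nonneg_right _ (by linarith)
        linarith
      · simp only [hA, hA', if_true, if_false]
        exact (mixed z hz w hw hA hA' s hs).trans fin1
    · by_cases hA' : A w
      · simp only [hA, hA', if_true, if_false]
        rw [rho_symm]
        refine (mixed w hw z hz hA' hA t ht').trans ?_
        rw [rho_symm L w z]
        exact fin1
      · simp only [hA, hA', if_false]
        have : 1 * rho L z w ≤ B * (rho L z w + |s - t|) := by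
          apply mul_le_mul _ _ r0 hB0 <;> linarith
        linarith
  · intro z hz
    simp only [zero_mul, G_zero hF0 (ht z hz.1).1, ite_self]
  · intro z hz
    have i1 : (1:ℝ) ∈ Icc (0:ℝ) 1 := ⟨zero_le_one, le_rfl⟩
    have hm := mem z hz 1 i1
    refine ⟨hm.1, ?_⟩
    simp only [one_mul] at hm ⊢
    by_cases hA : A z
    · simp only [hA, if_true] at hm ⊢
      rcases (q_nn z hz.1).eq_or_lt with h | h
      · rw [← h, G_zero hF0 (ht z hz.1).1]
        refine hz.2.elim Or.inl fun hS => ?_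
        by_cases hs : supp z.1 = σ
        · left
          have hl : 0 < lam z.1 := by
            rw [hlam, Finset.lt_inf'_iff]
            intro j hj
            exact lt_of_le_of_ne (((inCyl_iff U L z).mp hz.1).1 j).1
              (Ne.symm (mem_supp.mp (hs ▸ hj)))
          have h0 : z.2.2 / k ≤ 0 := by
            by_contra hcon
            push Not at hcon
            exact absurd h (lt_min hl hcon).ne
          have := (div_le_iff₀ hk0).mp h0
          linarith [(ht z hz.1).1]
        · exact Or.inr (Finset.mem_erase.mpr ⟨hs, hS⟩)
      · rcases le_total (lam z.1) (z.2.2 / k) with hle | hle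
        · right
          refine Finset.mem_erase.mpr ⟨?_, ?_⟩
          · intro he
            obtain ⟨j, hj, e⟩ := Finset.exists_mem_eq_inf' hne z.1
            have hql : q z = z.1 j := (min_eq_left hle).trans e
            rw [← he, mem_supp] at hj
            apply hj
            have hjσ : j ∈ σ := he ▸ mem_supp.mpr hj
            simp [G, hjσ, hql]
          · have g2 := (GM z hz 1 i1 (by linarith)).2
            rw [one_mul] at g2
            exact hdown σ hσS _ fun j hj => g2 j (mem_supp.mp hj)
        · left
          have hql : q z = z.2.2 / k := min_eq_right hle
          have e : k * q z = z.2.2 := by rw [hql]; field_simp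
          have : (G σ F L z (q z)).2.2 = min z.2.2 (2 * (z.2.2 - k * q z)) := rfl
          rw [this, e, sub_self, mul_zero]
          exact min_eq_right (ht z hz.1).1
    · simp only [hA, if_false]
      refine hz.2.imp_right fun hS => Finset.mem_erase.mpr ⟨?_, hS⟩
      intro hs
      apply hA
      refine ((inCyl_iff U L z).mp hz.1).2.2.2.2.imp_right fun h => ?_
      simp only [mem_iInter]
      intro j hj
      exact h j (mem_supp.mp (hs ▸ hj))
  · intro z hz s hs
    have hz' : z ∈ Stage U L S := ⟨hz.1, hz.2.imp_right Finset.mem_of_mem_erase⟩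
    have hq0 : q z = 0 := by
      by_contra hne0
      have hpos := lt_of_le_of_ne (q_nn z hz.1) (Ne.symm hne0)
      have hs := active z hz' hpos
      rcases hz.2 with h | h
      · nlinarith [q_t z]
      · exact (Finset.mem_erase.mp h).1 hs
    simp only [hq0, mul_zero, G_zero hF0 (ht z hz.1).1, ite_self]

lemma induct {U : Fin N → Set M} (hU : IsGoodCovering U) {L D : ℝ} (hL : 0 < L) (hD0 : 0 ≤ D)
    (hD : ∀ x y : M, dist x y ≤ D) (n : ℕ) : ∀ (S : Finset (Finset (Fin N))), S.card = n →
    (∀ a ∈ S, ∀ b ⊆ a, b ∈ S) → SDR L (Stage U L S) (Stage U L ∅) := by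
  classical
  induction n with
  | zero =>
    intro S hS _
    rw [Finset.card_eq_zero.mp hS]
    exact SDR.refl L
  | succ n ih =>
    intro S hS hdown
    have hne : S.Nonempty := Finset.card_pos.mp (by omega)
    obtain ⟨σ, hσ, hmax⟩ := Finset.exists_max_image S Finset.card hne
    have hmax' : ∀ a ∈ S, σ ⊆ a → a = σ := fun a ha hsub =>
      (Finset.eq_of_subset_of_card_le hsub (hmax a ha)).symm
    refine SDR.trans (Y := Stage U L (S.erase σ)) hD0 hD (fun z hz => hz.1.2.1.2)
      (fun z hz => ⟨hz.1, hz.2.imp_right Finset.mem_of_mem_erase⟩)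
      (fun z hz => ⟨hz.1, hz.2.imp_right fun h => absurd h (Finset.notMem_empty _)⟩)
      (step hU hL hD0 hD S σ hdown hmax' hσ) (ih (S.erase σ) ?_ ?_)
    · rw [Finset.card_erase_of_mem hσ]; omega
    · intro a ha b hb
      have ha' := Finset.mem_erase.mp ha
      refine Finset.mem_erase.mpr ⟨?_, hdown a ha'.2 b hb⟩
      rintro rfl
      exact ha'.1 (hmax' a ha'.2 hb)

end CylAux

/-- For a compact metric space with a finite good covering and `L > 6`,
there is a Lipschitz strong deformation retraction `Φ` of the mapping cylinder `M(p)` onto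
`D(𝒰) × {0}`.  Everything is expressed on representatives, with equality in `M(p)`
expressed as vanishing of `cylDist`. -/
theorem cylinder_lipSDR_onto_DZero {M : Type*} [MetricSpace M] [CompactSpace M]
    {N : ℕ} (U : Fin N → Set M) (hU : IsGoodCovering U) (L : ℝ) (hL : 6 < L) :
    ∃ (Φ : ((Fin N → ℝ) × M × ℝ) × unitInterval → (Fin N → ℝ) × M × ℝ) (K : NNReal),
      (∀ z, InCyl U L z → ∀ t : unitInterval, InCyl U L (Φ (z, t))) ∧
      (∀ z w, InCyl U L z → InCyl U L w → ∀ s t : unitInterval,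
        cylDist L (Φ (z, s)) (Φ (w, t)) ≤ K * max (cylDist L z w) (dist s t)) ∧
      (∀ z, InCyl U L z → cylDist L (Φ (z, 0)) z = 0) ∧
      (∀ z, InCyl U L z → InDZero U (Φ (z, 1))) ∧
      (∀ z, InCyl U L z → InDZero U z →
        ∀ t : unitInterval, cylDist L (Φ (z, t)) z = 0) := by
  have hL0 : (0:ℝ) < L := by linarith
  have hD : ∀ x y : M, dist x y ≤ Metric.diam (univ : Set M) := fun x y =>
    Metric.dist_le_diam_of_mem (isCompact_univ.isBounded) (mem_univ x) (mem_univ y)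
  have hD0 : 0 ≤ Metric.diam (univ : Set M) := Metric.diam_nonneg
  set D := Metric.diam (univ : Set M)
  obtain ⟨Φ, K, hK, h1, h2, h3, h4, h5⟩ := CylAux.induct hU hL0 hD0 hD _ Finset.univ rfl
    (fun _ _ _ _ => Finset.mem_univ _)
  have hS : ∀ z, InCyl U L z → z ∈ CylAux.Stage U L Finset.univ := fun z hz =>
    ⟨hz, Or.inr (Finset.mem_univ _)⟩
  have cyl_self : ∀ z, InCyl U L z → cylDist L z z = 0 := by
    intro z hz
    have := CylAux.cylDist_le hz.2.1.2 hz.2.1.2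
    rw [CylAux.rho_self, mul_zero] at this
    exact le_antisymm this (Real.sqrt_nonneg _)
  have hK2 : 0 ≤ 2 * K * (7 + D) := by positivity
  refine ⟨fun zt => Φ zt.1 zt.2, ⟨2 * K * (7 + D), hK2⟩, ?_, ?_, ?_, ?_, ?_⟩
  · intro z hz t
    exact (h1 z (hS z hz) t t.2).1
  · intro z w hz hw s t
    have a1 := h2 z (hS z hz) w (hS w hw) s s.2 t t.2
    have a2 := CylAux.cylDist_le (h1 z (hS z hz) s s.2).1.2.1.2 (h1 w (hS w hw) t t.2).1.2.1.2
    have a3 := CylAux.rho_le hD0 hD hz.2.1.2 hw.2.1.2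
    have a4 : |(s:ℝ) - t| = dist s t := rfl
    rw [a4] at a1
    refine a2.trans ?_
    change _ ≤ 2 * K * (7 + D) * max (cylDist L z w) (dist s t)
    have b1 := le_max_left (cylDist L z w) (dist s t)
    have b2 := le_max_right (cylDist L z w) (dist s t)
    set m := max (cylDist L z w) (dist s t)
    have a5 : CylAux.rho L z w + dist s t ≤ (7 + D) * m := by
      have : (6 + D) * cylDist L z w ≤ (6 + D) * m := by gcongr
      linarith
    have a6 := mul_le_mul_of_nonneg_left a5 hK
    linarith
  · intro z hz
    have : Φ z ((0 : unitInterval) : ℝ) = z := h3 z (hS z hz)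
    simp only [this]
    exact cyl_self z hz
  · intro z hz
    have h : Φ z ((1 : unitInterval) : ℝ) ∈ CylAux.Stage U L ∅ := h4 z (hS z hz)
    have ht : (Φ z ((1 : unitInterval) : ℝ)).2.2 = 0 :=
      h.2.resolve_right (Finset.notMem_empty _)
    refine ⟨h.1.1, ht, ?_⟩
    rcases ((CylAux.inCyl_iff U L _).mp h.1).2.2.2.2 with h' | h'
    · rw [ht] at h'; exact absurd h' hL0.ne
    · simpa using h'
  · intro z hz hz0 t
    have : Φ z t = z := h5 z ⟨hz, Or.inl hz0.2.1⟩ t t.2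
    simp only [this]
    exact cyl_self z hz
end

section
/- Let M be a compact metric space with a finite good covering 𝒰 = {U_1,…,U_N}, and fix L > 6. Then for each k ≥ 1 there exists a Lipschitz strong deformation retraction Φ^k : M(p^k) × [0,1] → M(p^k) of M(p^k) onto (D^k × {0}) ∪ M(p^{k−1}). -/
open Metric Set

/-- `(θ, x, t)` represents a point of `M(p^k) = ⋃_{σ ∈ 𝒩^(k)} σ × K(U_σ)`, the part of the
mapping cylinder over the `k`-skeleton of the nerve: as `InCyl`, but the simplex `s` has at
most `k+1` vertices. -/
def InCylK {M : Type*} [MetricSpace M] {N : ℕ} (U : Fin N → Set M) (L : ℝ) (k : ℕ)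
    (z : (Fin N → ℝ) × M × ℝ) : Prop :=
  z.1 ∈ NerveSet U ∧ z.2.2 ∈ Icc 0 L ∧
    ∃ s : Finset (Fin N), s.card ≤ k + 1 ∧ (∀ j, z.1 j ≠ 0 → j ∈ s) ∧
      (⋂ j ∈ s, U j).Nonempty ∧ (z.2.2 = L ∨ z.2.1 ∈ ⋂ j ∈ s, U j)

/-- `(θ, x, t)` represents a point of `D^k × {0}`: `θ` lies in the `k`-skeleton of the
nerve (its support has at most `k+1` elements), `t = 0`, and
`x ∈ ⋂_{j ∈ supp θ} U_j`. -/
def InDZeroK {M : Type*} [MetricSpace M] {N : ℕ} (U : Fin N → Set M) (k : ℕ)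
    (z : (Fin N → ℝ) × M × ℝ) : Prop :=
  z.1 ∈ NerveSet U ∧ {j | z.1 j ≠ 0}.ncard ≤ k + 1 ∧ z.2.2 = 0 ∧
    z.2.1 ∈ ⋂ j ∈ {j | z.1 j ≠ 0}, U j

namespace SkelCyl

/-- A rough distance on representatives, bi-Lipschitz to `cylDist` when `M` is bounded. -/
noncomputable def rd {M : Type*} [PseudoMetricSpace M] {N : ℕ} (L : ℝ)
    (z w : (Fin N → ℝ) × M × ℝ) : ℝ :=
  dist z.1 w.1 + |z.2.2 - w.2.2| + min (L - z.2.2) (L - w.2.2) * dist z.2.1 w.2.1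

lemma scalar_upper {a p r r' d δ c D : ℝ} (hr : 0 ≤ r) (hr' : 0 ≤ r') (hδ : 0 ≤ δ)
    (hδd : δ ≤ d) (hd : d ≤ D) (hc : 1 - δ ^ 2 / 2 ≤ c) (hp : p = |r - r'|) (ha : 0 ≤ a) :
    a ^ 2 + (r ^ 2 + r' ^ 2 - 2 * r * r' * c) ≤ ((1 + D) * (a + p + min r r' * d)) ^ 2 := by
  have hrr : 0 ≤ r * r' := mul_nonneg hr hr'
  have h1 : r * r' * (1 - δ ^ 2 / 2) ≤ r * r' * c := mul_le_mul_of_nonneg_left hc hrr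
  have hd0 : 0 ≤ d := hδ.trans hδd
  have hδ2 : δ ^ 2 ≤ d ^ 2 := by nlinarith
  have h2 : r * r' * δ ^ 2 ≤ r * r' * d ^ 2 := mul_le_mul_of_nonneg_left hδ2 hrr
  have hp0 : 0 ≤ p := hp ▸ abs_nonneg _
  have hp2 : p ^ 2 = (r - r') ^ 2 := by rw [hp, sq_abs]
  set m := min r r' with hm
  have hm0 : 0 ≤ m := le_min hr hr'
  have h3 : r * r' = m * (m + p) := by
    rcases le_total r r' with h | h
    · rw [hm, hp, min_eq_left h, abs_of_nonpos (by linarith)]; ring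
    · rw [hm, hp, min_eq_right h, abs_of_nonneg (by linarith)]; ring
  have hb : 0 ≤ m * d := mul_nonneg hm0 hd0
  have h4 : m * p * d ^ 2 ≤ (m * d) * p * D := by
    have : (m * d) * p * d ≤ (m * d) * p * D :=
      mul_le_mul_of_nonneg_left hd (mul_nonneg hb hp0)
    nlinarith
  have hD : 0 ≤ D := hd0.trans hd
  have h5 : a ^ 2 + (r ^ 2 + r' ^ 2 - 2 * r * r' * c)
      ≤ a ^ 2 + p ^ 2 + (m * d) ^ 2 + (m * d) * p * D := by
    have : r * r' * d ^ 2 = (m * d) ^ 2 + m * p * d ^ 2 := by rw [h3]; ring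
    nlinarith
  refine h5.trans ?_
  generalize m * d = b at *
  have e1 : 0 ≤ b * p * D := by positivity
  have e2 : 0 ≤ a * p := by positivity
  have e3 : 0 ≤ a * b := by positivity
  have e4 : 0 ≤ b * p := by positivity
  have e5 : (a + p + b) ^ 2 + 2 * D * (a + p + b) ^ 2 ≤ ((1 + D) * (a + p + b)) ^ 2 := by
    have : 0 ≤ (D * (a + p + b)) ^ 2 := sq_nonneg _
    nlinarith
  have e6 : b * p ≤ (a + p + b) ^ 2 := by nlinarith [sq_nonneg a, sq_nonneg b, sq_nonneg p]
  have e7 : D * (b * p) ≤ D * (a + p + b) ^ 2 := mul_le_mul_of_nonneg_left e6 hD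
  have e8 : 0 ≤ D * (a + p + b) ^ 2 := by positivity
  nlinarith

lemma scalar_lower {a p r r' d δ c D : ℝ} (hr : 0 ≤ r) (hr' : 0 ≤ r') (hδ : 0 ≤ δ)
    (hδd : d ≤ D * δ) (hd0 : 0 ≤ d) (hD : 1 ≤ D)
    (hc : c ≤ 1 - 2 / Real.pi ^ 2 * δ ^ 2) (hp : p = |r - r'|) :
    (a + p + min r r' * d) ^ 2 ≤ (4 * D) ^ 2 * (a ^ 2 + (r ^ 2 + r' ^ 2 - 2 * r * r' * c)) := by
  have hrr : 0 ≤ r * r' := mul_nonneg hr hr'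
  have h1 : r * r' * c ≤ r * r' * (1 - 2 / Real.pi ^ 2 * δ ^ 2) :=
    mul_le_mul_of_nonneg_left hc hrr
  have hp0 : 0 ≤ p := hp ▸ abs_nonneg _
  have hp2 : p ^ 2 = (r - r') ^ 2 := by rw [hp, sq_abs]
  set m := min r r' with hm
  have hm0 : 0 ≤ m := le_min hr hr'
  have hmm : m ^ 2 ≤ r * r' := by
    rw [sq]; exact mul_le_mul (min_le_left _ _) (min_le_right _ _) hm0 hr
  have hpi : (1 : ℝ) / 8 ≤ 2 / Real.pi ^ 2 := by
    rw [div_le_div_iff₀ (by norm_num) (by positivity)]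
    nlinarith [Real.pi_lt_four, Real.pi_pos]
  have h6 : (1 : ℝ) / 8 * (m ^ 2 * δ ^ 2) ≤ 2 / Real.pi ^ 2 * (r * r' * δ ^ 2) := by
    apply mul_le_mul hpi _ (by positivity) (by positivity)
    exact mul_le_mul_of_nonneg_right hmm (sq_nonneg _)
  have h7 : m * d ≤ D * (m * δ) := by nlinarith
  have hb : 0 ≤ m * d := mul_nonneg hm0 hd0
  have h8 : (m * d) ^ 2 ≤ D ^ 2 * (m * δ) ^ 2 := by
    rw [← mul_pow]; exact pow_le_pow_left₀ hb h7 2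
  have h9 : a ^ 2 + p ^ 2 + 1 / 4 * (m * δ) ^ 2
      ≤ a ^ 2 + (r ^ 2 + r' ^ 2 - 2 * r * r' * c) := by
    nlinarith
  have h10 : (4 * D) ^ 2 * (a ^ 2 + p ^ 2 + 1 / 4 * (m * δ) ^ 2) ≤
      (4 * D) ^ 2 * (a ^ 2 + (r ^ 2 + r' ^ 2 - 2 * r * r' * c)) :=
    mul_le_mul_of_nonneg_left h9 (sq_nonneg _)
  refine le_trans ?_ h10
  have hD2 : 1 ≤ D ^ 2 := by nlinarith
  have h11 : a ^ 2 + p ^ 2 ≤ D ^ 2 * (a ^ 2 + p ^ 2) :=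
    le_mul_of_one_le_left (by positivity) hD2
  generalize m * d = b at *
  nlinarith [sq_nonneg (a - p), sq_nonneg (a - b), sq_nonneg (b - p), sq_nonneg a, sq_nonneg p,
    sq_nonneg b]

section
variable {M : Type*} [MetricSpace M] {N : ℕ} {L D : ℝ}

lemma rd_nonneg {z w : (Fin N → ℝ) × M × ℝ} (hz : z.2.2 ≤ L) (hw : w.2.2 ≤ L) :
    0 ≤ rd L z w := by
  have : 0 ≤ min (L - z.2.2) (L - w.2.2) := le_min (by linarith) (by linarith)
  unfold rd; positivity

lemma rd_comm (z w : (Fin N → ℝ) × M × ℝ) : rd L z w = rd L w z := by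
  unfold rd; rw [dist_comm, abs_sub_comm, min_comm, dist_comm z.2.1]

lemma cone_arg_nonneg (r r' c : ℝ) (hr : 0 ≤ r) (hr' : 0 ≤ r') (hc : c ≤ 1) :
    0 ≤ r ^ 2 + r' ^ 2 - 2 * r * r' * c := by
  have : r * r' * c ≤ r * r' * 1 := mul_le_mul_of_nonneg_left hc (mul_nonneg hr hr')
  nlinarith [sq_nonneg (r - r')]

lemma cyl_le (hD : ∀ x y : M, dist x y ≤ D) {z w : (Fin N → ℝ) × M × ℝ}
    (hz : z.2.2 ≤ L) (hw : w.2.2 ≤ L) : cylDist L z w ≤ (1 + D) * rd L z w := by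
  have hD0 : 0 ≤ D := dist_nonneg.trans (hD z.2.1 z.2.1)
  have h0 := mul_nonneg (by linarith : 0 ≤ 1 + D) (rd_nonneg hz hw)
  unfold cylDist coneDist
  rw [Real.sqrt_le_left h0, Real.sq_sqrt (cone_arg_nonneg _ _ _ (by linarith) (by linarith)
    (Real.cos_le_one _))]
  unfold rd
  apply scalar_upper (by linarith) (by linarith) (le_min Real.pi_pos.le dist_nonneg)
    (min_le_right _ _) (hD _ _) (Real.one_sub_sq_div_two_le_cos) _ dist_nonneg
  rw [abs_sub_comm]; congr 1; ring

lemma le_cyl (hD : ∀ x y : M, dist x y ≤ D) (hD1 : 1 ≤ D) {z w : (Fin N → ℝ) × M × ℝ}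
    (hz : z.2.2 ≤ L) (hw : w.2.2 ≤ L) : rd L z w ≤ 4 * D * cylDist L z w := by
  have hc0 : 0 ≤ cylDist L z w := Real.sqrt_nonneg _
  apply le_of_sq_le_sq _ (by positivity)
  rw [mul_pow]
  unfold cylDist coneDist
  have h1 := cone_arg_nonneg (L - z.2.2) (L - w.2.2)
    (Real.cos (min Real.pi (dist z.2.1 w.2.1))) (by linarith) (by linarith)
    (Real.cos_le_one _)
  rw [Real.sq_sqrt h1, Real.sq_sqrt (by positivity)]
  unfold rd
  have hδ : 0 ≤ min Real.pi (dist z.2.1 w.2.1) := le_min Real.pi_pos.le dist_nonneg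
  apply scalar_lower (δ := min Real.pi (dist z.2.1 w.2.1))
    (by linarith) (by linarith) hδ _ dist_nonneg hD1 _ _
  · rcases le_total Real.pi (dist z.2.1 w.2.1) with h | h
    · rw [min_eq_left h]
      have := hD z.2.1 w.2.1
      nlinarith [Real.pi_gt_three]
    · rw [min_eq_right h]
      exact le_mul_of_one_le_left dist_nonneg hD1
  · apply Real.cos_le_one_sub_mul_cos_sq
    rw [abs_of_nonneg hδ]; exact min_le_left _ _
  · rw [abs_sub_comm]; congr 1; ring

lemma cyl_eq_zero (hD : ∀ x y : M, dist x y ≤ D) {z w : (Fin N → ℝ) × M × ℝ}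
    (hz : z.2.2 ≤ L) (hw : w.2.2 ≤ L) (h : rd L z w = 0) : cylDist L z w = 0 := by
  have := cyl_le hD hz hw
  rw [h, mul_zero] at this
  exact le_antisymm this (Real.sqrt_nonneg _)

lemma rd_tri (hD : ∀ x y : M, dist x y ≤ D) {z y w : (Fin N → ℝ) × M × ℝ}
    (hz : z.2.2 ≤ L) (hy : y.2.2 ≤ L) (hw : w.2.2 ≤ L) :
    rd L z w ≤ (1 + D) * (rd L z y + rd L y w) := by
  have hD0 : 0 ≤ D := dist_nonneg.trans (hD z.2.1 z.2.1)
  have h1 := dist_triangle z.1 y.1 w.1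
  have h2 := abs_sub_le z.2.2 y.2.2 w.2.2
  have h3 := dist_triangle z.2.1 y.2.1 w.2.1
  have a1 : 0 ≤ dist z.1 y.1 := dist_nonneg
  have a2 : 0 ≤ dist y.1 w.1 := dist_nonneg
  have b1 := abs_nonneg (z.2.2 - y.2.2)
  have b2 := abs_nonneg (y.2.2 - w.2.2)
  have c1 : 0 ≤ dist z.2.1 y.2.1 := dist_nonneg
  have c2 : 0 ≤ dist y.2.1 w.2.1 := dist_nonneg
  have c3 : 0 ≤ dist z.2.1 w.2.1 := dist_nonneg
  have hb := hD z.2.1 w.2.1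
  have key : min (L - z.2.2) (L - w.2.2) * dist z.2.1 w.2.1 ≤
      min (L - z.2.2) (L - y.2.2) * dist z.2.1 y.2.1 +
      min (L - y.2.2) (L - w.2.2) * dist y.2.1 w.2.1 + D * |z.2.2 - y.2.2| := by
    set m := min (L - z.2.2) (L - w.2.2) with hm
    have hm0 : 0 ≤ m := le_min (by linarith) (by linarith)
    rcases le_total m (L - y.2.2) with h | h
    · have e1 : m ≤ min (L - z.2.2) (L - y.2.2) := le_min (min_le_left _ _) h
      have e2 : m ≤ min (L - y.2.2) (L - w.2.2) := le_min h (min_le_right _ _)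
      have f1 := mul_le_mul_of_nonneg_right e1 c1
      have f2 := mul_le_mul_of_nonneg_right e2 c2
      have f3 := mul_le_mul_of_nonneg_left h3 hm0
      have f4 : 0 ≤ D * |z.2.2 - y.2.2| := by positivity
      nlinarith
    · have g1 : L - y.2.2 ≤ L - z.2.2 := h.trans (min_le_left _ _)
      have g2 : L - y.2.2 ≤ L - w.2.2 := h.trans (min_le_right _ _)
      rw [min_eq_right g1, min_eq_left g2]
      have g3 : m ≤ (L - y.2.2) + |z.2.2 - y.2.2| := by
        have := min_le_left (L - z.2.2) (L - w.2.2)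
        have := neg_abs_le (z.2.2 - y.2.2)
        linarith
      have f1 := mul_le_mul_of_nonneg_right g3 c3
      have f2 := mul_le_mul_of_nonneg_left h3 (by linarith : 0 ≤ L - y.2.2)
      have f3 := mul_le_mul_of_nonneg_left hb b1
      nlinarith
  have p1 : 0 ≤ min (L - z.2.2) (L - y.2.2) * dist z.2.1 y.2.1 :=
    mul_nonneg (le_min (by linarith) (by linarith)) c1
  have p2 : 0 ≤ min (L - y.2.2) (L - w.2.2) * dist y.2.1 w.2.1 :=
    mul_nonneg (le_min (by linarith) (by linarith)) c2
  unfold rd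
  generalize min (L - z.2.2) (L - y.2.2) * dist z.2.1 y.2.1 = P at *
  generalize min (L - y.2.2) (L - w.2.2) * dist y.2.1 w.2.1 = Q at *
  have q : 0 ≤ D * (dist z.1 y.1 + P + dist y.1 w.1 + |y.2.2 - w.2.2| + Q) := by positivity
  nlinarith
end

/-! Scalar functions. -/

noncomputable def bF (m t : ℝ) : ℝ := min m (min 1 t / 8)
noncomputable def qF (L m t : ℝ) : ℝ := min (m - bF m t) (t / (8 * L))
noncomputable def hF (m t : ℝ) : ℝ := min 1 t * min 1 (8 * m)
noncomputable def aF (u : ℝ) : ℝ := min 1 (2 * u)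
noncomputable def vF (u : ℝ) : ℝ := max 0 (2 * u - 1)

lemma abs_min_le {a b c d : ℝ} : |min a b - min c d| ≤ |a - c| + |b - d| :=
  (abs_min_sub_min_le_max a b c d).trans
    (max_le (by linarith [abs_nonneg (b - d)]) (by linarith [abs_nonneg (a - c)]))

lemma abs_min_one_le {t t' : ℝ} : |min 1 t - min 1 t'| ≤ |t - t'| := by
  simpa using abs_min_le (a := 1) (b := t) (c := 1) (d := t')

lemma bF_lip (m t m' t' : ℝ) : |bF m t - bF m' t'| ≤ |m - m'| + |t - t'| := by
  unfold bF
  refine abs_min_le.trans ?_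
  have h := abs_min_one_le (t := t) (t' := t')
  have e : min 1 t / 8 - min 1 t' / 8 = (min 1 t - min 1 t') / 8 := by ring
  rw [e, abs_div, abs_of_pos (by norm_num : (0:ℝ) < 8)]
  linarith [abs_nonneg (t - t')]

lemma qF_lip {L : ℝ} (hL : 6 < L) (m t m' t' : ℝ) :
    |qF L m t - qF L m' t'| ≤ 2 * |m - m'| + 2 * |t - t'| := by
  unfold qF
  refine abs_min_le.trans ?_
  have h := bF_lip m t m' t'
  have e : m - bF m t - (m' - bF m' t') = (m - m') - (bF m t - bF m' t') := by ring
  have h1 := abs_sub (m - m') (bF m t - bF m' t')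
  have e2 : t / (8 * L) - t' / (8 * L) = (t - t') / (8 * L) := by ring
  have h2 : |t - t'| / (8 * L) ≤ |t - t'| := div_le_self (abs_nonneg _) (by linarith)
  rw [e, e2, abs_div, abs_of_pos (by linarith : (0:ℝ) < 8 * L)]
  linarith

lemma bF_nonneg {m t : ℝ} (hm : 0 ≤ m) (ht : 0 ≤ t) : 0 ≤ bF m t :=
  le_min hm (div_nonneg (le_min zero_le_one ht) (by norm_num))

lemma qF_nonneg {L m t : ℝ} (hL : 6 < L) (ht : 0 ≤ t) : 0 ≤ qF L m t :=
  le_min (by linarith [min_le_left m (min 1 t / 8), show bF m t = min m (min 1 t / 8) from rfl])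
    (div_nonneg ht (by linarith))

lemma bq_le_m {L m t : ℝ} : bF m t + qF L m t ≤ m := by
  have := min_le_left (m - bF m t) (t / (8 * L))
  unfold qF; linarith

lemma bq_le {L m t : ℝ} (hL : 6 < L) (htL : t ≤ L) : bF m t + qF L m t ≤ 1 / 4 := by
  have h1 : bF m t ≤ min 1 t / 8 := min_le_right _ _
  have h2 := min_le_left 1 t
  have h3 : qF L m t ≤ t / (8 * L) := min_le_right _ _
  have h4 : t / (8 * L) ≤ 1 / 8 := by
    rw [div_le_div_iff₀ (by linarith) (by norm_num)]; linarith
  linarith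

lemma q_t {L m t : ℝ} (hL : 6 < L) : 8 * L * qF L m t ≤ t := by
  have h3 : qF L m t ≤ t / (8 * L) := min_le_right _ _
  rw [le_div_iff₀ (by linarith)] at h3
  linarith

lemma bq_end {L m t : ℝ} (hL : 6 < L) : bF m t + qF L m t = m ∨ 8 * L * qF L m t = t := by
  unfold qF
  rcases min_choice (m - bF m t) (t / (8 * L)) with h | h
  · left; rw [h]; ring
  · right; rw [h]; field_simp

lemma bF_zero {m : ℝ} (hm : 0 ≤ m) : bF m 0 = 0 := by
  unfold bF; rw [min_eq_right zero_le_one]; simpa using hm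

lemma qF_zero {L m : ℝ} (hm : 0 ≤ m) : qF L m 0 = 0 := by
  unfold qF; rw [bF_zero hm]; simpa using hm

lemma hF_one {L m t : ℝ} (ht : 1 ≤ t) (hq : 0 < qF L m t) : hF m t = 1 := by
  have h1 : qF L m t ≤ m - bF m t := min_le_left _ _
  have h2 : bF m t < m := by linarith
  unfold bF at h2
  rw [min_eq_left ht] at h2
  have h3 : (1:ℝ) / 8 < m := by
    by_contra h; push Not at h
    rw [min_eq_left h] at h2; exact lt_irrefl _ h2
  unfold hF; rw [min_eq_left ht, min_eq_left (by linarith)]; norm_num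

lemma hF_mem {m t : ℝ} (hm : 0 ≤ m) (ht : 0 ≤ t) : 0 ≤ hF m t ∧ hF m t ≤ 1 := by
  have a1 : 0 ≤ min 1 t := le_min zero_le_one ht
  have a2 : 0 ≤ min 1 (8 * m) := le_min zero_le_one (by linarith)
  exact ⟨mul_nonneg a1 a2, mul_le_one₀ (min_le_left _ _) a2 (min_le_left _ _)⟩

lemma hF_le {m t : ℝ} (hm : 0 ≤ m) (ht : 0 ≤ t) : hF m t ≤ 8 * m := by
  have a1 : 0 ≤ min 1 t := le_min zero_le_one ht
  have a2 : 0 ≤ min 1 (8 * m) := le_min zero_le_one (by linarith)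
  have := mul_le_mul (min_le_left 1 t) (min_le_right 1 (8 * m)) a2 zero_le_one
  unfold hF; linarith

lemma mul_lip {a b a' b' : ℝ} (hb : |b| ≤ 1) (ha' : |a'| ≤ 1) :
    |a * b - a' * b'| ≤ |a - a'| + |b - b'| := by
  have e : a * b - a' * b' = (a - a') * b + a' * (b - b') := by ring
  rw [e]
  refine (abs_add_le _ _).trans ?_
  rw [abs_mul, abs_mul]
  have h1 := mul_le_mul_of_nonneg_left hb (abs_nonneg (a - a'))
  have h2 := mul_le_mul_of_nonneg_right ha' (abs_nonneg (b - b'))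
  linarith

lemma hF_lip {m t m' t' : ℝ} (hm : 0 ≤ m) (ht' : 0 ≤ t') :
    |hF m t - hF m' t'| ≤ 8 * |m - m'| + |t - t'| := by
  have a1 : 0 ≤ min 1 t' := le_min zero_le_one ht'
  have a2 : 0 ≤ min 1 (8 * m) := le_min zero_le_one (by linarith)
  have := mul_lip (a := min 1 t) (b := min 1 (8 * m)) (a' := min 1 t') (b' := min 1 (8 * m'))
    (by rw [abs_of_nonneg a2]; exact min_le_left _ _)
    (by rw [abs_of_nonneg a1]; exact min_le_left _ _)
  have h1 := abs_min_one_le (t := t) (t' := t')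
  have h2 := abs_min_one_le (t := 8 * m) (t' := 8 * m')
  have e : 8 * m - 8 * m' = 8 * (m - m') := by ring
  rw [e, abs_mul, abs_of_pos (by norm_num : (0:ℝ) < 8)] at h2
  unfold hF; linarith

lemma aF_lip (u u' : ℝ) : |aF u - aF u'| ≤ 2 * |u - u'| := by
  have h2 := abs_min_one_le (t := 2 * u) (t' := 2 * u')
  have e : 2 * u - 2 * u' = 2 * (u - u') := by ring
  rw [e, abs_mul, abs_of_pos (by norm_num : (0:ℝ) < 2)] at h2
  exact h2

lemma vF_lip (u u' : ℝ) : |vF u - vF u'| ≤ 2 * |u - u'| := by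
  have h2 := abs_max_sub_max_le_max 0 (2 * u - 1) 0 (2 * u' - 1)
  have e : 2 * u - 1 - (2 * u' - 1) = 2 * (u - u') := by ring
  rw [e, abs_mul, abs_of_pos (by norm_num : (0:ℝ) < 2)] at h2
  refine h2.trans (max_le (by simp) le_rfl)

lemma aF_mem {u : ℝ} (h0 : 0 ≤ u) : 0 ≤ aF u ∧ aF u ≤ 1 :=
  ⟨le_min zero_le_one (by linarith), min_le_left _ _⟩

lemma vF_mem {u : ℝ} (h1 : u ≤ 1) : 0 ≤ vF u ∧ vF u ≤ 1 :=
  ⟨le_max_left _ _, max_le zero_le_one (by linarith)⟩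

lemma aF_of_vF {u : ℝ} (h : 0 < vF u) : aF u = 1 := by
  unfold vF at h
  have : 0 < 2 * u - 1 := by
    by_contra h'; push Not at h'
    rw [max_eq_left h'] at h; exact lt_irrefl _ h
  exact min_eq_left (by linarith)

/-! The push of a point of the simplex toward its boundary. -/

noncomputable def push {N : ℕ} (σ : Finset (Fin N)) (θ : Fin N → ℝ) (e : ℝ) : Fin N → ℝ :=
  fun j => if j ∈ σ then (θ j - e / σ.card) / (1 - e) else θ j

lemma push_lip {N : ℕ} (σ : Finset (Fin N)) (hσ : σ.Nonempty) {θ θ' : Fin N → ℝ} {e e' : ℝ}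
    (he : e ≤ 1 / 4) (he' : e' ≤ 1 / 4) (he'0 : 0 ≤ e')
    (hθ' : ∀ j ∈ σ, e' / σ.card ≤ θ' j) (h1 : ∀ j, θ' j ≤ 1) :
    dist (push σ θ e) (push σ θ' e') ≤ 2 * dist θ θ' + 4 * |e - e'| := by
  rw [dist_pi_le_iff (by positivity)]
  intro j
  have hj := dist_le_pi_dist θ θ' j
  rw [Real.dist_eq] at hj ⊢
  unfold push
  have hc : (1:ℝ) ≤ σ.card := by exact_mod_cast hσ.card_pos
  split_ifs with hjσ
  · have h2 := hθ' j hjσ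
    have h3 : 0 ≤ e' / σ.card := by positivity
    have h4 := h1 j
    set α := θ j - e / σ.card with hα
    set α' := θ' j - e' / σ.card with hα'
    have hαα : |α - α'| ≤ dist θ θ' + |e - e'| := by
      have : α - α' = (θ j - θ' j) - (e - e') / σ.card := by rw [hα, hα']; ring
      rw [this]
      refine (abs_sub _ _).trans ?_
      rw [abs_div, Nat.abs_cast]
      exact add_le_add hj (div_le_self (abs_nonneg _) hc)
    have e1 : α / (1 - e) - α' / (1 - e')
        = ((α - α') + α' * (e - e') / (1 - e')) / (1 - e) := by
      have : 1 - e ≠ 0 := by linarith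
      have : 1 - e' ≠ 0 := by linarith
      field_simp; ring
    rw [e1, abs_div, abs_of_pos (by linarith : 0 < 1 - e), div_le_iff₀ (by linarith)]
    have e2 : |α' * (e - e') / (1 - e')| ≤ 4 / 3 * |e - e'| := by
      rw [abs_div, abs_mul, abs_of_nonneg (by linarith : 0 ≤ α'),
        abs_of_pos (by linarith : 0 < 1 - e'), div_le_iff₀ (by linarith)]
      have : α' * |e - e'| ≤ 1 * |e - e'| :=
        mul_le_mul_of_nonneg_right (by linarith) (abs_nonneg _)
      nlinarith [abs_nonneg (e - e')]
    have e3 := abs_add_le (α - α') (α' * (e - e') / (1 - e'))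
    have hd : 0 ≤ dist θ θ' := dist_nonneg
    nlinarith [abs_nonneg (e - e')]
  · have hd : 0 ≤ dist θ θ' := dist_nonneg
    linarith [abs_nonneg (e - e')]

lemma push_zero {N : ℕ} (σ : Finset (Fin N)) (θ : Fin N → ℝ) : push σ θ 0 = θ := by
  funext j; simp [push]

lemma push_props {N : ℕ} (σ : Finset (Fin N)) (hσ : σ.Nonempty) {θ : Fin N → ℝ} {e : ℝ}
    (he : e ≤ 1 / 4) (hθ : ∀ j ∈ σ, e / σ.card ≤ θ j) (hs : ∀ j, j ∉ σ → θ j = 0)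
    (h1 : ∑ j, θ j = 1) :
    (∀ j, push σ θ e j ∈ Icc (0:ℝ) 1) ∧ ∑ j, push σ θ e j = 1 ∧
      ∀ j, push σ θ e j ≠ 0 → j ∈ σ := by
  have hc : (0:ℝ) < σ.card := by exact_mod_cast hσ.card_pos
  have h0 : ∀ j, 0 ≤ push σ θ e j := by
    intro j; unfold push; split_ifs with h
    · exact div_nonneg (by linarith [hθ j h]) (by linarith)
    · rw [hs j h]
  have hsupp : ∀ j, j ∉ σ → push σ θ e j = 0 := by
    intro j hj; unfold push; rw [if_neg hj, hs j hj]
  have hsum : ∑ j, push σ θ e j = 1 := by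
    rw [← Finset.sum_subset (Finset.subset_univ σ) (fun j _ hj => hsupp j hj)]
    rw [← Finset.sum_subset (Finset.subset_univ σ) (fun j _ hj => hs j hj)] at h1
    have : ∀ j ∈ σ, push σ θ e j = (θ j - e / σ.card) / (1 - e) := by
      intro j hj; unfold push; rw [if_pos hj]
    rw [Finset.sum_congr rfl this, ← Finset.sum_div, Finset.sum_sub_distrib, h1]
    rw [Finset.sum_const, nsmul_eq_mul, mul_div_cancel₀ _ hc.ne']
    exact div_self (by linarith)
  refine ⟨fun j => ⟨h0 j, ?_⟩, hsum, fun j hj => by_contra fun h => hj (hsupp j h)⟩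
  rw [← hsum]
  exact Finset.single_le_sum (fun i _ => h0 i) (Finset.mem_univ j)

/-- Normalised distance to the boundary of the simplex. -/
noncomputable def mF {N : ℕ} (σ : Finset (Fin N)) (hσ : σ.Nonempty) (θ : Fin N → ℝ) : ℝ :=
  σ.card * σ.inf' hσ θ

lemma mF_nonneg {N : ℕ} (σ : Finset (Fin N)) (hσ : σ.Nonempty) {θ : Fin N → ℝ}
    (h : ∀ j, 0 ≤ θ j) : 0 ≤ mF σ hσ θ :=
  mul_nonneg (Nat.cast_nonneg _) (Finset.le_inf' _ _ fun j _ => h j)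

lemma mF_le {N : ℕ} (σ : Finset (Fin N)) (hσ : σ.Nonempty) {θ : Fin N → ℝ} {j : Fin N}
    (hj : j ∈ σ) : mF σ hσ θ ≤ σ.card * θ j :=
  mul_le_mul_of_nonneg_left (Finset.inf'_le _ hj) (Nat.cast_nonneg _)

lemma mF_lip {N : ℕ} (σ : Finset (Fin N)) (hσ : σ.Nonempty) (θ θ' : Fin N → ℝ) :
    |mF σ hσ θ - mF σ hσ θ'| ≤ σ.card * dist θ θ' := by
  have key : ∀ θ θ' : Fin N → ℝ, σ.inf' hσ θ - σ.inf' hσ θ' ≤ dist θ θ' := by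
    intro θ θ'
    obtain ⟨j, hj, hj'⟩ := Finset.exists_mem_eq_inf' hσ θ'
    have h1 := Finset.inf'_le θ hj
    have h2 := dist_le_pi_dist θ θ' j
    rw [Real.dist_eq] at h2
    have := le_abs_self (θ j - θ' j)
    rw [hj']; linarith
  unfold mF
  rw [← mul_sub, abs_mul, Nat.abs_cast]
  apply mul_le_mul_of_nonneg_left _ (Nat.cast_nonneg _)
  rw [abs_le]
  have := key θ θ'
  have := key θ' θ
  rw [dist_comm θ' θ] at this
  constructor <;> linarith

lemma mF_exists {N : ℕ} (σ : Finset (Fin N)) (hσ : σ.Nonempty) (θ : Fin N → ℝ) :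
    ∃ j ∈ σ, mF σ hσ θ = σ.card * θ j := by
  obtain ⟨j, hj, hj'⟩ := Finset.exists_mem_eq_inf' hσ θ
  exact ⟨j, hj, by rw [mF, hj']⟩

section
variable {M : Type*} [MetricSpace M] {N : ℕ} {L D : ℝ}

/-- Points of the open cell of `σ`. -/
def InCell (U : Fin N → Set M) (L : ℝ) (σ : Finset (Fin N)) (z : (Fin N → ℝ) × M × ℝ) : Prop :=
  z.1 ∈ NerveSet U ∧ (∀ j, z.1 j ≠ 0 ↔ j ∈ σ) ∧ z.2.2 ∈ Icc 0 L ∧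
    (z.2.2 = L ∨ z.2.1 ∈ ⋂ j ∈ σ, U j)

/-- The estimate of the cone part. -/
lemma cone_part {L D K : ℝ} (hL : 6 < L) (hK : 0 ≤ K) (hD0 : 0 ≤ D)
    {p p' dx dg dF : ℝ} {t t' : ℝ} (ht : t ∈ Icc 0 L) (ht' : t' ∈ Icc 0 L)
    (hp : 0 ≤ p) (hp' : 0 ≤ p') (hpt : p ≤ t) (hpt' : p' ≤ t')
    (hdx : 0 ≤ dx) (hdg : 0 ≤ dg) (hdFD : dF ≤ D) (hdF0 : 0 ≤ dF)
    (hdF : dF ≤ K * (dx + dg)) (hdxD : dx ≤ D)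
    (hcol : 1 ≤ t → 1 ≤ t' → 0 < p → 0 < p' → dF = 0) :
    min (L - (t - p)) (L - (t' - p')) * dF ≤
      (2 * K + K * D + L * D) * (|t - t'| + min (L - t) (L - t') * dx) + K * L * dg := by
  obtain ⟨h0, hl⟩ := ht
  obtain ⟨h0', hl'⟩ := ht'
  set m := min (L - t) (L - t') with hm
  set n := min (L - (t - p)) (L - (t' - p')) with hn
  have hm0 : 0 ≤ m := le_min (by linarith) (by linarith)
  have hn0 : 0 ≤ n := le_min (by linarith) (by linarith)
  have hnL : n ≤ L := (min_le_left _ _).trans (by linarith)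
  have hab := abs_nonneg (t - t')
  have hmd : 0 ≤ m * dx := mul_nonneg hm0 hdx
  have hKm : 0 ≤ K * (m * dx) := by positivity
  have hKD : 0 ≤ K * D := by positivity
  have hLD : 0 ≤ L * D := mul_nonneg (by linarith) hD0
  have hKg : 0 ≤ K * L * dg := mul_nonneg (mul_nonneg hK (by linarith)) hdg
  have main : n ≤ 2 * m + |t - t'| → n * dF ≤
      (2 * K + K * D + L * D) * (|t - t'| + m * dx) + K * L * dg := by
    intro h
    have a1 : n * dF ≤ n * (K * (dx + dg)) := mul_le_mul_of_nonneg_left hdF hn0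
    have a2 : K * dg * n ≤ K * dg * L := mul_le_mul_of_nonneg_left hnL (by positivity)
    have a3 : K * dx * n ≤ K * dx * (2 * m + |t - t'|) :=
      mul_le_mul_of_nonneg_left h (by positivity)
    have a4 : K * |t - t'| * dx ≤ K * |t - t'| * D :=
      mul_le_mul_of_nonneg_left hdxD (by positivity)
    have a5 : 0 ≤ K * |t - t'| := by positivity
    have a6 : 0 ≤ K * D * (m * dx) := by positivity
    have a7 : 0 ≤ L * D * (|t - t'| + m * dx) := mul_nonneg hLD (by positivity)
    nlinarith
  by_cases hbig : 1 ≤ |t - t'|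
  · have a1 : n * dF ≤ L * D := mul_le_mul hnL hdFD hdF0 (by linarith)
    have a2 : L * D * 1 ≤ L * D * |t - t'| := mul_le_mul_of_nonneg_left hbig hLD
    have a3 : 0 ≤ (2 * K + K * D) * (|t - t'| + m * dx) := by positivity
    have a4 : 0 ≤ L * D * (m * dx) := mul_nonneg hLD hmd
    nlinarith
  push Not at hbig
  rw [abs_lt] at hbig
  by_cases h2 : t ≤ 2 ∧ t' ≤ 2
  · apply main
    have : L - 2 ≤ m := le_min (by linarith) (by linarith)
    linarith
  have t1 : 1 ≤ t := by
    by_contra h; push Not at h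
    exact h2 ⟨by linarith, by linarith⟩
  have t1' : 1 ≤ t' := by
    by_contra h; push Not at h
    exact h2 ⟨by linarith, by linarith⟩
  have hmt : L - t ≤ m + |t - t'| := by
    rcases min_choice (L - t) (L - t') with h | h
    · rw [hm, h]; linarith
    · rw [hm, h]; linarith [neg_abs_le (t - t')]
  have hmt' : L - t' ≤ m + |t - t'| := by
    rcases min_choice (L - t) (L - t') with h | h
    · rw [hm, h]; linarith [le_abs_self (t - t')]
    · rw [hm, h]; linarith
  rcases hp.eq_or_lt with h | h
  · apply main
    have := min_le_left (L - (t - p)) (L - (t' - p'))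
    linarith
  rcases hp'.eq_or_lt with h' | h'
  · apply main
    have := min_le_right (L - (t - p)) (L - (t' - p'))
    linarith
  rw [hcol t1 t1' h h', mul_zero]
  have a3 : 0 ≤ (2 * K + K * D + L * D) * (|t - t'| + m * dx) :=
    mul_nonneg (by linarith [mul_nonneg hK hD0]) (by positivity)
  linarith

/-- Extraction of the contraction in a convenient form. -/
lemma exists_contr {V : Set M} (h : IsLipSDRToPoint V) :
    ∃ (f : M → ℝ → M) (p : M) (K : ℝ), 0 ≤ K ∧ p ∈ V ∧
      (∀ x a, f x a ∈ V) ∧ (∀ x ∈ V, f x 0 = x) ∧ (∀ x, f x 1 = p) ∧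
      (∀ x ∈ V, ∀ y ∈ V, ∀ a ∈ Icc (0:ℝ) 1, ∀ b ∈ Icc (0:ℝ) 1,
        dist (f x a) (f y b) ≤ K * (dist x y + |a - b|)) := by
  classical
  obtain ⟨p, F, K, hF, h0, h1, -⟩ := h
  refine ⟨fun x a => F (if hx : x ∈ V then ⟨x, hx⟩ else p, projIcc 0 1 zero_le_one a), p, K,
    K.2, p.2, fun x a => Subtype.coe_prop _, ?_, ?_, ?_⟩
  · intro x hx
    have : projIcc (0:ℝ) 1 zero_le_one 0 = 0 := projIcc_left _
    simp only [this, h0, dif_pos hx]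
  · intro x
    have : projIcc (0:ℝ) 1 zero_le_one 1 = 1 := projIcc_right _
    simp only [this, h1]
  · intro x hx y hy a ha b hb
    simp only [dif_pos hx, dif_pos hy, projIcc_of_mem zero_le_one ha,
      projIcc_of_mem zero_le_one hb]
    refine (hF.dist_le_mul (⟨x, hx⟩, ⟨a, ha⟩) (⟨y, hy⟩, ⟨b, hb⟩)).trans ?_
    apply mul_le_mul_of_nonneg_left _ K.2
    rw [Prod.dist_eq]
    apply max_le
    · exact le_add_of_nonneg_right (abs_nonneg _)
    · exact le_add_of_nonneg_left dist_nonneg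

set_option maxHeartbeats 2000000 in
lemma cell_lemma (U : Fin N → Set M) (hU : IsGoodCovering U) (hL : 6 < L)
    (hD : ∀ x y : M, dist x y ≤ D) (k : ℕ) (hk : 1 ≤ k) (σ : Finset (Fin N)) :
    ∃ (ψ : (Fin N → ℝ) × M × ℝ → ℝ → (Fin N → ℝ) × M × ℝ) (C : ℝ), 0 ≤ C ∧
      (σ.card = k + 1 → (∀ z, InCell U L σ z → ∀ u ∈ Icc (0:ℝ) 1,
        InCylK U L k (ψ z u) ∧ rd L (ψ z 0) z = 0 ∧
        (InDZeroK U k (ψ z 1) ∨ InCylK U L (k - 1) (ψ z 1)) ∧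
        (z.2.2 = 0 → rd L (ψ z u) z = 0) ∧
        (∀ j ∈ σ, rd L (ψ z u) z ≤ C * z.1 j)) ∧
      (∀ z w, InCell U L σ z → InCell U L σ w → ∀ u ∈ Icc (0:ℝ) 1, ∀ v ∈ Icc (0:ℝ) 1,
        rd L (ψ z u) (ψ w v) ≤ C * (rd L z w + |u - v|))) := by
  classical
  by_cases hcard : σ.card = k + 1
  swap
  · exact ⟨fun z _ => z, 0, le_rfl, fun h => absurd h hcard⟩
  have hσ : σ.Nonempty := Finset.card_pos.mp (by omega)
  by_cases hne : (⋂ j ∈ σ, U j).Nonempty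
  swap
  · refine ⟨fun z _ => z, 0, le_rfl, fun _ => ⟨fun z hz => ?_, fun z w hz => ?_⟩⟩ <;>
    · exfalso; apply hne
      have h := hz.1.2.2
      have e : {j | z.1 j ≠ 0} = (σ : Set (Fin N)) := by ext j; simpa using hz.2.1 j
      rw [e] at h; simpa using h
  obtain ⟨f, p, K, hK, hp, hfV, hf0, hf1, hflip⟩ := exists_contr (hU.2.2.2.2 σ hσ hne)
  set V := ⋂ j ∈ σ, U j with hV
  have hD0 : 0 ≤ D := dist_nonneg.trans (hD p p)
  have hL0 : 0 < L := by linarith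
  set n : ℝ := (σ.card : ℝ) with hn
  have hn1 : 1 ≤ n := by rw [hn]; exact_mod_cast hσ.card_pos
  -- replace junk representatives
  let xh : M → M := fun x => if x ∈ V then x else p
  have hxV : ∀ x, xh x ∈ V := by
    intro x; simp only [xh]; split_ifs with h
    · exact h
    · exact hp
  have hxe : ∀ x, x ∈ V → xh x = x := fun x h => if_pos h
  let mz : (Fin N → ℝ) × M × ℝ → ℝ := fun z => mF σ hσ z.1
  let bz : (Fin N → ℝ) × M × ℝ → ℝ := fun z => bF (mz z) z.2.2
  let qz : (Fin N → ℝ) × M × ℝ → ℝ := fun z => qF L (mz z) z.2.2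
  let hz' : (Fin N → ℝ) × M × ℝ → ℝ := fun z => hF (mz z) z.2.2
  let ψ : (Fin N → ℝ) × M × ℝ → ℝ → (Fin N → ℝ) × M × ℝ := fun z u =>
    (push σ z.1 (vF u * (bz z + qz z)), f (xh z.2.1) (aF u * hz' z),
      z.2.2 - vF u * (8 * L * qz z))
  -- basic facts for a point of the cell
  have hm0 : ∀ z, InCell U L σ z → 0 ≤ mz z := fun z hz => mF_nonneg σ hσ fun j => (hz.1.1 j).1
  have hb0 : ∀ z, InCell U L σ z → 0 ≤ bz z := fun z hz => bF_nonneg (hm0 z hz) hz.2.2.1.1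
  have hq0 : ∀ z, InCell U L σ z → 0 ≤ qz z := fun z hz => qF_nonneg hL hz.2.2.1.1
  have hbqm : ∀ z, bz z + qz z ≤ mz z := fun z => bq_le_m
  have hbq4 : ∀ z, InCell U L σ z → bz z + qz z ≤ 1 / 4 := fun z hz => bq_le hL hz.2.2.1.2
  have hqt : ∀ z, 8 * L * qz z ≤ z.2.2 := fun z => q_t hL
  have hh : ∀ z, InCell U L σ z → 0 ≤ hz' z ∧ hz' z ≤ 1 :=
    fun z hz => hF_mem (hm0 z hz) hz.2.2.1.1
  have hg : ∀ z, InCell U L σ z → ∀ u ∈ Icc (0:ℝ) 1, aF u * hz' z ∈ Icc (0:ℝ) 1 :=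
    fun z hz u hu => ⟨mul_nonneg (aF_mem hu.1).1 (hh z hz).1,
      mul_le_one₀ (aF_mem hu.1).2 (hh z hz).1 (hh z hz).2⟩
  have he : ∀ z, InCell U L σ z → ∀ u ∈ Icc (0:ℝ) 1,
      0 ≤ vF u * (bz z + qz z) ∧ vF u * (bz z + qz z) ≤ bz z + qz z := by
    intro z hz u hu
    have := add_nonneg (hb0 z hz) (hq0 z hz)
    exact ⟨mul_nonneg (vF_mem hu.2).1 this, mul_le_of_le_one_left this (vF_mem hu.2).2⟩
  have hs : ∀ z, InCell U L σ z → ∀ u ∈ Icc (0:ℝ) 1,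
      0 ≤ vF u * (8 * L * qz z) ∧ vF u * (8 * L * qz z) ≤ 8 * L * qz z := by
    intro z hz u hu
    have : 0 ≤ 8 * L * qz z := mul_nonneg (by linarith) (hq0 z hz)
    exact ⟨mul_nonneg (vF_mem hu.2).1 this, mul_le_of_le_one_left this (vF_mem hu.2).2⟩
  have hen : ∀ z, InCell U L σ z → ∀ u ∈ Icc (0:ℝ) 1, ∀ j ∈ σ,
      vF u * (bz z + qz z) / σ.card ≤ z.1 j := by
    intro z hz u hu j hj
    rw [div_le_iff₀ (by linarith)]
    have h1 := (he z hz u hu).2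
    have h2 := hbqm z
    have h3 : mz z ≤ n * z.1 j := mF_le σ hσ hj
    linarith
  have hpush : ∀ z, InCell U L σ z → ∀ u ∈ Icc (0:ℝ) 1,
      (∀ j, (ψ z u).1 j ∈ Icc (0:ℝ) 1) ∧ ∑ j, (ψ z u).1 j = 1 ∧
      ∀ j, (ψ z u).1 j ≠ 0 → j ∈ σ := by
    intro z hz u hu
    exact push_props σ hσ ((he z hz u hu).2.trans (hbq4 z hz)) (hen z hz u hu)
      (fun j hj => by_contra fun h => hj ((hz.2.1 j).1 h)) hz.1.2.1
  have hnerve : ∀ z, InCell U L σ z → ∀ u ∈ Icc (0:ℝ) 1, (ψ z u).1 ∈ NerveSet U := by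
    intro z hz u hu
    obtain ⟨a1, a2, a3⟩ := hpush z hz u hu
    refine ⟨a1, a2, ?_⟩
    obtain ⟨y, hy⟩ := hne
    refine ⟨y, ?_⟩
    rw [mem_iInter₂] at hy ⊢
    exact fun j hj => hy j (a3 j hj)
  have htI : ∀ z, InCell U L σ z → ∀ u ∈ Icc (0:ℝ) 1, (ψ z u).2.2 ∈ Icc 0 L := by
    intro z hz u hu
    have h1 := hs z hz u hu
    have h2 := hqt z
    have h3 := hz.2.2.1
    exact ⟨by simp only [ψ]; linarith, by simp only [ψ]; linarith [h3.2]⟩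
  -- bound with z itself when the junk is irrelevant
  have hxdist : ∀ z w, InCell U L σ z → InCell U L σ w →
      min (L - z.2.2) (L - w.2.2) * dist (xh z.2.1) (xh w.2.1)
        = min (L - z.2.2) (L - w.2.2) * dist z.2.1 w.2.1 := by
    intro z w hz hw
    have e1 : 0 ≤ L - z.2.2 := by linarith [hz.2.2.1.2]
    have e2 : 0 ≤ L - w.2.2 := by linarith [hw.2.2.1.2]
    rcases hz.2.2.2 with h | h
    · rw [h] at *; rw [sub_self, min_eq_left e2]; simp
    rcases hw.2.2.2 with h' | h'
    · rw [h'] at *; rw [sub_self, min_eq_right e1]; simp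
    rw [hxe _ h, hxe _ h']
  have hxself : ∀ z, InCell U L σ z → ∀ u ∈ Icc (0:ℝ) 1,
      min (L - (ψ z u).2.2) (L - z.2.2) * dist (ψ z u).2.1 z.2.1 ≤
        L * K * (aF u * hz' z) := by
    intro z hz u hu
    have e1 : 0 ≤ L - (ψ z u).2.2 := by linarith [(htI z hz u hu).2]
    have e2 : 0 ≤ L - z.2.2 := by linarith [hz.2.2.1.2]
    have e3 := (hg z hz u hu).1
    rcases hz.2.2.2 with h | h
    · rw [h, sub_self, min_eq_right e1, zero_mul]; positivity
    · have e4 : dist (ψ z u).2.1 z.2.1 ≤ K * (aF u * hz' z) := by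
        have := hflip (xh z.2.1) (hxV _) (xh z.2.1) (hxV _) _ (hg z hz u hu) 0 (by simp)
        rw [hf0 _ (hxV _), dist_self, zero_add, sub_zero, abs_of_nonneg e3] at this
        rw [hxe _ h] at this
        change dist (f (xh z.2.1) (aF u * hz' z)) z.2.1 ≤ _
        rwa [hxe _ h]
      have e5 : min (L - (ψ z u).2.2) (L - z.2.2) ≤ L :=
        (min_le_right _ _).trans (by linarith [hz.2.2.1.1])
      rw [mul_assoc]
      exact mul_le_mul e5 e4 dist_nonneg hL0.le
  have hself : ∀ z, InCell U L σ z → ∀ u ∈ Icc (0:ℝ) 1,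
      rd L (ψ z u) z ≤ 4 * (vF u * (bz z + qz z)) + vF u * (8 * L * qz z)
        + L * K * (aF u * hz' z) := by
    intro z hz u hu
    unfold rd
    have e1 := hxself z hz u hu
    have e2 : |(ψ z u).2.2 - z.2.2| = vF u * (8 * L * qz z) := by
      simp only [ψ]
      rw [sub_sub_cancel_left, abs_neg, abs_of_nonneg (hs z hz u hu).1]
    have e3 : dist (ψ z u).1 z.1 ≤ 4 * (vF u * (bz z + qz z)) := by
      have := push_lip σ hσ (θ := z.1) (θ' := z.1) (e := vF u * (bz z + qz z)) (e' := 0)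
        ((he z hz u hu).2.trans (hbq4 z hz)) (by norm_num) le_rfl
        (by intro j _; rw [zero_div]; exact (hz.1.1 j).1) (fun j => (hz.1.1 j).2)
      rw [push_zero, dist_self, mul_zero, zero_add, sub_zero,
        abs_of_nonneg (he z hz u hu).1] at this
      exact this
    linarith
  have hself0 : ∀ z, InCell U L σ z → ∀ u ∈ Icc (0:ℝ) 1, 0 ≤ rd L (ψ z u) z :=
    fun z hz u hu => rd_nonneg (htI z hz u hu).2 hz.2.2.1.2
  have hv0 : vF 0 = 0 := by unfold vF; norm_num
  have hv1 : vF 1 = 1 := by unfold vF; norm_num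
  have ha0 : aF 0 = 0 := by unfold aF; norm_num
  let C1 : ℝ := (4 + 8 * L + 8 * L * K) * n
  let C2 : ℝ := 2 * K + K * D + L * D
  let C3 : ℝ := 2 + 40 * n + 64 * L * n + K * L * (8 * n + 8) + C2 + 16 * L + 40
  have hC1 : 0 ≤ C1 := by positivity
  have hC2 : 0 ≤ C2 := by positivity
  have hC3 : 0 ≤ C3 := by positivity
  refine ⟨ψ, C1 + C3, by positivity, fun _ => ⟨fun z hz u hu => ⟨?_, ?_, ?_, ?_, ?_⟩, ?_⟩⟩
  · exact ⟨hnerve z hz u hu, htI z hz u hu, σ, hcard.le, (hpush z hz u hu).2.2, hne,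
      Or.inr (hfV _ _)⟩
  · have := hself z hz 0 (by simp)
    rw [hv0, ha0] at this
    exact le_antisymm (by simpa using this) (hself0 z hz 0 (by simp))
  · have h1 : (1:ℝ) ∈ Icc (0:ℝ) 1 := by simp
    rcases bq_end (m := mz z) (t := z.2.2) hL with h | h
    · right
      obtain ⟨j, hj, hj'⟩ := mF_exists σ hσ z.1
      have hzero : (ψ z 1).1 j = 0 := by
        simp only [ψ, push, hv1, one_mul, if_pos hj]
        have : bz z + qz z = σ.card * z.1 j := by rw [← hj']; exact h
        rw [this, mul_div_cancel_left₀ _ (by linarith : (σ.card : ℝ) ≠ 0)]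
        simp
      have hsub : ∀ i, (ψ z 1).1 i ≠ 0 → i ∈ σ.erase j := fun i hi =>
        Finset.mem_erase.2 ⟨fun hij => hi (hij ▸ hzero), (hpush z hz 1 h1).2.2 i hi⟩
      have hVsub : ∀ y ∈ V, y ∈ ⋂ i ∈ σ.erase j, U i := by
        intro y hy
        rw [hV, mem_iInter₂] at hy
        rw [mem_iInter₂]
        exact fun i hi => hy i (Finset.mem_of_mem_erase hi)
      refine ⟨hnerve z hz 1 h1, htI z hz 1 h1, σ.erase j, ?_, hsub, ?_, Or.inr ?_⟩
      · rw [Finset.card_erase_of_mem hj]; omega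
      · obtain ⟨y, hy⟩ := hne
        exact ⟨y, hVsub y hy⟩
      · exact hVsub _ (hfV _ _)
    · left
      have hsup := (hpush z hz 1 h1).2.2
      refine ⟨hnerve z hz 1 h1, ?_, ?_, ?_⟩
      · rw [← hcard, ← Set.ncard_coe_finset]
        exact Set.ncard_le_ncard (fun j hj => hsup j hj) (Finset.finite_toSet _)
      · simp only [ψ, hv1, one_mul]
        have : 8 * L * qz z = z.2.2 := h
        linarith
      · have hy : (ψ z 1).2.1 ∈ V := hfV _ _
        rw [hV, mem_iInter₂] at hy
        rw [mem_iInter₂]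
        exact fun i hi => hy i (hsup i hi)
  · intro ht
    have h1 : bz z = 0 := by simp only [bz]; rw [ht]; exact bF_zero (hm0 z hz)
    have h2 : qz z = 0 := by simp only [qz]; rw [ht]; exact qF_zero (hm0 z hz)
    have h3 : hz' z = 0 := by simp only [hz']; rw [ht]; simp [hF]
    have := hself z hz u hu
    rw [h1, h2, h3] at this
    exact le_antisymm (by simpa using this) (hself0 z hz u hu)
  · intro j hj
    have h1 := hself z hz u hu
    have h2 := (he z hz u hu).2
    have h3 := (hs z hz u hu).2
    have h4 : aF u * hz' z ≤ hz' z := mul_le_of_le_one_left (hh z hz).1 (aF_mem hu.1).2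
    have h5 : hz' z ≤ 8 * mz z := hF_le (hm0 z hz) hz.2.2.1.1
    have h6 : mz z ≤ n * z.1 j := mF_le σ hσ hj
    have h7 := hbqm z
    have h8 : qz z ≤ mz z := by linarith [hb0 z hz]
    have h9 : L * K * (aF u * hz' z) ≤ L * K * (8 * mz z) :=
      mul_le_mul_of_nonneg_left (h4.trans h5) (by positivity)
    have h10 : 8 * L * qz z ≤ 8 * L * mz z := mul_le_mul_of_nonneg_left h8 (by positivity)
    have h11 : (4 + 8 * L + 8 * L * K) * mz z ≤ (4 + 8 * L + 8 * L * K) * (n * z.1 j) :=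
      mul_le_mul_of_nonneg_left h6 (by positivity)
    have h12 : 0 ≤ C3 * z.1 j := mul_nonneg hC3 (hz.1.1 j).1
    have h13 : (C1 + C3) * z.1 j
        = (4 + 8 * L + 8 * L * K) * (n * z.1 j) + C3 * z.1 j := by simp only [C1]; ring
    rw [h13]
    nlinarith
  · intro z w hz hw u hu v hv
    have hdθ : 0 ≤ dist z.1 w.1 := dist_nonneg
    have hdt := abs_nonneg (z.2.2 - w.2.2)
    have hdu := abs_nonneg (u - v)
    have hM : |mz z - mz w| ≤ n * dist z.1 w.1 := mF_lip σ hσ z.1 w.1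
    have hB : |bz z - bz w| ≤ |mz z - mz w| + |z.2.2 - w.2.2| := bF_lip _ _ _ _
    have hQ : |qz z - qz w| ≤ 2 * |mz z - mz w| + 2 * |z.2.2 - w.2.2| := qF_lip hL _ _ _ _
    have hH : |hz' z - hz' w| ≤ 8 * |mz z - mz w| + |z.2.2 - w.2.2| :=
      hF_lip (hm0 z hz) hw.2.2.1.1
    have hA := aF_lip u v
    have hVv := vF_lip u v
    have hbq0 : ∀ z, InCell U L σ z → 0 ≤ bz z + qz z :=
      fun z hz => add_nonneg (hb0 z hz) (hq0 z hz)
    have vabs : |vF v| ≤ 1 := by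
      rw [abs_of_nonneg (vF_mem hv.2).1]; exact (vF_mem hv.2).2
    -- first part
    have E1 : |vF u * (bz z + qz z) - vF v * (bz w + qz w)| ≤
        2 * |u - v| + (3 * n * dist z.1 w.1 + 3 * |z.2.2 - w.2.2|) := by
      have h1 := mul_lip (a := vF u) (b := bz z + qz z) (a' := vF v) (b' := bz w + qz w)
        (by rw [abs_of_nonneg (hbq0 z hz)]; linarith [hbq4 z hz]) vabs
      have h2 : |bz z + qz z - (bz w + qz w)| ≤ |bz z - bz w| + |qz z - qz w| := by
        have : bz z + qz z - (bz w + qz w) = (bz z - bz w) + (qz z - qz w) := by ring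
        rw [this]; exact abs_add_le _ _
      linarith
    have P1 : dist (ψ z u).1 (ψ w v).1 ≤
        2 * dist z.1 w.1 + 4 * |vF u * (bz z + qz z) - vF v * (bz w + qz w)| :=
      push_lip σ hσ ((he z hz u hu).2.trans (hbq4 z hz)) ((he w hw v hv).2.trans (hbq4 w hw))
        (he w hw v hv).1 (hen w hw v hv) (fun j => (hw.1.1 j).2)
    -- second part
    have E2 : |vF u * qz z - vF v * qz w| ≤
        2 * |u - v| + (2 * n * dist z.1 w.1 + 2 * |z.2.2 - w.2.2|) := by
      have h1 := mul_lip (a := vF u) (b := qz z) (a' := vF v) (b' := qz w)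
        (by rw [abs_of_nonneg (hq0 z hz)]; linarith [hbq4 z hz, hb0 z hz]) vabs
      linarith
    have P2 : |(ψ z u).2.2 - (ψ w v).2.2| ≤ |z.2.2 - w.2.2| +
        8 * L * (2 * |u - v| + (2 * n * dist z.1 w.1 + 2 * |z.2.2 - w.2.2|)) := by
      have : (ψ z u).2.2 - (ψ w v).2.2
          = (z.2.2 - w.2.2) - 8 * L * (vF u * qz z - vF v * qz w) := by
        simp only [ψ]; ring
      rw [this]
      refine (abs_sub _ _).trans ?_
      rw [abs_mul, abs_of_pos (by positivity : 0 < 8 * L)]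
      have := mul_le_mul_of_nonneg_left E2 (by positivity : 0 ≤ 8 * L)
      linarith
    -- third part
    have E3 : |aF u * hz' z - aF v * hz' w| ≤
        2 * |u - v| + (8 * n * dist z.1 w.1 + |z.2.2 - w.2.2|) := by
      have h1 := mul_lip (a := aF u) (b := hz' z) (a' := aF v) (b' := hz' w)
        (by rw [abs_of_nonneg (hh z hz).1]; exact (hh z hz).2)
        (by rw [abs_of_nonneg (aF_mem hv.1).1]; exact (aF_mem hv.1).2)
      linarith
    have hcollapse : ∀ z, InCell U L σ z → ∀ u ∈ Icc (0:ℝ) 1, 1 ≤ z.2.2 →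
        0 < vF u * (8 * L * qz z) → (ψ z u).2.1 = p := by
      intro z hz u hu h1 h2
      have h3 : 0 < vF u := by
        rcases (vF_mem hu.2).1.eq_or_lt with h | h
        · rw [← h, zero_mul] at h2; exact absurd h2 (lt_irrefl _)
        · exact h
      have h4 : 0 < qz z := by
        rcases (hq0 z hz).eq_or_lt with h | h
        · rw [← h] at h2; simp at h2
        · exact h
      have h5 : hz' z = 1 := hF_one h1 h4
      simp only [ψ]
      rw [aF_of_vF h3, h5, one_mul, hf1]
    have P3 := cone_part (L := L) (D := D) (K := K) hL hK hD0
      (p := vF u * (8 * L * qz z)) (p' := vF v * (8 * L * qz w))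
      (dx := dist (xh z.2.1) (xh w.2.1)) (dg := |aF u * hz' z - aF v * hz' w|)
      (dF := dist (ψ z u).2.1 (ψ w v).2.1) hz.2.2.1 hw.2.2.1 (hs z hz u hu).1 (hs w hw v hv).1
      ((hs z hz u hu).2.trans (hqt z)) ((hs w hw v hv).2.trans (hqt w))
      dist_nonneg (abs_nonneg _) (hD _ _) dist_nonneg
      (hflip _ (hxV _) _ (hxV _) _ (hg z hz u hu) _ (hg w hw v hv)) (hD _ _)
      (by
        intro h1 h2 h3 h4
        rw [hcollapse z hz u hu h1 h3, hcollapse w hw v hv h2 h4, dist_self])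
    rw [hxdist z w hz hw] at P3
    have P3' : min (L - (ψ z u).2.2) (L - (ψ w v).2.2) * dist (ψ z u).2.1 (ψ w v).2.1 ≤
      C2 * (|z.2.2 - w.2.2| + min (L - z.2.2) (L - w.2.2) * dist z.2.1 w.2.1) +
        K * L * |aF u * hz' z - aF v * hz' w| := P3
    have hKL : 0 ≤ K * L := by positivity
    have E3' := mul_le_mul_of_nonneg_left E3 hKL
    have hx0 : 0 ≤ min (L - z.2.2) (L - w.2.2) * dist z.2.1 w.2.1 :=
      mul_nonneg (le_min (by linarith [hz.2.2.1.2]) (by linarith [hw.2.2.1.2])) dist_nonneg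
    have hR : rd L z w = dist z.1 w.1 + |z.2.2 - w.2.2| +
      min (L - z.2.2) (L - w.2.2) * dist z.2.1 w.2.1 := rfl
    have hS : rd L (ψ z u) (ψ w v) ≤
        2 * dist z.1 w.1 + 4 * (2 * |u - v| + (3 * n * dist z.1 w.1 + 3 * |z.2.2 - w.2.2|))
        + (|z.2.2 - w.2.2| +
        8 * L * (2 * |u - v| + (2 * n * dist z.1 w.1 + 2 * |z.2.2 - w.2.2|)))
        + (C2 * (|z.2.2 - w.2.2| + min (L - z.2.2) (L - w.2.2) * dist z.2.1 w.2.1) +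
        K * L * (2 * |u - v| + (8 * n * dist z.1 w.1 + |z.2.2 - w.2.2|))) := by
      unfold rd
      linarith
    refine hS.trans ?_
    rw [hR]
    generalize min (L - z.2.2) (L - w.2.2) * dist z.2.1 w.2.1 = X at *
    generalize dist z.1 w.1 = T at *
    generalize |z.2.2 - w.2.2| = S at *
    generalize |u - v| = W at *
    have hn0 : 0 ≤ n := by linarith
    have k1 : 0 ≤ C1 * (T + S + X + W) := by positivity
    have k2 : (C1 + C3) * (T + S + X + W) - (2 * T + 4 * (2 * W + (3 * n * T + 3 * S))
        + (S + 8 * L * (2 * W + (2 * n * T + 2 * S)))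
        + (C2 * (S + X) + K * L * (2 * W + (8 * n * T + S))))
      = C1 * (T + S + X + W)
        + T * (28 * n + 48 * L * n + K * L * 8 + C2 + 16 * L + 40)
        + S * (29 + 40 * n + 64 * L * n + K * L * (8 * n + 7))
        + X * (2 + 40 * n + 64 * L * n + K * L * (8 * n + 8) + 16 * L + 40)
        + W * (34 + 40 * n + 64 * L * n + K * L * (8 * n + 6) + C2) := by
      simp only [C3]; ring
    have k3 : 0 ≤ C1 * (T + S + X + W)
        + T * (28 * n + 48 * L * n + K * L * 8 + C2 + 16 * L + 40)
        + S * (29 + 40 * n + 64 * L * n + K * L * (8 * n + 7))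
        + X * (2 + 40 * n + 64 * L * n + K * L * (8 * n + 8) + 16 * L + 40)
        + W * (34 + 40 * n + 64 * L * n + K * L * (8 * n + 6) + C2) := by positivity
    linarith
end

end SkelCyl

/-- For a compact metric space with a finite good covering and `L > 6`,
for each `k ≥ 1` there is a Lipschitz strong deformation retraction `Φ^k` of `M(p^k)` onto
`(D^k × {0}) ∪ M(p^{k−1})`.  Everything is expressed on representatives, with equality in
`M(p^k)` expressed as vanishing of `cylDist`. -/
theorem skeleton_cylinder_lipSDR {M : Type*} [MetricSpace M] [CompactSpace M]
    {N : ℕ} (U : Fin N → Set M) (hU : IsGoodCovering U) (L : ℝ) (hL : 6 < L)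
    (k : ℕ) (hk : 1 ≤ k) :
    ∃ (Φ : ((Fin N → ℝ) × M × ℝ) × unitInterval → (Fin N → ℝ) × M × ℝ) (K : NNReal),
      (∀ z, InCylK U L k z → ∀ t : unitInterval, InCylK U L k (Φ (z, t))) ∧
      (∀ z w, InCylK U L k z → InCylK U L k w → ∀ s t : unitInterval,
        cylDist L (Φ (z, s)) (Φ (w, t)) ≤ K * max (cylDist L z w) (dist s t)) ∧
      (∀ z, InCylK U L k z → cylDist L (Φ (z, 0)) z = 0) ∧
      (∀ z, InCylK U L k z →
        (InDZeroK U k (Φ (z, 1)) ∨ InCylK U L (k - 1) (Φ (z, 1)))) ∧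
      (∀ z, InCylK U L k z → (InDZeroK U k z ∨ InCylK U L (k - 1) z) →
        ∀ t : unitInterval, cylDist L (Φ (z, t)) z = 0) := by
  classical
  obtain ⟨D, hD1, hD⟩ : ∃ D : ℝ, 1 ≤ D ∧ ∀ x y : M, dist x y ≤ D := by
    obtain ⟨C, hC⟩ := Metric.isBounded_iff.1 (isCompact_univ (X := M)).isBounded
    exact ⟨max 1 C, le_max_left _ _, fun x y =>
      (hC (mem_univ x) (mem_univ y)).trans (le_max_right _ _)⟩
  choose ψ C hC0 hψ using SkelCyl.cell_lemma (L := L) U hU hL hD k hk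
  let supp : ((Fin N → ℝ) × M × ℝ) → Finset (Fin N) :=
    fun z => Finset.univ.filter (fun j => z.1 j ≠ 0)
  have hsupp : ∀ z j, z.1 j ≠ 0 ↔ j ∈ supp z := fun z j => by simp [supp]
  let Ct : ℝ := ∑ σ, C σ
  have hCt : ∀ σ, C σ ≤ Ct := fun σ =>
    Finset.single_le_sum (fun i _ => hC0 i) (Finset.mem_univ σ)
  have hCt0 : 0 ≤ Ct := Finset.sum_nonneg fun i _ => hC0 i
  -- the support of a point has at most k+1 elements, and the point lies in the cell of its support
  have hsle : ∀ k' z, InCylK U L k' z → (supp z).card ≤ k' + 1 := by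
    rintro k' z ⟨-, -, s, hs, hss, -⟩
    exact (Finset.card_le_card fun j hj => hss j ((hsupp z j).2 hj)).trans hs
  have hcell : ∀ z, InCylK U L k z → SkelCyl.InCell U L (supp z) z := by
    rintro z ⟨h1, h2, s, hs, hss, -, h3⟩
    refine ⟨h1, hsupp z, h2, h3.imp id fun h => ?_⟩
    rw [mem_iInter₂] at h ⊢
    exact fun j hj => h j (hss j ((hsupp z j).2 hj))
  have hlow : ∀ z, InCylK U L k z → (supp z).card ≠ k + 1 → InCylK U L (k - 1) z := by
    intro z hz hne
    have h1 := hsle k z hz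
    have h2 := hcell z hz
    refine ⟨h2.1, h2.2.2.1, supp z, by omega, fun j => (hsupp z j).1, ?_, h2.2.2.2⟩
    obtain ⟨y, hy⟩ := h2.1.2.2
    refine ⟨y, ?_⟩
    rw [mem_iInter₂] at hy ⊢
    exact fun j hj => hy j ((hsupp z j).2 hj)
  let Φ : ((Fin N → ℝ) × M × ℝ) × unitInterval → (Fin N → ℝ) × M × ℝ := fun a =>
    if (supp a.1).card = k + 1 then ψ (supp a.1) a.1 a.2 else a.1
  have hΦ1 : ∀ z u, (supp z).card = k + 1 → Φ (z, u) = ψ (supp z) z u := fun z u h => if_pos h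
  have hΦ2 : ∀ z u, (supp z).card ≠ k + 1 → Φ (z, u) = z := fun z u h => if_neg h
  have hΦmem : ∀ z, InCylK U L k z → ∀ t : unitInterval, InCylK U L k (Φ (z, t)) := by
    intro z hz t
    by_cases h : (supp z).card = k + 1
    · rw [hΦ1 z t h]; exact ((hψ _ h).1 z (hcell z hz) t t.2).1
    · rw [hΦ2 z t h]; exact hz
  have hrefl : ∀ z : (Fin N → ℝ) × M × ℝ, SkelCyl.rd L z z = 0 := fun z => by
    simp [SkelCyl.rd]
  -- displacement
  have hdisp : ∀ z w, InCylK U L k z → InCylK U L k w → supp z ≠ supp w → 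
      (supp w).card ≤ (supp z).card → ∀ t : unitInterval,
      SkelCyl.rd L (Φ (z, t)) z ≤ Ct * SkelCyl.rd L z w := by
    intro z w hz hw hne hle t
    have hr0 := SkelCyl.rd_nonneg hz.2.1.2 hw.2.1.2
    by_cases h : (supp z).card = k + 1
    · rw [hΦ1 z t h]
      obtain ⟨j, hj, hj'⟩ : ∃ j ∈ supp z, j ∉ supp w := by
        by_contra hcon; push Not at hcon
        exact hne (Finset.eq_of_subset_of_card_le hcon hle)
      have h1 := ((hψ _ h).1 z (hcell z hz) t t.2).2.2.2.2 j hj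
      have h2 : w.1 j = 0 := by by_contra hc; exact hj' ((hsupp w j).1 hc)
      have h3 : z.1 j ≤ SkelCyl.rd L z w := by
        have a1 := dist_le_pi_dist z.1 w.1 j
        rw [h2, Real.dist_eq, sub_zero] at a1
        have a2 := le_abs_self (z.1 j)
        have a3 : 0 ≤ min (L - z.2.2) (L - w.2.2) * dist z.2.1 w.2.1 :=
          mul_nonneg (le_min (by linarith [hz.2.1.2]) (by linarith [hw.2.1.2])) dist_nonneg
        unfold SkelCyl.rd
        linarith [abs_nonneg (z.2.2 - w.2.2)]
      have h4 : C (supp z) * z.1 j ≤ Ct * SkelCyl.rd L z w :=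
        mul_le_mul (hCt _) h3 (hz.1.1 j).1 hCt0
      linarith
    · rw [hΦ2 z t h, hrefl]; positivity
  have hdisp' : ∀ z w, InCylK U L k z → InCylK U L k w → supp z ≠ supp w → ∀ t : unitInterval,
      SkelCyl.rd L (Φ (z, t)) z ≤ Ct * SkelCyl.rd L z w := by
    intro z w hz hw hne t
    by_cases h : (supp z).card = k + 1
    · exact hdisp z w hz hw hne (by rw [h]; exact hsle k w hw) t
    · have hr0 := SkelCyl.rd_nonneg hz.2.1.2 hw.2.1.2
      rw [hΦ2 z t h, hrefl]; positivity
  let Q : ℝ := (1 + D) * ((1 + D) * (Ct + 1) + Ct) + Ct + 1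
  have hQ0 : 0 ≤ Q := by positivity
  have hlip : ∀ z w, InCylK U L k z → InCylK U L k w → ∀ s t : unitInterval,
      SkelCyl.rd L (Φ (z, s)) (Φ (w, t)) ≤ Q * (SkelCyl.rd L z w + dist s t) := by
    intro z w hz hw s t
    have hr0 := SkelCyl.rd_nonneg hz.2.1.2 hw.2.1.2
    have hd0 : 0 ≤ dist s t := dist_nonneg
    have hp : 0 ≤ (1 + D) * ((1 + D) * (Ct + 1) + Ct) := by positivity
    by_cases hs : supp z = supp w
    · by_cases h : (supp z).card = k + 1
      · rw [hΦ1 z s h, hΦ1 w t (hs ▸ h), ← hs]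
        have h1 := (hψ _ h).2 z w (hcell z hz) (hs ▸ hcell w hw) s s.2 t t.2
        have h2 : dist s t = |(s : ℝ) - t| := by rw [Subtype.dist_eq, Real.dist_eq]
        rw [h2] at *
        refine h1.trans (mul_le_mul_of_nonneg_right ?_ (by positivity))
        linarith [hCt (supp z)]
      · rw [hΦ2 z s h, hΦ2 w t (hs ▸ h)]
        have : 1 * (SkelCyl.rd L z w + dist s t) ≤ Q * (SkelCyl.rd L z w + dist s t) :=
          mul_le_mul_of_nonneg_right (by linarith) (by positivity)
        linarith
    · have h1 := hdisp' z w hz hw hs s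
      have h2 := hdisp' w z hw hz (Ne.symm hs) t
      rw [SkelCyl.rd_comm w z, SkelCyl.rd_comm _ w] at h2
      have bz := (hΦmem z hz s).2.1.2
      have bw := (hΦmem w hw t).2.1.2
      have h3 := SkelCyl.rd_tri hD bz hz.2.1.2 hw.2.1.2
      have h4 := SkelCyl.rd_tri hD bz hw.2.1.2 bw
      have hD' : 0 ≤ 1 + D := by linarith
      have h5 : (1 + D) * (SkelCyl.rd L (Φ (z, s)) z + SkelCyl.rd L z w) ≤
          (1 + D) * (Ct * SkelCyl.rd L z w + SkelCyl.rd L z w) :=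
        mul_le_mul_of_nonneg_left (by linarith) hD'
      have h6 : (1 + D) * (SkelCyl.rd L (Φ (z, s)) w + SkelCyl.rd L w (Φ (w, t))) ≤
          (1 + D) * ((1 + D) * (Ct * SkelCyl.rd L z w + SkelCyl.rd L z w)
            + Ct * SkelCyl.rd L z w) :=
        mul_le_mul_of_nonneg_left (by linarith) hD'
      have h7 : Q * (SkelCyl.rd L z w + dist s t) =
          (1 + D) * ((1 + D) * (Ct * SkelCyl.rd L z w + SkelCyl.rd L z w)
            + Ct * SkelCyl.rd L z w) + (Ct + 1) * SkelCyl.rd L z w + Q * dist s t := by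
        simp only [Q]; ring
      have h8 : 0 ≤ (Ct + 1) * SkelCyl.rd L z w + Q * dist s t := by positivity
      linarith
  have hKK : 0 ≤ (1 + D) * (Q * (4 * D + 1)) := by positivity
  refine ⟨Φ, ⟨(1 + D) * (Q * (4 * D + 1)), hKK⟩, hΦmem, ?_, ?_, ?_, ?_⟩
  · intro z w hz hw s t
    have h1 := SkelCyl.cyl_le hD (hΦmem z hz s).2.1.2 (hΦmem w hw t).2.1.2
    have h2 := hlip z w hz hw s t
    have h3 := SkelCyl.le_cyl hD hD1 hz.2.1.2 hw.2.1.2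
    have h4 : SkelCyl.rd L z w + dist s t ≤ (4 * D + 1) * max (cylDist L z w) (dist s t) := by
      have := le_max_left (cylDist L z w) (dist s t)
      have := le_max_right (cylDist L z w) (dist s t)
      nlinarith
    have hD' : 0 ≤ 1 + D := by linarith
    have h5 := mul_le_mul_of_nonneg_left (h2.trans (mul_le_mul_of_nonneg_left h4 hQ0)) hD'
    refine h1.trans (h5.trans (le_of_eq ?_))
    change _ = (1 + D) * (Q * (4 * D + 1)) * max (cylDist L z w) (dist s t)
    ring
  · intro z hz
    apply SkelCyl.cyl_eq_zero hD (hΦmem z hz 0).2.1.2 hz.2.1.2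
    by_cases h : (supp z).card = k + 1
    · rw [hΦ1 z 0 h]
      exact ((hψ _ h).1 z (hcell z hz) 0 (by simp)).2.1
    · rw [hΦ2 z 0 h, hrefl]
  · intro z hz
    by_cases h : (supp z).card = k + 1
    · rw [hΦ1 z 1 h]
      exact ((hψ _ h).1 z (hcell z hz) 1 (by simp)).2.2.1
    · rw [hΦ2 z 1 h]; exact Or.inr (hlow z hz h)
  · intro z hz hor t
    apply SkelCyl.cyl_eq_zero hD (hΦmem z hz t).2.1.2 hz.2.1.2
    by_cases h : (supp z).card = k + 1
    · rw [hΦ1 z t h]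
      rcases hor with h' | h'
      · exact ((hψ _ h).1 z (hcell z hz) t t.2).2.2.2.1 h'.2.2.1
      · have := hsle _ z h'
        omega
    · rw [hΦ2 z t h, hrefl]
end

section
/- Let M be a compact metric space with a finite good covering 𝒰 = {U_1,…,U_N}, with chosen centers p_j ∈ U_j, and let Θ : M → |𝒩_𝒰|, Θ(x) = (ξ_1(x),…,ξ_N(x)), be the induced Lipschitz homotopy equivalence. Then there exists a Lipschitz homotopy inverse ζ : |𝒩_𝒰| → M of Θ such that for every θ ∈ |𝒩_𝒰| one has ζ(θ) ∈ ⋃_{j ∈ supp θ} U_j; equivalently, if θ lies in the open simplex of 𝒩_𝒰 spanned by U_{j_0},…,U_{j_k}, then ζ(θ) ∈ U_{j_0} ∪ ⋯ ∪ U_{j_k}. -/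
open Metric Set

/-- Two maps between metric spaces are *Lipschitz homotopic* if there is a Lipschitz map
`H : X × [0,1] → Y` with `H(·,0) = f` and `H(·,1) = g`. -/
def LipHomotopic {X Y : Type*} [MetricSpace X] [MetricSpace Y] (f g : X → Y) : Prop :=
  ∃ (H : X × unitInterval → Y) (K : NNReal), LipschitzWith K H ∧
    (∀ x, H (x, 0) = f x) ∧ (∀ x, H (x, 1) = g x)

/-- Two metric spaces are *Lipschitz homotopy equivalent* if there are Lipschitz maps
`f : X → Y` and `g : Y → X` with `g ∘ f` and `f ∘ g` Lipschitz homotopic to identities. -/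
def LipHomotopyEquiv (X Y : Type*) [MetricSpace X] [MetricSpace Y] : Prop :=
  ∃ (f : X → Y) (g : Y → X) (Kf Kg : NNReal),
    LipschitzWith Kf f ∧ LipschitzWith Kg g ∧
      LipHomotopic (g ∘ f) id ∧ LipHomotopic (f ∘ g) id

/-- `q` is a *center* of `V`: it belongs to `V` and `V` admits a Lipschitz strong
deformation retraction to `q`. -/
def IsCenter {X : Type*} [MetricSpace X] (V : Set X) (q : X) : Prop :=
  ∃ p : V, (p : X) = q ∧ ∃ (F : V × unitInterval → V) (K : NNReal),
    LipschitzWith K F ∧ (∀ x, F (x, 0) = x) ∧ (∀ x, F (x, 1) = p) ∧ (∀ t, F (p, t) = p)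


/-! ### Real valued Lipschitz functions -/

def Lp {X : Type*} [MetricSpace X] (f : X → ℝ) : Prop :=
  ∃ C : ℝ, 0 ≤ C ∧ ∀ x y, |f x - f y| ≤ C * dist x y

section Lp
variable {X : Type*} [MetricSpace X]

lemma Lp.const (a : ℝ) : Lp (fun _ : X => a) := ⟨0, le_rfl, fun x y => by simp⟩

lemma Lp.add {f g : X → ℝ} (hf : Lp f) (hg : Lp g) : Lp (fun x => f x + g x) := by
  obtain ⟨C, hC, hf⟩ := hf
  obtain ⟨D, hD, hg⟩ := hg
  refine ⟨C + D, by positivity, fun x y => ?_⟩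
  have h1 := hf x y
  have h2 := hg x y
  have h3 := abs_add_le (f x - f y) (g x - g y)
  rw [show f x + g x - (f y + g y) = (f x - f y) + (g x - g y) by ring]
  linarith [add_mul C D (dist x y)]

lemma Lp.mul {f g : X → ℝ} (hf : Lp f) (hg : Lp g) {A B : ℝ} (hA : ∀ x, |f x| ≤ A)
    (hB : ∀ x, |g x| ≤ B) : Lp (fun x => f x * g x) := by
  obtain ⟨C, hC, hf⟩ := hf
  obtain ⟨D, hD, hg⟩ := hg
  refine ⟨C * |B| + |A| * D, by positivity, fun x y => ?_⟩
  have h1 := hf x y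
  have h2 := hg x y
  rw [show f x * g x - f y * g y = (f x - f y) * g x + f y * (g x - g y) by ring]
  refine (abs_add_le _ _).trans ?_
  rw [abs_mul, abs_mul]
  have hA' : |f y| ≤ |A| := (hA y).trans (le_abs_self _)
  have hB' : |g x| ≤ |B| := (hB x).trans (le_abs_self _)
  have e1 : |f x - f y| * |g x| ≤ (C * dist x y) * |B| := by gcongr
  have e2 : |f y| * |g x - g y| ≤ |A| * (D * dist x y) := by gcongr
  nlinarith

lemma Lp.const_mul {f : X → ℝ} (hf : Lp f) (a : ℝ) : Lp (fun x => a * f x) := by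
  obtain ⟨C, hC, hf⟩ := hf
  refine ⟨|a| * C, by positivity, fun x y => ?_⟩
  rw [← mul_sub, abs_mul, mul_assoc]
  gcongr
  exact hf x y

lemma Lp.sub {f g : X → ℝ} (hf : Lp f) (hg : Lp g) : Lp (fun x => f x - g x) := by
  have := hf.add (hg.const_mul (-1))
  simpa [sub_eq_add_neg] using this

lemma Lp.inv {f : X → ℝ} (hf : Lp f) {m : ℝ} (hm : 0 < m) (h : ∀ x, m ≤ f x) :
    Lp (fun x => (f x)⁻¹) := by
  obtain ⟨C, hC, hf⟩ := hf
  refine ⟨C * (m⁻¹ * m⁻¹), by positivity, fun x y => ?_⟩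
  have hx : 0 < f x := hm.trans_le (h x)
  have hy : 0 < f y := hm.trans_le (h y)
  rw [show (f x)⁻¹ - (f y)⁻¹ = (f y - f x) * ((f x)⁻¹ * (f y)⁻¹) by field_simp]
  rw [abs_mul, abs_of_pos (a := (f x)⁻¹ * (f y)⁻¹) (by positivity), abs_sub_comm]
  have e1 : (f x)⁻¹ * (f y)⁻¹ ≤ m⁻¹ * m⁻¹ := by
    have := h x
    have := h y
    gcongr
  calc |f x - f y| * ((f x)⁻¹ * (f y)⁻¹) ≤ (C * dist x y) * (m⁻¹ * m⁻¹) := by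
        exact mul_le_mul (hf x y) e1 (by positivity) (by positivity)
    _ = _ := by ring

lemma Lp.sum {ι : Type*} (s : Finset ι) {f : ι → X → ℝ} (hf : ∀ i, Lp (f i)) :
    Lp (fun x => ∑ i ∈ s, f i x) := by
  classical
  induction s using Finset.induction_on with
  | empty => simpa using Lp.const 0
  | insert a s ha ih =>
    simp only [Finset.sum_insert ha]
    exact (hf a).add ih

lemma Lp.prod {ι : Type*} (s : Finset ι) {f : ι → X → ℝ} (hf : ∀ i, Lp (f i))
    (h : ∀ i x, f i x ∈ Icc (0:ℝ) 1) :
    Lp (fun x => ∏ i ∈ s, f i x) := by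
  classical
  induction s using Finset.induction_on with
  | empty => simpa using Lp.const 1
  | insert a s ha ih =>
    simp only [Finset.prod_insert ha]
    refine (hf a).mul ih (A := 1) (B := 1) (fun x => ?_) (fun x => ?_)
    · rw [abs_of_nonneg (h a x).1]; exact (h a x).2
    · rw [abs_of_nonneg (Finset.prod_nonneg fun i _ => (h i x).1)]
      exact Finset.prod_le_one (fun i _ => (h i x).1) (fun i _ => (h i x).2)

lemma Lp.comp {Y : Type*} [MetricSpace Y] {f : X → ℝ} (hf : Lp f) {g : Y → X} {K : NNReal}
    (hg : LipschitzWith K g) : Lp (fun y => f (g y)) := by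
  obtain ⟨C, hC, hf⟩ := hf
  refine ⟨C * K, by positivity, fun x y => (hf _ _).trans ?_⟩
  rw [mul_assoc]
  gcongr
  exact hg.dist_le_mul x y

lemma Lp.of_lip {f : X → ℝ} {K : NNReal} (hf : LipschitzWith K f) : Lp f :=
  ⟨K, K.2, fun x y => by simpa [Real.dist_eq] using hf.dist_le_mul x y⟩

noncomputable def clampR (a : ℝ) : ℝ := max 0 (min 1 a)

lemma clampR_mem (a : ℝ) : clampR a ∈ Icc (0:ℝ) 1 := by
  unfold clampR
  exact ⟨le_max_left _ _, max_le zero_le_one (min_le_left _ _)⟩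

lemma clampR_lip : LipschitzWith 1 clampR := by
  have := (LipschitzWith.id.const_min (1:ℝ)).const_max 0
  exact this

lemma Lp.clamp {f : X → ℝ} (hf : Lp f) : Lp (fun x => clampR (f x)) := by
  obtain ⟨C, hC, hf⟩ := hf
  refine ⟨C, hC, fun x y => le_trans ?_ (hf x y)⟩
  simpa [Real.dist_eq] using clampR_lip.dist_le_mul (f x) (f y)

lemma clampR_pos {a : ℝ} (h : clampR a ≠ 0) : 0 < a := by
  by_contra hc
  apply h
  unfold clampR
  rw [max_eq_left]
  exact (min_le_right _ _).trans (not_lt.1 hc)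

lemma clampR_one {a : ℝ} (h : 1 ≤ a) : clampR a = 1 := by
  unfold clampR
  rw [min_eq_left h]; simp

lemma lipschitzWith_of_dist {Y : Type*} [MetricSpace Y] {f : X → Y} {C : ℝ} (hC : 0 ≤ C)
    (h : ∀ x y, dist (f x) (f y) ≤ C * dist x y) : LipschitzWith ⟨C, hC⟩ f :=
  LipschitzWith.of_dist_le_mul h

lemma exists_lip_of_coord {N : ℕ} {S : Set (Fin N → ℝ)} (f : X → S)
    (h : ∀ j, Lp (fun x => (f x : Fin N → ℝ) j)) : ∃ K, LipschitzWith K f := by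
  choose C hC h using h
  refine ⟨⟨∑ j, C j, Finset.sum_nonneg fun j _ => hC j⟩, lipschitzWith_of_dist _ fun x y => ?_⟩
  rw [Subtype.dist_eq, dist_pi_le_iff (mul_nonneg (Finset.sum_nonneg fun j _ => hC j) dist_nonneg)]
  intro j
  rw [Real.dist_eq]
  refine (h j x y).trans ?_
  gcongr
  exact Finset.single_le_sum (f := C) (fun j _ => hC j) (Finset.mem_univ j)

end Lp

/-! ### The iterated contraction -/

section Run
variable {M S X : Type*}

def runG (G : S → M → ℝ → M) (l : List S) (u : S → ℝ) (y : M) : M :=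
  l.foldr (fun s y => G s y (u s)) y

/-- A family of Lipschitz contractions of the sets `V s`, for `s` valid. -/
structure GoodG [MetricSpace M] (V : S → Set M) (valid : S → Prop)
    (G : S → M → ℝ → M) (c : S → M) (K : ℝ) : Prop where
  K0 : 0 ≤ K
  zero : ∀ s y, G s y 0 = y
  one : ∀ s y, G s y 1 = c s
  cmem : ∀ s, valid s → c s ∈ V s
  mem : ∀ s, valid s → ∀ y ∈ V s, ∀ t ∈ Icc (0:ℝ) 1, G s y t ∈ V s
  lip : ∀ s, valid s → ∀ y ∈ V s, ∀ y' ∈ V s, ∀ t ∈ Icc (0:ℝ) 1, ∀ t' ∈ Icc (0:ℝ) 1,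
    dist (G s y t) (G s y' t') ≤ K * (dist y y' + |t - t'|)

variable [MetricSpace M] {V : S → Set M} {valid : S → Prop}
    {G : S → M → ℝ → M} {c : S → M} {K : ℝ}

lemma runG_agree (hG : GoodG V valid G c K) (u : S → ℝ) (y y' : M) :
    ∀ l : List S, (∃ s ∈ l, u s = 1) → runG G l u y = runG G l u y' := by
  intro l
  induction l with
  | nil => simp
  | cons s l ih =>
    intro h
    change G s (runG G l u y) (u s) = G s (runG G l u y') (u s)
    by_cases hs : u s = 1
    · rw [hs, hG.one, hG.one]
    · rw [ih]
      obtain ⟨t, ht, h1⟩ := h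
      rcases List.mem_cons.1 ht with rfl | ht
      · exact absurd h1 hs
      · exact ⟨t, ht, h1⟩

lemma runG_zero (hG : GoodG V valid G c K) (u : S → ℝ) (y : M) :
    ∀ l : List S, (∀ s ∈ l, u s = 0) → runG G l u y = y := by
  intro l
  induction l with
  | nil => intro _; rfl
  | cons s l ih =>
    intro h
    change G s (runG G l u y) (u s) = y
    rw [h s (by simp), hG.zero, ih (fun t ht => h t (by simp [ht]))]

/-- Membership invariant. `R s t` says that `s` is processed later than `t`. -/
lemma runG_mem (hG : GoodG V valid G c K) (u : S → ℝ) (hu : ∀ s, u s ∈ Icc (0:ℝ) 1)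
    (y : M) (D : Prop) (R : S → S → Prop)
    (hD : D → ∀ s, u s ≠ 0 → valid s → y ∈ V s)
    (hR : ∀ s t, u s ≠ 0 → u t ≠ 0 → R s t → V t ⊆ V s) :
    ∀ l : List S, (∀ s ∈ l, u s ≠ 0 → valid s) → l.Pairwise R →
      (D ∨ ∃ s ∈ l, u s = 1) → ∀ t, u t ≠ 0 → valid t →
      (∀ s ∈ l, u s ≠ 0 → V s ⊆ V t) → runG G l u y ∈ V t := by
  intro l
  induction l with
  | nil =>
    intro _ _ h t ht hvt _
    simp at h
    exact hD h t ht hvt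
  | cons s l ih =>
    intro hv hp h t ht hvt hsub
    change G s (runG G l u y) (u s) ∈ V t
    rw [List.pairwise_cons] at hp
    have ih' := ih (fun s hs => hv s (by simp [hs])) hp.2
    by_cases hs1 : u s = 1
    · rw [hs1, hG.one]
      exact hsub s (by simp) (by simp [hs1]) (hG.cmem s (hv s (by simp) (by simp [hs1])))
    have h' : D ∨ ∃ s ∈ l, u s = 1 := by
      rcases h with h | ⟨t, ht, h1⟩
      · exact Or.inl h
      · rcases List.mem_cons.1 ht with rfl | ht
        · exact absurd h1 hs1
        · exact Or.inr ⟨t, ht, h1⟩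
    by_cases hs0 : u s = 0
    · rw [hs0, hG.zero]
      exact ih' h' t ht hvt (fun r hr => hsub r (by simp [hr]))
    · apply hsub s (by simp) hs0
      have hvs := hv s (by simp) hs0
      refine hG.mem s hvs _ (ih' h' s hs0 hvs fun r hr hr0 => ?_) _ (hu s)
      exact hR s r hs0 hr0 (hp.1 r hr)

lemma runG_lip [CompactSpace M] [MetricSpace X]
    (hG : GoodG V valid G c K) (u : X → S → ℝ) (hu : ∀ x s, u x s ∈ Icc (0:ℝ) 1)
    (hL : ∀ s, Lp (fun x => u x s))
    (y : X → M) (D : Prop) (R : S → S → Prop)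
    (hD : D → ∀ x s, u x s ≠ 0 → valid s → y x ∈ V s)
    (hDL : D → ∃ K, LipschitzWith K y)
    (hR : ∀ x s t, u x s ≠ 0 → u x t ≠ 0 → R s t → V t ⊆ V s) :
    ∀ l : List S, (∀ x, ∀ s ∈ l, u x s ≠ 0 → valid s) → l.Pairwise R →
      ∃ C : ℝ, 0 ≤ C ∧ ∀ x x', (D ∨ ∃ s ∈ l, u x s = 1) → (D ∨ ∃ s ∈ l, u x' s = 1) →
        dist (runG G l (u x) (y x)) (runG G l (u x') (y x')) ≤ C * dist x x' := by
  intro l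
  induction l with
  | nil =>
    intro _ _
    by_cases hd : D
    · obtain ⟨K, hK⟩ := hDL hd
      exact ⟨K, K.2, fun x x' _ _ => hK.dist_le_mul x x'⟩
    · exact ⟨0, le_rfl, fun x x' h => by simp [hd] at h⟩
  | cons s l ih =>
    intro hv hp
    rw [List.pairwise_cons] at hp
    have hv' : ∀ x, ∀ s ∈ l, u x s ≠ 0 → valid s := fun x s hs => hv x s (by simp [hs])
    obtain ⟨C, hC, ih⟩ := ih hv' hp.2
    obtain ⟨L, hL0, hL⟩ := hL s
    beta_reduce at hL
    set d := diam (univ : Set M) with hd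
    have hd0 : 0 ≤ d := diam_nonneg
    have hdd : ∀ a b : M, dist a b ≤ d := fun a b =>
      dist_le_diam_of_mem isCompact_univ.isBounded (mem_univ a) (mem_univ b)
    have hK0 := hG.K0
    have key : ∀ x, u x s ≠ 0 → (D ∨ ∃ s ∈ l, u x s = 1) → runG G l (u x) (y x) ∈ V s := by
      intro x h0 h
      exact runG_mem hG (u x) (hu x) (y x) D R (fun hd => hD hd x) (hR x) l (hv' x) hp.2 h s h0
        (hv x s (by simp) h0) (fun r hr hr0 => hR x s r h0 hr0 (hp.1 r hr))
    have hstep : ∀ x, (D ∨ ∃ r ∈ s :: l, u x r = 1) →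
        (D ∨ ∃ s ∈ l, u x s = 1) ∨ u x s = 1 := by
      rintro x (h | ⟨t, ht, h1⟩)
      · exact Or.inl (Or.inl h)
      · rcases List.mem_cons.1 ht with rfl | ht
        · exact Or.inr h1
        · exact Or.inl (Or.inr ⟨t, ht, h1⟩)
    have z01 : (0:ℝ) ∈ Icc (0:ℝ) 1 := by simp
    have o01 : (1:ℝ) ∈ Icc (0:ℝ) 1 := by simp
    -- case: good before at both points, second parameter zero
    have caseA : ∀ x x', u x s ≠ 0 → u x' s = 0 → (D ∨ ∃ s ∈ l, u x s = 1) →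
        (D ∨ ∃ s ∈ l, u x' s = 1) →
        dist (G s (runG G l (u x) (y x)) (u x s)) (G s (runG G l (u x') (y x')) (u x' s)) ≤
          (K * (C + L) + C + K * L + d * L) * dist x x' := by
      intro x x' hx hx' h h'
      have hm := key x hx h
      have e := hG.lip s (hv x s (by simp) hx) _ hm _ hm (u x s) (hu x s) 0 z01
      have e2 := ih x x' h h'
      have e3 := hL x x'
      rw [hx'] at e3 ⊢
      rw [hG.zero]
      rw [hG.zero, dist_self, zero_add] at e
      have e4 : K * |u x s - 0| ≤ K * (L * dist x x') := by gcongr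
      have := dist_triangle (G s (runG G l (u x) (y x)) (u x s)) (runG G l (u x) (y x))
        (runG G l (u x') (y x'))
      have p1 : 0 ≤ K * (C + L) * dist x x' := by positivity
      have p2 : 0 ≤ d * L * dist x x' := by positivity
      nlinarith
    -- case: only first point good before
    have caseB : ∀ x x', (D ∨ ∃ s ∈ l, u x s = 1) → u x' s = 1 →
        dist (G s (runG G l (u x) (y x)) (u x s)) (G s (runG G l (u x') (y x')) (u x' s)) ≤
          (K * (C + L) + C + K * L + d * L) * dist x x' := by
      intro x x' h h1
      have e3 := hL x x'
      have p1 : 0 ≤ K * (C + L) * dist x x' := by positivity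
      have p2 : 0 ≤ d * L * dist x x' := by positivity
      have p3 : 0 ≤ C * dist x x' := by positivity
      have p4 : 0 ≤ K * L * dist x x' := by positivity
      by_cases hx : u x s = 0
      · have : 1 ≤ L * dist x x' := by
          simpa [hx, h1] using e3
        have e4 := hdd (G s (runG G l (u x) (y x)) (u x s)) (G s (runG G l (u x') (y x')) (u x' s))
        have e5 : d * 1 ≤ d * (L * dist x x') := by gcongr
        nlinarith
      · have hm := key x hx h
        have e := hG.lip s (hv x s (by simp) hx) _ hm _ hm (u x s) (hu x s) 1 o01
        rw [h1] at e3 ⊢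
        rw [hG.one]
        rw [hG.one, dist_self, zero_add] at e
        have e4 : K * |u x s - 1| ≤ K * (L * dist x x') := by gcongr
        nlinarith
    refine ⟨K * (C + L) + C + K * L + d * L, by positivity, fun x x' h h' => ?_⟩
    change dist (G s (runG G l (u x) (y x)) (u x s)) (G s (runG G l (u x') (y x')) (u x' s)) ≤ _
    rcases hstep x h with hx | hx <;> rcases hstep x' h' with hx' | hx'
    · by_cases h0 : u x s = 0 <;> by_cases h0' : u x' s = 0
      · rw [h0, h0', hG.zero, hG.zero]
        refine (ih x x' hx hx').trans ?_
        gcongr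
        have : 0 ≤ K * (C + L) + K * L + d * L := by positivity
        linarith
      · rw [dist_comm, dist_comm x]
        exact caseA x' x h0' h0 hx' hx
      · exact caseA x x' h0 h0' hx hx'
      · refine (hG.lip s (hv x s (by simp) h0) _ (key x h0 hx) _ (key x' h0' hx') _ (hu x s) _
          (hu x' s)).trans ?_
        have e2 := ih x x' hx hx'
        have e3 := hL x x'
        have : K * (dist (runG G l (u x) (y x)) (runG G l (u x') (y x')) + |u x s - u x' s|) ≤
          K * (C * dist x x' + L * dist x x') := by gcongr
        have p2 : 0 ≤ (C + K * L + d * L) * dist x x' := by positivity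
        nlinarith
    · exact caseB x x' hx hx'
    · rw [dist_comm, dist_comm x]
      exact caseB x' x hx' hx
    · rw [hx, hx', hG.one, hG.one, dist_self]
      positivity

end Run

/-! ### The weights -/

section Weights
variable {N : ℕ}

noncomputable def epsN (N : ℕ) : ℝ := 1 / ((N:ℝ) + 1) ^ 2

lemma epsN_pos (N : ℕ) : 0 < epsN N := by unfold epsN; positivity

noncomputable def phiN (N : ℕ) (x : ℝ) : ℝ := clampR (2 / epsN N * x + -1)
noncomputable def psiN (N : ℕ) (x : ℝ) : ℝ := clampR (2 / epsN N * x + 1)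

lemma phiN_pos {x : ℝ} (h : phiN N x ≠ 0) : epsN N / 2 < x := by
  have := clampR_pos h
  have e := epsN_pos N
  have h2 : 1 < 2 / epsN N * x := by linarith
  rw [div_mul_eq_mul_div, lt_div_iff₀ e] at h2
  linarith

lemma phiN_one {x : ℝ} (h : epsN N ≤ x) : phiN N x = 1 := by
  apply clampR_one
  have e := epsN_pos N
  have h2 : 2 ≤ 2 / epsN N * x := by
    rw [div_mul_eq_mul_div, le_div_iff₀ e]
    linarith
  linarith

lemma psiN_pos {x : ℝ} (h : psiN N x ≠ 0) : - (epsN N / 2) < x := by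
  have := clampR_pos h
  have e := epsN_pos N
  have h2 : -1 < 2 / epsN N * x := by linarith
  rw [div_mul_eq_mul_div, lt_div_iff₀ e] at h2
  linarith

lemma psiN_one {x : ℝ} (h : 0 ≤ x) : psiN N x = 1 := by
  apply clampR_one
  have e := epsN_pos N
  have : 0 ≤ 2 / epsN N * x := by positivity
  linarith

noncomputable def uN (θ : Fin N → ℝ) (s : Finset (Fin N)) : ℝ :=
  ∏ j ∈ s, (phiN N (θ j) * ∏ i ∈ sᶜ, phiN N (θ j - θ i))

noncomputable def wN (θ : Fin N → ℝ) (j : Fin N) : ℝ := ∏ i, psiN N (θ j - θ i)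

lemma prod_mem01 {ι : Type*} (s : Finset ι) {f : ι → ℝ} (h : ∀ i, f i ∈ Icc (0:ℝ) 1) :
    ∏ i ∈ s, f i ∈ Icc (0:ℝ) 1 :=
  ⟨Finset.prod_nonneg fun i _ => (h i).1,
    Finset.prod_le_one (fun i _ => (h i).1) (fun i _ => (h i).2)⟩

lemma mul_mem01 {a b : ℝ} (ha : a ∈ Icc (0:ℝ) 1) (hb : b ∈ Icc (0:ℝ) 1) :
    a * b ∈ Icc (0:ℝ) 1 :=
  ⟨mul_nonneg ha.1 hb.1, mul_le_one₀ ha.2 hb.1 hb.2⟩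

lemma abs_le_one_of_mem {a : ℝ} (ha : a ∈ Icc (0:ℝ) 1) : |a| ≤ 1 := by
  rw [abs_of_nonneg ha.1]; exact ha.2

lemma uN_mem (θ : Fin N → ℝ) (s : Finset (Fin N)) : uN θ s ∈ Icc (0:ℝ) 1 :=
  prod_mem01 _ fun _ => mul_mem01 (clampR_mem _) (prod_mem01 _ fun _ => clampR_mem _)

lemma wN_mem (θ : Fin N → ℝ) (j : Fin N) : wN θ j ∈ Icc (0:ℝ) 1 :=
  prod_mem01 _ fun _ => clampR_mem _

lemma uN_pos {θ : Fin N → ℝ} {s : Finset (Fin N)} (h : uN θ s ≠ 0) :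
    (∀ j ∈ s, epsN N / 2 < θ j) ∧ ∀ j ∈ s, ∀ i ∉ s, epsN N / 2 < θ j - θ i := by
  unfold uN at h
  rw [Finset.prod_ne_zero_iff] at h
  constructor
  · intro j hj
    exact phiN_pos (left_ne_zero_of_mul (h j hj))
  · intro j hj i hi
    have := right_ne_zero_of_mul (h j hj)
    rw [Finset.prod_ne_zero_iff] at this
    exact phiN_pos (this i (by simpa using hi))

lemma uN_one {θ : Fin N → ℝ} {s : Finset (Fin N)} (h1 : ∀ j ∈ s, epsN N ≤ θ j)
    (h2 : ∀ j ∈ s, ∀ i ∉ s, epsN N ≤ θ j - θ i) : uN θ s = 1 := by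
  unfold uN
  apply Finset.prod_eq_one
  intro j hj
  rw [phiN_one (h1 j hj), one_mul]
  apply Finset.prod_eq_one
  intro i hi
  exact phiN_one (h2 j hj i (by simpa using hi))

lemma uN_chain {θ : Fin N → ℝ} {s t : Finset (Fin N)} (hs : uN θ s ≠ 0) (ht : uN θ t ≠ 0)
    (hc : s.card ≤ t.card) : s ⊆ t := by
  by_contra hn
  have hts : t ⊆ s := by
    intro i hi
    by_contra his
    obtain ⟨j, hj, hjt⟩ := Finset.not_subset.1 hn
    have h1 := (uN_pos hs).2 j hj i his
    have h2 := (uN_pos ht).2 i hi j hjt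
    have := epsN_pos N
    linarith
  have := Finset.eq_of_subset_of_card_le hts hc
  exact hn this.ge

lemma exists_big {θ : Fin N → ℝ} (h1 : ∑ j, θ j = 1) : ∃ j, 1 / ((N:ℝ) + 1) ≤ θ j := by
  by_contra! hc
  have : ∑ j, θ j ≤ ∑ j : Fin N, 1 / ((N:ℝ) + 1) := Finset.sum_le_sum fun j _ => (hc j).le
  rw [h1] at this
  simp at this
  rw [← div_eq_mul_inv, le_div_iff₀ (by positivity)] at this
  linarith

lemma exists_uN_one {θ : Fin N → ℝ} (h0 : ∀ j, 0 ≤ θ j) (h1 : ∑ j, θ j = 1) :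
    ∃ s : Finset (Fin N), s.Nonempty ∧ uN θ s = 1 := by
  classical
  have e := epsN_pos N
  obtain ⟨j₀, hj₀⟩ := exists_big h1
  obtain ⟨k, hk, hkn⟩ : ∃ k ∈ Finset.range (N + 1),
      k ∉ Finset.univ.image (fun i => ⌊θ i / epsN N⌋₊) := by
    by_contra! hc
    have := Finset.card_le_card (show Finset.range (N+1) ⊆ _ from hc)
    have h2 := Finset.card_image_le (s := (Finset.univ : Finset (Fin N)))
      (f := fun i => ⌊θ i / epsN N⌋₊)
    simp at this h2
    omega
  have hk' : (k:ℝ) + 1 ≤ N + 1 := by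
    have := Finset.mem_range.1 hk
    exact_mod_cast this
  refine ⟨Finset.univ.filter (fun j => ((k:ℝ) + 1) * epsN N ≤ θ j), ⟨j₀, ?_⟩, uN_one ?_ ?_⟩
  · simp only [Finset.mem_filter, Finset.mem_univ, true_and]
    refine le_trans ?_ hj₀
    have : ((N:ℝ) + 1) * epsN N = 1 / ((N:ℝ) + 1) := by
      unfold epsN; field_simp
    rw [← this]
    gcongr
  · intro j hj
    simp only [Finset.mem_filter, Finset.mem_univ, true_and] at hj
    nlinarith [(Nat.cast_nonneg k : (0:ℝ) ≤ k)]
  · intro j hj i hi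
    simp only [Finset.mem_filter, Finset.mem_univ, true_and, not_le] at hj hi
    have : θ i < k * epsN N := by
      by_contra! hc
      apply hkn
      simp only [Finset.mem_image, Finset.mem_univ, true_and]
      refine ⟨i, ?_⟩
      rw [Nat.floor_eq_iff (div_nonneg (h0 i) e.le), le_div_iff₀ e, div_lt_iff₀ e]
      exact ⟨hc, hi⟩
    linarith

lemma wN_argmax {θ : Fin N → ℝ} {j : Fin N} (hj : ∀ i, θ i ≤ θ j) : wN θ j = 1 := by
  apply Finset.prod_eq_one
  intro i _
  exact psiN_one (by linarith [hj i])

lemma wN_pos {θ : Fin N → ℝ} {j : Fin N} (h : wN θ j ≠ 0) (i : Fin N) :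
    θ i - epsN N / 2 < θ j := by
  unfold wN at h
  rw [Finset.prod_ne_zero_iff] at h
  have := psiN_pos (h i (Finset.mem_univ i))
  linarith

lemma wN_mem_of_uN {θ : Fin N → ℝ} {j : Fin N} (h : wN θ j ≠ 0) {s : Finset (Fin N)}
    (hs : s.Nonempty) (hu : uN θ s ≠ 0) : j ∈ s := by
  by_contra hj
  obtain ⟨i, hi⟩ := hs
  have := (uN_pos hu).2 i hi j hj
  linarith [wN_pos h i]

lemma wN_supp {θ : Fin N → ℝ} {j : Fin N} (h1 : ∑ j, θ j = 1) (h : wN θ j ≠ 0) : θ j ≠ 0 := by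
  obtain ⟨i, hi⟩ := exists_big h1
  have := wN_pos h i
  have e : epsN N ≤ 1 / ((N:ℝ) + 1) := by
    unfold epsN
    apply one_div_le_one_div_of_le (by positivity)
    nlinarith [(Nat.cast_nonneg N : (0:ℝ) ≤ N)]
  have e0 := epsN_pos N
  have : 0 < θ j := by linarith
  exact this.ne'

lemma sum_wN_ge {θ : Fin N → ℝ} (h1 : ∑ j, θ j = 1) : 1 ≤ ∑ j, wN θ j := by
  obtain ⟨i, hi⟩ := exists_big h1
  obtain ⟨j, -, hj⟩ := Finset.exists_max_image Finset.univ θ ⟨i, Finset.mem_univ i⟩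
  rw [← wN_argmax (θ := θ) (j := j) fun i => hj i (Finset.mem_univ i)]
  exact Finset.single_le_sum (f := wN θ) (fun j _ => (wN_mem θ j).1) (Finset.mem_univ j)

variable {X : Type*} [MetricSpace X]

lemma Lp.uN {f : X → Fin N → ℝ} (hf : ∀ j, Lp (fun x => f x j)) (s : Finset (Fin N)) :
    Lp (fun x => uN (f x) s) := by
  unfold _root_.uN
  refine _root_.Lp.prod s (f := fun j x => phiN N (f x j) * ∏ i ∈ sᶜ, phiN N (f x j - f x i))
    (fun j => ?_) (fun j x => ?_)
  · refine Lp.mul (A := 1) (B := 1) ?_ ?_ ?_ ?_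
    · exact (((hf j).const_mul _).add (Lp.const _)).clamp
    · refine _root_.Lp.prod _ (fun i => ?_) (fun i x => clampR_mem _)
      exact ((((hf j).sub (hf i)).const_mul _).add (Lp.const _)).clamp
    · exact fun x => abs_le_one_of_mem (clampR_mem _)
    · exact fun x => abs_le_one_of_mem (prod_mem01 _ fun _ => clampR_mem _)
  · exact mul_mem01 (clampR_mem _) (prod_mem01 _ fun _ => clampR_mem _)

lemma Lp.wN {f : X → Fin N → ℝ} (hf : ∀ j, Lp (fun x => f x j)) (j : Fin N) :
    Lp (fun x => wN (f x) j) := by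
  unfold _root_.wN
  refine _root_.Lp.prod _ (fun i => ?_) (fun i x => clampR_mem _)
  exact ((((hf j).sub (hf i)).const_mul _).add (Lp.const _)).clamp

end Weights

lemma exists_sorted (N : ℕ) : ∃ l : List (Finset (Fin N)),
    (∀ s, s ∈ l ↔ s.Nonempty) ∧ l.Pairwise (fun s t => s.card ≤ t.card) := by
  classical
  let r : Finset (Fin N) → Finset (Fin N) → Prop := fun s t => s.card ≤ t.card
  have : Std.Total r := ⟨fun a b => le_total _ _⟩
  have : IsTrans _ r := ⟨fun a b c h h' => le_trans h h'⟩
  refine ⟨((Finset.univ.filter (fun s : Finset (Fin N) => s.Nonempty)).toList).insertionSort r,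
    fun s => by simp, List.pairwise_insertionSort r _⟩

def interU {M : Type*} {N : ℕ} (U : Fin N → Set M) (s : Finset (Fin N)) : Set M := ⋂ j ∈ s, U j

lemma exists_goodG {M : Type*} [MetricSpace M] {N : ℕ} (U : Fin N → Set M)
    (hU : IsGoodCovering U) [Nonempty M] : ∃ (G : Finset (Fin N) → M → ℝ → M)
      (c : Finset (Fin N) → M) (K : ℝ),
      GoodG (interU U) (fun s => s.Nonempty ∧ (interU U s).Nonempty) G c K := by
  classical
  have h : ∀ s : Finset (Fin N), ∃ (g : M → ℝ → M) (c : M) (K : ℝ), 0 ≤ K ∧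
      (∀ y, g y 0 = y) ∧ (∀ y, g y 1 = c) ∧ (s.Nonempty ∧ (interU U s).Nonempty →
        c ∈ interU U s ∧ (∀ y ∈ interU U s, ∀ t ∈ Icc (0:ℝ) 1, g y t ∈ interU U s) ∧
        ∀ y ∈ interU U s, ∀ y' ∈ interU U s, ∀ t ∈ Icc (0:ℝ) 1, ∀ t' ∈ Icc (0:ℝ) 1,
    dist (g y t) (g y' t') ≤ K * (dist y y' + |t - t'|)) := by
    intro s
    by_cases hs : s.Nonempty ∧ (interU U s).Nonempty
    · obtain ⟨p, F, K, hF, h0, h1, -⟩ := hU.2.2.2.2 s hs.1 hs.2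
      let g : M → ℝ → M := fun y t => if t = 1 then (p : M) else
        if h : y ∈ (⋂ j ∈ s, U j) ∧ t ∈ Icc (0:ℝ) 1 then (F (⟨y, h.1⟩, ⟨t, h.2⟩) : M) else y
      have hg : ∀ y (hy : y ∈ (⋂ j ∈ s, U j)) t (ht : t ∈ Icc (0:ℝ) 1),
          g y t = F (⟨y, hy⟩, ⟨t, ht⟩) := by
        intro y hy t ht
        by_cases h : t = 1
        · subst h
          have := h1 ⟨y, hy⟩
          simp only [g, if_true]
          rw [← this]
          rfl
        · simp only [g, if_neg h, dif_pos (And.intro hy ht)]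
      refine ⟨g, p, K, K.2, fun y => ?_, fun y => ?_, fun _ => ⟨p.2, ?_, ?_⟩⟩
      · by_cases hy : y ∈ (⋂ j ∈ s, U j)
        · rw [hg y hy 0 (by simp)]
          exact congrArg Subtype.val (h0 ⟨y, hy⟩)
        · simp only [g]
          rw [if_neg (by norm_num), dif_neg (fun h => hy h.1)]
      · simp [g]
      · intro y hy t ht
        rw [hg y hy t ht]
        exact Subtype.coe_prop _
      · intro y hy y' hy' t ht t' ht'
        rw [hg y hy t ht, hg y' hy' t' ht', ← Subtype.dist_eq]
        refine (hF.dist_le_mul _ _).trans ?_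
        gcongr
        rw [Prod.dist_eq, Subtype.dist_eq, Subtype.dist_eq, Real.dist_eq]
        exact max_le_add_of_nonneg dist_nonneg (abs_nonneg _)
    · exact ⟨fun y t => if t = 1 then Classical.arbitrary M else y, Classical.arbitrary M, 0,
        le_rfl, by simp, by simp, fun h => absurd h hs⟩
  choose g c K hK h0 h1 h2 using h
  refine ⟨g, c, ∑ s, K s, Finset.sum_nonneg fun s _ => hK s, h0, h1, fun s hs => (h2 s hs).1,
    fun s hs => (h2 s hs).2.1, fun s hs y hy y' hy' t ht t' ht' => ?_⟩
  refine ((h2 s hs).2.2 y hy y' hy' t ht t' ht').trans ?_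
  gcongr
  exact Finset.single_le_sum (f := K) (fun s _ => hK s) (Finset.mem_univ s)

lemma theta_lip {M : Type*} [MetricSpace M] [CompactSpace M]
    {N : ℕ} (U : Fin N → Set M) (hU : IsGoodCovering U)
    (p : Fin N → M) (hp : ∀ j, IsCenter (U j) (p j))
    (Θ : M → ↥(NerveSet U))
    (hΘ : ∀ (x : M) (j : Fin N), (Θ x : Fin N → ℝ) j =
      (infDist x (U j)ᶜ / (infDist x (U j)ᶜ + dist x (p j))) /
        ∑ i, infDist x (U i)ᶜ / (infDist x (U i)ᶜ + dist x (p i))) :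
    ∀ j, Lp (fun x => (Θ x : Fin N → ℝ) j) := by
  by_cases hM : IsEmpty M
  · exact fun j => ⟨0, le_rfl, fun x => (hM.false x).elim⟩
  rw [not_isEmpty_iff] at hM
  have bdd : ∀ f : M → ℝ, Lp f → ∃ A, ∀ x, |f x| ≤ A := by
    rintro f ⟨C, hC, hf⟩
    have x0 : M := Classical.arbitrary M
    refine ⟨|f x0| + C * diam (univ : Set M), fun x => ?_⟩
    have h1 := hf x x0
    have h2 : dist x x0 ≤ diam (univ : Set M) :=
      dist_le_diam_of_mem isCompact_univ.isBounded (mem_univ _) (mem_univ _)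
    have h3 : |f x| ≤ |f x - f x0| + |f x0| := by
      have := abs_add_le (f x - f x0) (f x0)
      simpa using this
    have h4 : C * dist x x0 ≤ C * diam (univ : Set M) := by gcongr
    linarith
  have low : ∀ f : M → ℝ, Lp f → (∀ x, 0 < f x) → ∃ m, 0 < m ∧ ∀ x, m ≤ f x := by
    rintro f ⟨C, hC, hf⟩ hpos
    have hc : Continuous f := (lipschitzWith_of_dist hC
      (fun x y => by rw [Real.dist_eq]; exact hf x y)).continuous
    obtain ⟨x, -, hx⟩ := isCompact_univ.exists_isMinOn univ_nonempty hc.continuousOn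
    exact ⟨f x, hpos x, fun y => hx (mem_univ y)⟩
  have divL : ∀ f g : M → ℝ, Lp f → Lp g → (∀ x, 0 < g x) → Lp (fun x => f x / g x) := by
    intro f g hf hg hpos
    obtain ⟨m, hm, hml⟩ := low g hg hpos
    have hi := hg.inv hm hml
    obtain ⟨A, hA⟩ := bdd f hf
    obtain ⟨B, hB⟩ := bdd _ hi
    exact hf.mul hi hA hB
  have hI : ∀ i, Lp (fun x => infDist x (U i)ᶜ) := fun i => Lp.of_lip (lipschitz_infDist_pt _)
  have hf : ∀ i, Lp (fun x => infDist x (U i)ᶜ / (infDist x (U i)ᶜ + dist x (p i))) := by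
    intro i
    by_cases he : (U i)ᶜ = ∅
    · simp only [he, infDist_empty, zero_div]
      exact Lp.const 0
    · refine divL _ _ (hI i) ((hI i).add (Lp.of_lip (LipschitzWith.dist_left (p i)))) fun x => ?_
      have h1 : 0 ≤ infDist x (U i)ᶜ := infDist_nonneg
      have h2 : 0 ≤ dist x (p i) := dist_nonneg
      rcases h1.lt_or_eq with h | h
      · linarith
      · have hx : x ∈ (U i)ᶜ :=
          ((hU.1 i).isClosed_compl.mem_iff_infDist_zero (nonempty_iff_ne_empty.2 he)).2 h.symm
        obtain ⟨q, hq, -⟩ := hp i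
        have : x ≠ p i := by
          rintro rfl
          apply hx
          rw [← hq]
          exact q.2
        have := dist_pos.2 this
        linarith
  intro j
  simp only [hΘ]
  refine divL _ _ (hf j) (Lp.sum _ hf) fun x => ?_
  have h0 : 0 ≤ ∑ i, infDist x (U i)ᶜ / (infDist x (U i)ᶜ + dist x (p i)) :=
    Finset.sum_nonneg fun i _ => div_nonneg infDist_nonneg (add_nonneg infDist_nonneg dist_nonneg)
  refine lt_of_le_of_ne h0 fun h => ?_
  have := (Θ x).2.2.1
  simp only [hΘ, ← h, div_zero, Finset.sum_const_zero] at this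
  exact zero_ne_one this

/-- Let `M` be a compact metric space with a finite good covering with
chosen centers `p_j`, and let `Θ(x) = (ξ_1(x),…,ξ_N(x))` be the induced Lipschitz homotopy
equivalence `M → |𝒩_𝒰|`.  Then there is a Lipschitz homotopy inverse `ζ` of `Θ` such that
for every `θ ∈ |𝒩_𝒰|` one has `ζ(θ) ∈ ⋃_{j ∈ supp θ} U_j`. -/
theorem exists_homotopy_inverse_in_support {M : Type*} [MetricSpace M] [CompactSpace M]
    {N : ℕ} (U : Fin N → Set M) (hU : IsGoodCovering U)
    (p : Fin N → M) (hp : ∀ j, IsCenter (U j) (p j))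
    (Θ : M → ↥(NerveSet U))
    (hΘ : ∀ (x : M) (j : Fin N), (Θ x : Fin N → ℝ) j =
      (infDist x (U j)ᶜ / (infDist x (U j)ᶜ + dist x (p j))) /
        ∑ i, infDist x (U i)ᶜ / (infDist x (U i)ᶜ + dist x (p i))) :
    ∃ (ζ : ↥(NerveSet U) → M) (Kζ : NNReal), LipschitzWith Kζ ζ ∧
      LipHomotopic (ζ ∘ Θ) id ∧ LipHomotopic (Θ ∘ ζ) id ∧
      ∀ θ : ↥(NerveSet U), ∃ j : Fin N, (θ : Fin N → ℝ) j ≠ 0 ∧ ζ θ ∈ U j := by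
  classical
  have hne : ∀ θ : ↥(NerveSet U), Nonempty M := fun θ => ⟨θ.2.2.2.some⟩
  by_cases hM : IsEmpty M
  · have hE : IsEmpty ↥(NerveSet U) := ⟨fun θ => (hne θ).elim hM.false⟩
    refine ⟨fun θ => hE.elim θ, 0, fun θ => hE.elim θ, ⟨fun x => x.1, 1, fun x => hM.elim x.1,
      fun x => hM.elim x, fun x => hM.elim x⟩, ⟨fun x => x.1, 1, fun x => hE.elim x.1,
      fun x => hE.elim x, fun x => hE.elim x⟩, fun θ => hE.elim θ⟩
  rw [not_isEmpty_iff] at hM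
  obtain ⟨G, c, K, hG⟩ := exists_goodG U hU
  obtain ⟨l, hl, hlp⟩ := exists_sorted N
  have hΘL := theta_lip U hU p hp Θ hΘ
  obtain ⟨KΘ, hKΘ⟩ := exists_lip_of_coord Θ hΘL
  have hcoord : ∀ j, Lp (fun θ : ↥(NerveSet U) => (θ : Fin N → ℝ) j) := fun j =>
    ⟨1, zero_le_one, fun x y => by
      rw [one_mul, ← Real.dist_eq, Subtype.dist_eq]
      exact dist_le_pi_dist (x : Fin N → ℝ) (y : Fin N → ℝ) j⟩
  -- support of Θ
  have hΘs : ∀ x j, (Θ x : Fin N → ℝ) j ≠ 0 → x ∈ U j := by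
    intro x j h
    by_contra hx
    apply h
    rw [hΘ, infDist_zero_of_mem (show x ∈ (U j)ᶜ from hx)]
    simp
  have huL : ∀ s, Lp (fun θ : ↥(NerveSet U) => uN (θ : Fin N → ℝ) s) := fun s => Lp.uN hcoord s
  have hanti : ∀ s t : Finset (Fin N), s ⊆ t → interU U t ⊆ interU U s := fun s t h =>
    biInter_subset_biInter_left h
  have hvalid : ∀ (θ : ↥(NerveSet U)) (s), s ∈ l → uN (θ : Fin N → ℝ) s ≠ 0 →
      s.Nonempty ∧ (interU U s).Nonempty := by
    intro θ s hs h
    refine ⟨(hl s).1 hs, θ.2.2.2.mono ?_⟩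
    intro y hy
    simp only [interU, mem_iInter] at hy ⊢
    intro j hj
    have h1 := (uN_pos h).1 j hj
    have h2 := epsN_pos N
    have h3 : 0 < (θ : Fin N → ℝ) j := by linarith
    exact hy j h3.ne'
  have hchain : ∀ (θ : ↥(NerveSet U)) (s t : Finset (Fin N)), uN (θ : Fin N → ℝ) s ≠ 0 →
      uN (θ : Fin N → ℝ) t ≠ 0 → s.card ≤ t.card → interU U t ⊆ interU U s :=
    fun θ s t hs ht h => hanti _ _ (uN_chain hs ht h)
  have hone : ∀ θ : ↥(NerveSet U), ∃ s ∈ l, uN (θ : Fin N → ℝ) s = 1 := by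
    intro θ
    obtain ⟨s, hs, h1⟩ := exists_uN_one (fun j => (θ.2.1 j).1) θ.2.2.1
    exact ⟨s, (hl s).2 hs, h1⟩
  let y0 : M := Classical.arbitrary M
  let ζ : ↥(NerveSet U) → M := fun θ => runG G l (uN (θ : Fin N → ℝ)) y0
  have hζ : ∃ Kζ, LipschitzWith Kζ ζ := by
    obtain ⟨C, hC, h⟩ := runG_lip hG (fun θ : ↥(NerveSet U) => uN (θ : Fin N → ℝ))
      (fun θ s => uN_mem _ s) huL (fun _ => y0) False (fun s t => s.card ≤ t.card)
      (fun h => h.elim) (fun h => h.elim) hchain l hvalid hlp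
    exact ⟨⟨C, hC⟩, lipschitzWith_of_dist hC fun x y => h x y (Or.inr (hone x)) (Or.inr (hone y))⟩
  obtain ⟨Kζ, hKζ⟩ := hζ
  -- the value lies in the sets of near maximal weight
  have hζm : ∀ (θ : ↥(NerveSet U)) j, wN (θ : Fin N → ℝ) j ≠ 0 → ζ θ ∈ U j := by
    intro θ j hj
    -- choose the smallest s with nonzero weight
    obtain ⟨s1, hs1, h1⟩ := hone θ
    obtain ⟨s, hs, hmin⟩ := Finset.exists_min_image
      (l.toFinset.filter (fun s => uN (θ : Fin N → ℝ) s ≠ 0)) Finset.card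
      ⟨s1, by simp [hs1, h1]⟩
    simp only [Finset.mem_filter, List.mem_toFinset] at hs hmin
    have := runG_mem hG (uN (θ : Fin N → ℝ)) (fun s => uN_mem _ s) y0 False
      (fun s t => s.card ≤ t.card) (fun h => h.elim) (hchain θ) l (hvalid θ) hlp
      (Or.inr (hone θ)) s hs.2 (hvalid θ s hs.1 hs.2)
      (fun t ht ht0 => hchain θ s t hs.2 ht0 (hmin t ⟨ht, ht0⟩))
    simp only [interU, mem_iInter] at this
    exact this j (wN_mem_of_uN hj ((hl s).1 hs.1) hs.2)
  have hT : Lp (fun t : unitInterval => (t : ℝ)) :=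
    Lp.of_lip (K := 1) (LipschitzWith.subtype_val _)
  refine ⟨ζ, Kζ, hKζ, ?_, ?_, ?_⟩
  · -- ζ ∘ Θ ~ id
    have hu01 : ∀ (z : M × unitInterval) (s : Finset (Fin N)),
        (1 - (z.2 : ℝ)) * uN (Θ z.1 : Fin N → ℝ) s ∈ Icc (0:ℝ) 1 := fun z s =>
      mul_mem01 ⟨by linarith [z.2.2.2], by linarith [z.2.2.1]⟩ (uN_mem _ s)
    obtain ⟨C, hC, h⟩ := runG_lip hG
      (fun (z : M × unitInterval) s => (1 - (z.2 : ℝ)) * uN (Θ z.1 : Fin N → ℝ) s)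
      hu01 (fun s => by
        refine Lp.mul (A := 1) (B := 1) ?_ ?_ ?_ ?_
        · exact (Lp.const 1).sub (hT.comp LipschitzWith.prod_snd)
        · exact (huL s).comp (hKΘ.comp LipschitzWith.prod_fst)
        · exact fun z => abs_le_one_of_mem ⟨by linarith [z.2.2.2], by linarith [z.2.2.1]⟩
        · exact fun z => abs_le_one_of_mem (uN_mem _ s))
      (fun z => z.1) True (fun s t => s.card ≤ t.card)
      (fun _ z s h0 _ => by
        simp only [interU, mem_iInter]
        intro j hj
        apply hΘs
        have h1 := (uN_pos (right_ne_zero_of_mul h0)).1 j hj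
        have h2 := epsN_pos N
        have h3 : 0 < (Θ z.1 : Fin N → ℝ) j := by linarith
        exact h3.ne')
      (fun _ => ⟨1, LipschitzWith.prod_fst⟩)
      (fun z s t hs ht h => hchain (Θ z.1) s t (right_ne_zero_of_mul hs)
        (right_ne_zero_of_mul ht) h) l
      (fun z s hs h0 => hvalid (Θ z.1) s hs (right_ne_zero_of_mul h0)) hlp
    refine ⟨_, ⟨C, hC⟩, lipschitzWith_of_dist hC fun z z' => h z z' (Or.inl trivial)
      (Or.inl trivial), fun x => ?_, fun x => ?_⟩
    · simp only [Set.Icc.coe_zero, sub_zero, one_mul]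
      exact runG_agree hG _ _ _ l (hone (Θ x))
    · exact runG_zero hG _ _ l (fun s _ => by simp)
  · -- Θ ∘ ζ ~ id
    let W : ↥(NerveSet U) → ℝ := fun θ => ∑ j, wN (θ : Fin N → ℝ) j
    have hW : ∀ θ, 1 ≤ W θ := fun θ => sum_wN_ge θ.2.2.1
    let r : ↥(NerveSet U) → Fin N → ℝ := fun θ j => wN (θ : Fin N → ℝ) j * (W θ)⁻¹
    have hWinv : ∀ θ, (W θ)⁻¹ ∈ Icc (0:ℝ) 1 := fun θ =>
      ⟨inv_nonneg.2 (zero_le_one.trans (hW θ)), inv_le_one_of_one_le₀ (hW θ)⟩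
    have hr01 : ∀ θ j, r θ j ∈ Icc (0:ℝ) 1 := fun θ j => mul_mem01 (wN_mem _ j) (hWinv θ)
    have hrs : ∀ θ, ∑ j, r θ j = 1 := by
      intro θ
      have : W θ ≠ 0 := by linarith [hW θ]
      simp only [r]
      rw [← Finset.sum_mul]
      exact mul_inv_cancel₀ this
    have hrL : ∀ j, Lp (fun θ => r θ j) := by
      intro j
      refine Lp.mul (A := 1) (B := 1) (Lp.wN hcoord j)
        ((Lp.sum _ (fun i => Lp.wN hcoord i)).inv zero_lt_one hW) ?_ ?_
      · exact fun θ => abs_le_one_of_mem (wN_mem _ j)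
      · exact fun θ => abs_le_one_of_mem (hWinv θ)
    let a : unitInterval → ℝ := fun t => clampR (1 + (-2) * (t : ℝ))
    let b : unitInterval → ℝ := fun t => clampR (2 * (t : ℝ) - 1)
    have ha01 : ∀ t, a t ∈ Icc (0:ℝ) 1 := fun t => clampR_mem _
    have hb01 : ∀ t, b t ∈ Icc (0:ℝ) 1 := fun t => clampR_mem _
    have hab : ∀ t, a t = 0 ∨ b t = 0 := by
      intro t
      by_contra! h
      have h1 := clampR_pos h.1
      have h2 := clampR_pos h.2
      linarith
    have hc01 : ∀ t, 1 - a t - b t ∈ Icc (0:ℝ) 1 := by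
      intro t
      have h1 := ha01 t
      have h2 := hb01 t
      rcases hab t with h | h <;> rw [h] <;> constructor <;> linarith [h1.1, h1.2, h2.1, h2.2]
    have haL : Lp a := ((Lp.const 1).add (hT.const_mul (-2))).clamp
    have hbL : Lp b := ((hT.const_mul 2).sub (Lp.const 1)).clamp
    have hcL : Lp (fun t => 1 - a t - b t) := ((Lp.const 1).sub haL).sub hbL
    let h : ↥(NerveSet U) × unitInterval → Fin N → ℝ := fun z j =>
      a z.2 * (Θ (ζ z.1) : Fin N → ℝ) j + (1 - a z.2 - b z.2) * r z.1 j
        + b z.2 * (z.1 : Fin N → ℝ) j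
    have hsum : ∀ z, ∑ j, h z j = 1 := by
      intro z
      simp only [h]
      rw [Finset.sum_add_distrib, Finset.sum_add_distrib, ← Finset.mul_sum, ← Finset.mul_sum,
        ← Finset.mul_sum, hrs, z.1.2.2.1, (Θ (ζ z.1)).2.2.1]
      ring
    have hnn : ∀ z j, 0 ≤ h z j := fun z j =>
      add_nonneg (add_nonneg (mul_nonneg (ha01 _).1 ((Θ (ζ z.1)).2.1 j).1)
        (mul_nonneg (hc01 _).1 (hr01 _ j).1)) (mul_nonneg (hb01 _).1 (z.1.2.1 j).1)
    have hmem : ∀ z, h z ∈ NerveSet U := by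
      intro z
      refine ⟨fun j => ⟨hnn z j, ?_⟩, hsum z, ?_⟩
      · rw [← hsum z]
        exact Finset.single_le_sum (f := h z) (fun j _ => hnn z j) (Finset.mem_univ j)
      · rcases hab z.2 with h0 | h0
        · refine z.1.2.2.2.mono ?_
          intro y hy
          simp only [mem_iInter] at hy ⊢
          intro j hj
          refine hy j fun (hz : (z.1 : Fin N → ℝ) j = 0) => hj ?_
          have hw : wN (z.1 : Fin N → ℝ) j = 0 := by
            by_contra hw
            exact wN_supp z.1.2.2.1 hw hz
          simp [h, r, h0, hz, hw]
        · refine ⟨ζ z.1, ?_⟩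
          simp only [mem_iInter]
          intro j hj
          by_contra hn
          apply hj
          have hw : wN (z.1 : Fin N → ℝ) j = 0 := by
            by_contra hw
            exact hn (hζm z.1 j hw)
          have hz : (Θ (ζ z.1) : Fin N → ℝ) j = 0 := by
            by_contra hz
            exact hn (hΘs _ j hz)
          simp [h, r, h0, hz, hw]
    obtain ⟨KH, hKH⟩ := exists_lip_of_coord
      (fun z : ↥(NerveSet U) × unitInterval => (⟨h z, hmem z⟩ : ↥(NerveSet U))) (by
        intro j
        refine Lp.add (Lp.add ?_ ?_) ?_
        · exact Lp.mul (A := 1) (B := 1) (haL.comp LipschitzWith.prod_snd)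
            ((hΘL j).comp (hKζ.comp LipschitzWith.prod_fst))
            (fun z => abs_le_one_of_mem (ha01 _))
            (fun z => abs_le_one_of_mem ((Θ (ζ z.1)).2.1 j))
        · exact Lp.mul (A := 1) (B := 1) (hcL.comp LipschitzWith.prod_snd)
            ((hrL j).comp LipschitzWith.prod_fst)
            (fun z => abs_le_one_of_mem (hc01 _))
            (fun z => abs_le_one_of_mem (hr01 _ j))
        · exact Lp.mul (A := 1) (B := 1) (hbL.comp LipschitzWith.prod_snd)
            ((hcoord j).comp LipschitzWith.prod_fst)
            (fun z => abs_le_one_of_mem (hb01 _))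
            (fun z => abs_le_one_of_mem (z.1.2.1 j)))
    refine ⟨_, KH, hKH, fun θ => ?_, fun θ => ?_⟩
    · apply Subtype.ext
      funext j
      simp [h, a, b, clampR]
    · apply Subtype.ext
      funext j
      have e1 : a 1 = 0 := by simp only [a, clampR]; norm_num
      have e2 : b 1 = 1 := by simp only [b, clampR]; norm_num
      simp [h, e1, e2]
  · intro θ
    have hs := sum_wN_ge θ.2.2.1
    obtain ⟨j, -, hj⟩ : ∃ j ∈ Finset.univ, wN (θ : Fin N → ℝ) j ≠ 0 := by
      by_contra! hc
      rw [Finset.sum_eq_zero hc] at hs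
      linarith
    exact ⟨j, wN_supp θ.2.2.1 hj, hζm θ j hj⟩
end
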